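/- Assume in addition that c ≡ 0 and that for some p₀ ∈ (1,+∞) the function r₀ + (C²d³ν₀^{γ−1}/(4(p₀−1)))·ν^γ is bounded from above on I×ℝ^d. Then for every p ∈ [p₀,+∞) there exists ω_p ∈ ℝ such that for every s ∈ I, every f ∈ C¹_b(ℝ^d), every classical solution u bounded on strips with datum f and every classical solution v bounded on strips with datum |∇f|^p, one has |∇_x u(t,x)|^p ≤ e^{ω_p(t−s)}·v(t,x) for all t > s and x ∈ ℝ^d; moreover for p ∈ [p₀,2] one may take ω_p = p·sup_{I×ℝ^d}( r₀ + (C²d³ν₀^{γ−1}/(4(p−1)))·ν^γ ). -/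

import Mathlib

open Set Filter MeasureTheory

noncomputable section

abbrev Euc (d : ℕ) := EuclideanSpace ℝ (Fin d)

noncomputable def hess (d : ℕ) (g : Euc d → ℝ) (x : Euc d) (i j : Fin d) : ℝ :=
  fderiv ℝ (fun y => fderiv ℝ g y (EuclideanSpace.single j 1)) x (EuclideanSpace.single i 1)

noncomputable def minEig (d : ℕ) (A : Fin d → Fin d → ℝ) : ℝ :=
  sInf {r : ℝ | ∃ ξ : Euc d, ‖ξ‖ = 1 ∧ (∑ i, ∑ j, A i j * ξ i * ξ j) = r}

noncomputable def pdist (d : ℕ) (p q : ℝ × Euc d) : ℝ :=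
  Real.sqrt |p.1 - q.1| + ‖p.2 - q.2‖

def LocHolderParab (d : ℕ) (α : ℝ) (I : Set ℝ) (g : ℝ → Euc d → ℝ) : Prop :=
  ∀ K : Set (ℝ × Euc d), IsCompact K → K ⊆ I ×ˢ (univ : Set (Euc d)) →
    ∃ C > 0, ∀ p ∈ K, ∀ q ∈ K, |g p.1 p.2 - g q.1 q.2| ≤ C * pdist d p q ^ α

noncomputable def Aop (d : ℕ) (Q : ℝ → Euc d → Fin d → Fin d → ℝ)
    (b : ℝ → Euc d → Fin d → ℝ) (c : ℝ → Euc d → ℝ)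
    (t : ℝ) (g : Euc d → ℝ) (x : Euc d) : ℝ :=
  (∑ i, ∑ j, Q t x i j * hess d g x i j)
    + (∑ i, b t x i * fderiv ℝ g x (EuclideanSpace.single i 1))
    + c t x * g x

structure IsClassicalSolution (d : ℕ) (Q : ℝ → Euc d → Fin d → Fin d → ℝ)
    (b : ℝ → Euc d → Fin d → ℝ) (c : ℝ → Euc d → ℝ)
    (s : ℝ) (f : Euc d → ℝ) (u : ℝ → Euc d → ℝ) : Prop where
  cont : ContinuousOn (fun p : ℝ × Euc d => u p.1 p.2) (Ici s ×ˢ univ)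
  tdiff : ∀ t, s < t → ∀ x, DifferentiableAt ℝ (fun τ => u τ x) t
  tderiv_cont : ContinuousOn (fun p : ℝ × Euc d => deriv (fun τ => u τ p.2) p.1) (Ioi s ×ˢ univ)
  xdiff : ∀ t, s < t → ContDiff ℝ 2 (u t)
  grad_cont : ContinuousOn (fun p : ℝ × Euc d => fderiv ℝ (u p.1) p.2) (Ioi s ×ˢ univ)
  hess_cont : ContinuousOn (fun p : ℝ × Euc d => hess d (u p.1) p.2) (Ioi s ×ˢ univ)
  pde : ∀ t, s < t → ∀ x, deriv (fun τ => u τ x) t = Aop d Q b c t (u t) x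
  init : ∀ x, u s x = f x

def BoundedOnStrips (d : ℕ) (s : ℝ) (u : ℝ → Euc d → ℝ) : Prop :=
  ∀ T, s < T → ∃ M, ∀ t ∈ Icc s T, ∀ x, |u t x| ≤ M

def LocBddOn (I : Set ℝ) (g : ℝ → ℝ) : Prop :=
  ∀ a b : ℝ, Icc a b ⊆ I → ∃ M, ∀ t ∈ Icc a b, |g t| ≤ M

/-- `sup_{I×ℝ^d} ( r₀ + (C²d³ν₀^{γ−1}/(4(p−1)))·ν^γ )`. -/
noncomputable def SGradSup (d : ℕ) (I : Set ℝ) (Q : ℝ → Euc d → Fin d → Fin d → ℝ)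
    (r₀ : ℝ → Euc d → ℝ) (ν₀ C γ : ℝ) (p : ℝ) : ℝ :=
  sSup {y : ℝ | ∃ t ∈ I, ∃ x : Euc d,
    y = r₀ t x + (C ^ 2 * (d : ℝ) ^ 3 * ν₀ ^ (γ - 1) / (4 * (p - 1)))
          * minEig d (Q t x) ^ γ}

/-- The gradient estimate `|∇_x u(t,x)|^p ≤ e^{ω(t−s)} v(t,x)`, with `v` the solution with
datum `|∇f|^p`, quantified over all data and solutions. -/
def GradEstWith (d : ℕ) (I : Set ℝ) (Q : ℝ → Euc d → Fin d → Fin d → ℝ)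
    (b : ℝ → Euc d → Fin d → ℝ) (p ω : ℝ) : Prop :=
  ∀ s ∈ I, ∀ f : Euc d → ℝ, ContDiff ℝ 1 f →
    (∃ Mf, ∀ x, |f x| ≤ Mf) → (∃ Mf, ∀ x, ‖fderiv ℝ f x‖ ≤ Mf) →
    ∀ u v : ℝ → Euc d → ℝ,
      IsClassicalSolution d Q b (fun _ _ => 0) s f u → BoundedOnStrips d s u →
      IsClassicalSolution d Q b (fun _ _ => 0) s (fun x => ‖fderiv ℝ f x‖ ^ p) v →
      BoundedOnStrips d s v →
      ∀ t, s < t → ∀ x : Euc d,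
        ‖fderiv ℝ (u t) x‖ ^ p ≤ Real.exp (ω * (t - s)) * v t x

open Topology

def pd {d : ℕ} (g : Euc d → ℝ) (i : Fin d) (x : Euc d) : ℝ :=
  fderiv ℝ g x (EuclideanSpace.single i 1)

theorem hess_eq_pd {d : ℕ} (g : Euc d → ℝ) (x : Euc d) (i j : Fin d) :
    hess d g x i j = pd (pd g j) i x := rfl

theorem contDiff_pd {d : ℕ} {g : Euc d → ℝ} (hg : ContDiff ℝ 2 g) (i : Fin d) :
    ContDiff ℝ 1 (pd g i) := by
  unfold pd
  exact (hg.fderiv_right (m := 1) (by norm_num)).clm_apply contDiff_const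

theorem diff_pd {d : ℕ} {g : Euc d → ℝ} (hg : ContDiff ℝ 2 g) (i : Fin d) :
    Differentiable ℝ (pd g i) := (contDiff_pd hg i).differentiable (by norm_num)

theorem C2.diff {d : ℕ} {g : Euc d → ℝ} (hg : ContDiff ℝ 2 g) :
    Differentiable ℝ g := hg.differentiable (by norm_num)

theorem pd_const {d : ℕ} (c : ℝ) (i : Fin d) : pd (fun _ : Euc d => c) i = fun _ => 0 := by
  funext x; simp [pd]

theorem pd_add {d : ℕ} {f g : Euc d → ℝ} (hf : Differentiable ℝ f) (hg : Differentiable ℝ g)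
    (i : Fin d) : pd (fun x => f x + g x) i = fun x => pd f i x + pd g i x := by
  funext x; simp [pd, fderiv_fun_add (hf x) (hg x)]

theorem pd_mul {d : ℕ} {f g : Euc d → ℝ} (hf : Differentiable ℝ f) (hg : Differentiable ℝ g)
    (i : Fin d) : pd (fun x => f x * g x) i = fun x => f x * pd g i x + g x * pd f i x := by
  funext x; simp [pd, fderiv_fun_mul (hf x) (hg x)]

theorem pd_sum {d : ℕ} {f : Fin d → Euc d → ℝ} (hf : ∀ k, Differentiable ℝ (f k))
    (i : Fin d) : pd (fun x => ∑ k, f k x) i = fun x => ∑ k, pd (f k) i x := by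
  funext x; simp [pd, fderiv_fun_sum (fun k _ => hf k x)]

theorem hess_const {d : ℕ} (c : ℝ) (x : Euc d) (i j : Fin d) :
    hess d (fun _ => c) x i j = 0 := by
  rw [hess_eq_pd, pd_const, pd_const]

theorem hess_add {d : ℕ} {f g : Euc d → ℝ} (hf : ContDiff ℝ 2 f) (hg : ContDiff ℝ 2 g)
    (x : Euc d) (i j : Fin d) :
    hess d (fun x => f x + g x) x i j = hess d f x i j + hess d g x i j := by
  simp only [hess_eq_pd]
  rw [pd_add (C2.diff hf) (C2.diff hg), pd_add (diff_pd hf j) (diff_pd hg j)]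

theorem hess_sum {d : ℕ} {f : Fin d → Euc d → ℝ} (hf : ∀ k, ContDiff ℝ 2 (f k))
    (x : Euc d) (i j : Fin d) :
    hess d (fun x => ∑ k, f k x) x i j = ∑ k, hess d (f k) x i j := by
  simp only [hess_eq_pd]
  rw [pd_sum (fun k => C2.diff (hf k)), pd_sum (fun k => diff_pd (hf k) j)]

theorem hess_mul {d : ℕ} {f g : Euc d → ℝ} (hf : ContDiff ℝ 2 f) (hg : ContDiff ℝ 2 g)
    (x : Euc d) (i j : Fin d) :
    hess d (fun x => f x * g x) x i j = f x * hess d g x i j + g x * hess d f x i j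
      + pd f i x * pd g j x + pd g i x * pd f j x := by
  simp only [hess_eq_pd]
  have h1 := C2.diff hf
  have h2 := C2.diff hg
  have h3 := diff_pd hf j
  have h4 := diff_pd hg j
  rw [pd_mul h1 h2, pd_add (h1.fun_mul h4) (h2.fun_mul h3), pd_mul h1 h4, pd_mul h2 h3]
  ring

theorem hess_symm {d : ℕ} {g : Euc d → ℝ} (hg : ContDiff ℝ 2 g) (x : Euc d) (i j : Fin d) :
    hess d g x i j = hess d g x j i := by
  have hd : DifferentiableAt ℝ (fderiv ℝ g) x :=
    ((hg.fderiv_right (m := 1) (by norm_num)).differentiable (by norm_num)) x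
  have key : ∀ i j, hess d g x i j = fderiv ℝ (fderiv ℝ g) x (EuclideanSpace.single i 1)
      (EuclideanSpace.single j 1) := by
    intro i j
    unfold hess
    rw [fderiv_clm_apply hd (by fun_prop)]
    simp
  rw [key, key]
  have := (hg.contDiffAt (x := x)).isSymmSndFDerivAt (by simp)
  exact this _ _

theorem pd_rpow {d : ℕ} {g : Euc d → ℝ} (hg : Differentiable ℝ g) (hp : ∀ x, 0 < g x) (r : ℝ)
    (i : Fin d) : pd (fun x => g x ^ r) i = fun x => r * g x ^ (r - 1) * pd g i x := by
  funext x
  unfold pd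
  rw [((hg x).hasFDerivAt.rpow_const (Or.inl (hp x).ne')).fderiv]
  simp

theorem contDiff_rpow {d : ℕ} {g : Euc d → ℝ} (hg : ContDiff ℝ 2 g) (hp : ∀ x, 0 < g x) (r : ℝ) :
    ContDiff ℝ 2 (fun x => g x ^ r) := hg.rpow_const_of_ne (fun x => (hp x).ne')

theorem hess_rpow {d : ℕ} {g : Euc d → ℝ} (hg : ContDiff ℝ 2 g) (hp : ∀ x, 0 < g x) (r : ℝ)
    (x : Euc d) (i j : Fin d) :
    hess d (fun x => g x ^ r) x i j = r * g x ^ (r - 1) * hess d g x i j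
      + r * (r - 1) * g x ^ (r - 2) * pd g i x * pd g j x := by
  simp only [hess_eq_pd]
  have h1 := contDiff_rpow hg hp (r - 1)
  have h1' := C2.diff h1
  have h2 := diff_pd hg j
  rw [pd_rpow (C2.diff hg) hp]
  have e : (fun x => r * g x ^ (r - 1) * pd g j x) =
      fun x => (fun _ => r) x * ((fun x => g x ^ (r - 1) * pd g j x) x) := by
    funext x; ring
  rw [e, pd_mul (by fun_prop) (h1'.fun_mul h2), pd_mul h1' h2, pd_const, pd_rpow (C2.diff hg) hp]
  have : r - 1 - 1 = r - 2 := by ring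
  rw [this]
  ring

/-- functions with continuous time derivative and two space derivatives -/
structure C12 {d : ℕ} (s : ℝ) (w : ℝ → Euc d → ℝ) : Prop where
  cont : ContinuousOn (fun p : ℝ × Euc d => w p.1 p.2) (Ioi s ×ˢ univ)
  tdiff : ∀ t, s < t → ∀ x, DifferentiableAt ℝ (fun τ => w τ x) t
  tc : ContinuousOn (fun p : ℝ × Euc d => deriv (fun τ => w τ p.2) p.1) (Ioi s ×ˢ univ)
  xdiff : ∀ t, s < t → ContDiff ℝ 2 (w t)
  gc : ∀ i, ContinuousOn (fun p : ℝ × Euc d => pd (w p.1) i p.2) (Ioi s ×ˢ univ)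
  hc : ∀ i j, ContinuousOn (fun p : ℝ × Euc d => hess d (w p.1) p.2 i j) (Ioi s ×ˢ univ)

theorem C12.ofSol {d : ℕ} {Q : ℝ → Euc d → Fin d → Fin d → ℝ} {b c s f u}
    (h : IsClassicalSolution d Q b c s f u) : C12 s u where
  cont := h.cont.mono (by gcongr; exact Ioi_subset_Ici_self)
  tdiff := h.tdiff
  tc := h.tderiv_cont
  xdiff := h.xdiff
  gc := fun i => h.grad_cont.clm_apply continuousOn_const
  hc := fun i j => by
    have := h.hess_cont
    rw [continuousOn_pi] at this
    have := this i
    rw [continuousOn_pi] at this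
    exact this j

theorem C12.const {d : ℕ} (s c : ℝ) : C12 (d := d) s (fun _ _ => c) where
  cont := continuousOn_const
  tdiff := fun t _ x => by fun_prop
  tc := by simp; exact continuousOn_const
  xdiff := fun t _ => contDiff_const
  gc := fun i => by simp only [pd_const]; exact continuousOn_const
  hc := fun i j => by simp only [hess_const]; exact continuousOn_const

theorem C12.ofSpace {d : ℕ} (s : ℝ) {g : Euc d → ℝ} (hg : ContDiff ℝ 2 g) : C12 s (fun _ => g) where
  cont := (hg.continuous.comp continuous_snd).continuousOn
  tdiff := fun t _ x => by fun_prop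
  tc := by simp; exact continuousOn_const
  xdiff := fun t _ => hg
  gc := fun i => ((contDiff_pd hg i).continuous.comp continuous_snd).continuousOn
  hc := fun i j => by
    have : Continuous (pd (pd g j) i) := by
      unfold pd
      exact ((contDiff_pd hg j).continuous_fderiv (by norm_num)).clm_apply continuous_const
    exact (this.comp continuous_snd).continuousOn

theorem C12.ofTime {d : ℕ} (s : ℝ) {g : ℝ → ℝ} (hg : ContDiff ℝ 1 g) :
    C12 (d := d) s (fun t _ => g t) where
  cont := (hg.continuous.comp continuous_fst).continuousOn
  tdiff := fun t _ x => (hg.differentiable (by norm_num)) t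
  tc := ((hg.continuous_deriv (by norm_num)).comp continuous_fst).continuousOn
  xdiff := fun t _ => contDiff_const
  gc := fun i => by simp only [pd_const]; exact continuousOn_const
  hc := fun i j => by simp only [hess_const]; exact continuousOn_const

theorem C12.add {d : ℕ} {s : ℝ} {f g : ℝ → Euc d → ℝ} (hf : C12 s f) (hg : C12 s g) :
    C12 s (fun t x => f t x + g t x) where
  cont := hf.cont.add hg.cont
  tdiff := fun t ht x => (hf.tdiff t ht x).fun_add (hg.tdiff t ht x)
  tc := (hf.tc.add hg.tc).congr fun p hp => deriv_fun_add (hf.tdiff _ hp.1 _) (hg.tdiff _ hp.1 _)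
  xdiff := fun t ht => (hf.xdiff t ht).add (hg.xdiff t ht)
  gc := fun i => ((hf.gc i).add (hg.gc i)).congr fun p hp => by
    simp only [pd_add (C2.diff (hf.xdiff _ hp.1)) (C2.diff (hg.xdiff _ hp.1))]; rfl
  hc := fun i j => ((hf.hc i j).add (hg.hc i j)).congr fun p hp => by
    simp only [hess_add (hf.xdiff _ hp.1) (hg.xdiff _ hp.1)]; rfl

theorem C12.mul {d : ℕ} {s : ℝ} {f g : ℝ → Euc d → ℝ} (hf : C12 s f) (hg : C12 s g) :
    C12 s (fun t x => f t x * g t x) where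
  cont := hf.cont.mul hg.cont
  tdiff := fun t ht x => (hf.tdiff t ht x).fun_mul (hg.tdiff t ht x)
  tc := ((hf.tc.mul hg.cont).add (hf.cont.mul hg.tc)).congr fun p hp =>
    deriv_fun_mul (hf.tdiff _ hp.1 _) (hg.tdiff _ hp.1 _)
  xdiff := fun t ht => (hf.xdiff t ht).mul (hg.xdiff t ht)
  gc := fun i => ((hf.cont.mul (hg.gc i)).add (hg.cont.mul (hf.gc i))).congr fun p hp => by
    simp only [pd_mul (C2.diff (hf.xdiff _ hp.1)) (C2.diff (hg.xdiff _ hp.1))]; rfl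
  hc := fun i j => ((((hf.cont.mul (hg.hc i j)).add (hg.cont.mul (hf.hc i j))).add
      ((hf.gc i).mul (hg.gc j))).add ((hg.gc i).mul (hf.gc j))).congr fun p hp => by
    simp only [hess_mul (hf.xdiff _ hp.1) (hg.xdiff _ hp.1)]; rfl

theorem C12.rpow {d : ℕ} {s : ℝ} {f : ℝ → Euc d → ℝ} (hf : C12 s f)
    (hp : ∀ t, s < t → ∀ x, 0 < f t x) (r : ℝ) : C12 s (fun t x => f t x ^ r) := by
  have hr : ∀ r : ℝ, ContinuousOn (fun p : ℝ × Euc d => f p.1 p.2 ^ r) (Ioi s ×ˢ univ) :=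
    fun r => hf.cont.rpow_const fun p h => Or.inl (hp _ h.1 _).ne'
  refine ⟨hr r, fun t ht x => (hf.tdiff t ht x).rpow_const (Or.inl (hp t ht x).ne'), ?_,
    fun t ht => contDiff_rpow (hf.xdiff t ht) (hp t ht) r, ?_, ?_⟩
  · refine ((hf.tc.mul (continuousOn_const (c := r))).mul (hr (r - 1))).congr fun p h => ?_
    exact deriv_rpow_const (hf.tdiff _ h.1 _) (Or.inl (hp _ h.1 _).ne')
  · intro i
    refine (((continuousOn_const (c := r)).mul (hr (r - 1))).mul (hf.gc i)).congr fun p h => ?_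
    simp only [pd_rpow (C2.diff (hf.xdiff _ h.1)) (hp _ h.1)]
    rfl
  · intro i j
    refine ((((continuousOn_const (c := r)).mul (hr (r - 1))).mul (hf.hc i j)).add
      ((((continuousOn_const (c := r * (r - 1))).mul (hr (r - 2))).mul (hf.gc i)).mul (hf.gc j))).congr fun p h => ?_
    simp only [hess_rpow (hf.xdiff _ h.1) (hp _ h.1)]
    rfl

theorem second_deriv_test {f f' : ℝ → ℝ} {a b c : ℝ} (hf : ∀ τ, HasDerivAt f (f' τ) τ)
    (hc : HasDerivAt f' c 0) (hm : ∀ᶠ τ in 𝓝 (0:ℝ), f τ ≤ f 0 + a * τ + b / 2 * τ ^ 2) :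
    f' 0 = a ∧ c ≤ b := by
  set g : ℝ → ℝ := fun τ => f τ - (a * τ + b / 2 * τ ^ 2) with hg
  have hgd : ∀ τ, HasDerivAt g (f' τ - (a + b * τ)) τ := by
    intro τ
    have h1 : HasDerivAt (fun τ : ℝ => a * τ + b / 2 * τ ^ 2) (a + b * τ) τ := by
      have := ((hasDerivAt_id τ).const_mul a).add (((hasDerivAt_id τ).pow 2).const_mul (b / 2))
      refine this.congr_deriv ?_
      simp; ring
    exact (hf τ).sub h1
  have hmax : IsLocalMax g 0 := by
    filter_upwards [hm] with τ h
    simp only [hg]; nlinarith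
  have h0 := hmax.hasDerivAt_eq_zero (hgd 0)
  refine ⟨by linarith, ?_⟩
  by_contra hcb
  push Not at hcb
  have hd' : deriv g = fun τ => f' τ - (a + b * τ) := funext fun τ => (hgd τ).deriv
  have hdd : HasDerivAt (deriv g) (c - b) 0 := by
    rw [hd']
    have h1 : HasDerivAt (fun τ : ℝ => a + b * τ) b 0 := by
      simpa using ((hasDerivAt_id (0:ℝ)).const_mul b).const_add a
    exact hc.sub h1
  have hmin := isLocalMin_of_deriv_deriv_pos (f := g) (x₀ := 0) (by rw [hdd.deriv]; linarith)
    (by rw [(hgd 0).deriv]; exact h0) (hgd 0).continuousAt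
  have hconst : g =ᶠ[𝓝 0] fun _ => g 0 := by
    filter_upwards [hmax, hmin] with τ h1 h2 using le_antisymm h1 h2
  have h2 : deriv g =ᶠ[𝓝 0] fun _ => 0 := by
    have := hconst.deriv
    simpa using this
  have := h2.deriv_eq
  rw [hdd.deriv] at this
  simp at this
  linarith

theorem fderiv_eq_sum {d : ℕ} (L : Euc d →L[ℝ] ℝ) (ξ : Euc d) :
    L ξ = ∑ i, ξ i * L (EuclideanSpace.single i 1) := by
  conv_lhs => rw [← (EuclideanSpace.basisFun (Fin d) ℝ).sum_repr ξ]
  simp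

/-- one-dimensional restriction -/
theorem line_deriv {d : ℕ} {g : Euc d → ℝ} (hg : Differentiable ℝ g) (x ξ : Euc d) (τ : ℝ) :
    HasDerivAt (fun τ : ℝ => g (x + τ • ξ)) (∑ i, ξ i * pd g i (x + τ • ξ)) τ := by
  have h1 : HasDerivAt (fun τ : ℝ => x + τ • ξ) ξ τ := by
    simpa using ((hasDerivAt_id τ).smul_const ξ).const_add x
  have := (hg (x + τ • ξ)).hasFDerivAt.comp_hasDerivAt τ h1
  rw [fderiv_eq_sum] at this
  exact this

theorem line_deriv2 {d : ℕ} {g : Euc d → ℝ} (hg : ContDiff ℝ 2 g) (x ξ : Euc d) (τ : ℝ) :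
    HasDerivAt (fun τ : ℝ => ∑ i, ξ i * pd g i (x + τ • ξ))
      (∑ i, ∑ j, ξ i * ξ j * hess d g (x + τ • ξ) i j) τ := by
  have : ∀ j ∈ Finset.univ, HasDerivAt (fun τ : ℝ => ξ j * pd g j (x + τ • ξ))
      (ξ j * ∑ i, ξ i * pd (pd g j) i (x + τ • ξ)) τ := fun j _ =>
    (line_deriv (diff_pd hg j) x ξ τ).const_mul _
  have := HasDerivAt.fun_sum this
  refine this.congr_deriv ?_
  rw [Finset.sum_comm (f := fun i j => ξ i * ξ j * hess d g (x + τ • ξ) i j)]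
  refine Finset.sum_congr rfl fun j _ => ?_
  rw [Finset.mul_sum]
  refine Finset.sum_congr rfl fun i _ => ?_
  rw [hess_eq_pd]; ring

theorem psd_decomp {ι : Type} [Fintype ι] (A : ι → ι → ℝ) (hs : ∀ i j, A i j = A j i)
    (hp : ∀ ξ : ι → ℝ, 0 ≤ ∑ i, ∑ j, A i j * ξ i * ξ j) :
    ∃ (m : ℕ) (v : Fin m → ι → ℝ), ∀ i j, A i j = ∑ k, v k i * v k j := by
  have : (Matrix.of A).PosSemidef := by
    refine Matrix.PosSemidef.of_dotProduct_mulVec_nonneg ?_ ?_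
    · ext i j; simp [hs i j]
    · intro ξ
      have := hp ξ
      refine this.trans_eq ?_
      simp only [dotProduct, Matrix.mulVec, Finset.mul_sum]
      refine Finset.sum_congr rfl fun i _ => Finset.sum_congr rfl fun j _ => ?_
      simp only [star_trivial, Matrix.of_apply]; ring
  obtain ⟨m, v, hv⟩ := Matrix.posSemidef_iff_eq_sum_vecMulVec.1 this
  refine ⟨m, v, fun i j => ?_⟩
  have := congrFun (congrFun hv i) j
  simpa [Matrix.sum_apply, Matrix.vecMulVec_apply] using this

theorem max_test {d : ℕ} {g : Euc d → ℝ} (hg : ContDiff ℝ 2 g) {x : Euc d} (hm : IsLocalMax g x) :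
    (∀ i, pd g i x = 0) ∧ ∀ A : Fin d → Fin d → ℝ, (∀ i j, A i j = A j i) →
      (∀ ξ : Fin d → ℝ, 0 ≤ ∑ i, ∑ j, A i j * ξ i * ξ j) → ∑ i, ∑ j, A i j * hess d g x i j ≤ 0 := by
  have key : ∀ ξ : Euc d, ∑ i, ∑ j, ξ i * ξ j * hess d g x i j ≤ 0 := by
    intro ξ
    have h := second_deriv_test (a := 0) (b := 0) (line_deriv (C2.diff hg) x ξ)
      (line_deriv2 hg x ξ 0) (by
        have hc : Tendsto (fun τ : ℝ => x + τ • ξ) (𝓝 0) (𝓝 x) := by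
          have : Continuous (fun τ : ℝ => x + τ • ξ) := by fun_prop
          simpa using this.tendsto 0
        filter_upwards [hc hm] with τ h
        simpa using h)
    simpa using h.2
  refine ⟨fun i => by simp [pd, hm.fderiv_eq_zero], fun A hs hp => ?_⟩
  obtain ⟨m, v, hv⟩ := psd_decomp A hs hp
  have : ∑ i, ∑ j, A i j * hess d g x i j
      = ∑ k, ∑ i, ∑ j, v k i * v k j * hess d g x i j := by
    simp only [hv, Finset.sum_mul]
    rw [Finset.sum_comm' (t' := Finset.univ) (s' := fun _ => Finset.univ) (by simp)]
    rw [Finset.sum_comm]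
    conv_rhs => rw [Finset.sum_comm]
    refine Finset.sum_congr rfl fun i _ => ?_
    conv_rhs => rw [Finset.sum_comm]
  rw [this]
  exact Finset.sum_nonpos fun k _ => key (WithLp.toLp 2 (v k))

/-- continuous convergence of difference quotients -/
theorem slope_tendsto {d : ℕ} {s : ℝ} {F : ℝ → Euc d → ℝ} (k : Fin d)
    (hd : ∀ t, s < t → Differentiable ℝ (F t))
    (hc : ContinuousOn (fun p : ℝ × Euc d => pd (F p.1) k p.2) (Ioi s ×ˢ univ))
    {z : ℕ → ℝ × Euc d} {z' : ℝ × Euc d} {h : ℕ → ℝ} (hz : Tendsto z atTop (𝓝 z'))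
    (hzs : ∀ n, s < (z n).1) (hz' : s < z'.1) (hh : Tendsto h atTop (𝓝 0)) (hpos : ∀ n, 0 < h n) :
    Tendsto (fun n => (F (z n).1 ((z n).2 + h n • EuclideanSpace.single k 1) - F (z n).1 (z n).2) / h n)
      atTop (𝓝 (pd (F z'.1) k z'.2)) := by
  have : ∀ n, ∃ θ ∈ Ioo (0:ℝ) (h n), pd (F (z n).1) k ((z n).2 + θ • EuclideanSpace.single k 1) =
      (F (z n).1 ((z n).2 + h n • EuclideanSpace.single k 1) - F (z n).1 (z n).2) / h n := by
    intro n
    have hl := line_deriv (hd _ (hzs n)) (z n).2 (EuclideanSpace.single k 1)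
    obtain ⟨c, hc, h2⟩ := exists_hasDerivAt_eq_slope _ _ (hpos n)
      (fun τ _ => (hl τ).continuousAt.continuousWithinAt) (fun τ _ => hl τ)
    refine ⟨c, hc, ?_⟩
    simpa [Pi.single_apply] using h2
  choose θ hθ hθ2 using this
  simp only [← hθ2]
  have hθ0 : Tendsto θ atTop (𝓝 0) :=
    squeeze_zero (fun n => (hθ n).1.le) (fun n => (hθ n).2.le) hh
  have hw : Tendsto (fun n => ((z n).1, (z n).2 + θ n • (EuclideanSpace.single k 1 : Euc d))) atTop (𝓝 z') := by
    have h1 := (continuous_fst.tendsto z').comp hz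
    have h2 := (continuous_snd.tendsto z').comp hz
    have h3 := h2.add (hθ0.smul_const (EuclideanSpace.single k 1 : Euc d))
    simp only [zero_smul, add_zero] at h3
    exact h1.prodMk_nhds h3
  have hn : Ioi s ×ˢ (univ : Set (Euc d)) ∈ 𝓝 z' :=
    (isOpen_Ioi.prod isOpen_univ).mem_nhds ⟨hz', trivial⟩
  exact ((hc.continuousAt hn).tendsto).comp hw

abbrev A0 {d : ℕ} (Q : ℝ → Euc d → Fin d → Fin d → ℝ) (b : ℝ → Euc d → Fin d → ℝ)
    (t : ℝ) (g : Euc d → ℝ) (x : Euc d) : ℝ := Aop d Q b (fun _ _ => 0) t g x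

theorem A0_eq {d : ℕ} (Q : ℝ → Euc d → Fin d → Fin d → ℝ) (b : ℝ → Euc d → Fin d → ℝ)
    (t : ℝ) (g : Euc d → ℝ) (x : Euc d) :
    A0 Q b t g x = (∑ i, ∑ j, Q t x i j * hess d g x i j) + ∑ i, b t x i * pd g i x := by
  simp [A0, Aop, pd]

theorem A0_const {d : ℕ} (Q : ℝ → Euc d → Fin d → Fin d → ℝ) (b : ℝ → Euc d → Fin d → ℝ)
    (t : ℝ) (c : ℝ) (x : Euc d) : A0 Q b t (fun _ => c) x = 0 := by
  rw [A0_eq]; simp [hess_const, pd_const]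

theorem A0_add {d : ℕ} (Q : ℝ → Euc d → Fin d → Fin d → ℝ) (b : ℝ → Euc d → Fin d → ℝ)
    (t : ℝ) {f g : Euc d → ℝ} (hf : ContDiff ℝ 2 f) (hg : ContDiff ℝ 2 g) (x : Euc d) :
    A0 Q b t (fun x => f x + g x) x = A0 Q b t f x + A0 Q b t g x := by
  simp only [A0_eq, hess_add hf hg, pd_add (C2.diff hf) (C2.diff hg), mul_add,
    Finset.sum_add_distrib]
  ring

theorem A0_sum {d : ℕ} (Q : ℝ → Euc d → Fin d → Fin d → ℝ) (b : ℝ → Euc d → Fin d → ℝ)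
    (t : ℝ) {f : Fin d → Euc d → ℝ} (hf : ∀ k, ContDiff ℝ 2 (f k)) (x : Euc d) :
    A0 Q b t (fun x => ∑ k, f k x) x = ∑ k, A0 Q b t (f k) x := by
  simp only [A0_eq, hess_sum hf, pd_sum (fun k => C2.diff (hf k)), Finset.mul_sum,
    Finset.sum_add_distrib]
  congr 1
  · rw [Finset.sum_comm' (t' := Finset.univ) (s' := fun _ => Finset.univ) (by simp)]
    conv_rhs => rw [Finset.sum_comm' (t' := Finset.univ) (s' := fun _ => Finset.univ) (by simp)]
    rw [Finset.sum_comm]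
    refine Finset.sum_congr rfl fun i _ => ?_
    rw [Finset.sum_comm]
  · rw [Finset.sum_comm]

def qf {d : ℕ} (A : Fin d → Fin d → ℝ) (ξ η : Fin d → ℝ) : ℝ := ∑ i, ∑ j, A i j * ξ i * η j

theorem qf_symm {d : ℕ} {A : Fin d → Fin d → ℝ} (hs : ∀ i j, A i j = A j i) (ξ η : Fin d → ℝ) :
    qf A ξ η = qf A η ξ := by
  unfold qf
  rw [Finset.sum_comm]
  refine Finset.sum_congr rfl fun i _ => Finset.sum_congr rfl fun j _ => ?_
  rw [hs]; ring

theorem qf_smul_right {d : ℕ} {A : Fin d → Fin d → ℝ} (c : ℝ) (ξ η : Fin d → ℝ) :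
    qf A ξ (fun i => c * η i) = c * qf A ξ η := by
  unfold qf
  simp only [Finset.mul_sum]
  refine Finset.sum_congr rfl fun i _ => Finset.sum_congr rfl fun j _ => ?_
  ring

theorem qf_smul_left {d : ℕ} {A : Fin d → Fin d → ℝ} (c : ℝ) (ξ η : Fin d → ℝ) :
    qf A (fun i => c * ξ i) η = c * qf A ξ η := by
  unfold qf
  simp only [Finset.mul_sum]
  refine Finset.sum_congr rfl fun i _ => Finset.sum_congr rfl fun j _ => ?_
  ring

theorem qf_sum_right {d : ℕ} {A : Fin d → Fin d → ℝ} (ξ : Fin d → ℝ) (η : Fin d → Fin d → ℝ) :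
    qf A ξ (fun i => ∑ k, η k i) = ∑ k, qf A ξ (η k) := by
  unfold qf
  simp only [Finset.mul_sum]
  rw [Finset.sum_comm]
  rw [Finset.sum_comm' (t' := Finset.univ) (s' := fun _ => Finset.univ) (by simp)]
  conv_rhs => rw [Finset.sum_comm' (t' := Finset.univ) (s' := fun _ => Finset.univ) (by simp)]
  refine Finset.sum_congr rfl fun i _ => ?_
  rw [Finset.sum_comm]

theorem A0_mul {d : ℕ} {Q : ℝ → Euc d → Fin d → Fin d → ℝ} (b : ℝ → Euc d → Fin d → ℝ)
    {t : ℝ} {f g : Euc d → ℝ} (hf : ContDiff ℝ 2 f) (hg : ContDiff ℝ 2 g) (x : Euc d)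
    (hs : ∀ i j, Q t x i j = Q t x j i) :
    A0 Q b t (fun x => f x * g x) x = f x * A0 Q b t g x + g x * A0 Q b t f x
      + 2 * qf (Q t x) (fun i => pd f i x) (fun i => pd g i x) := by
  have e : 2 * qf (Q t x) (fun i => pd f i x) (fun i => pd g i x) =
      qf (Q t x) (fun i => pd f i x) (fun i => pd g i x)
      + qf (Q t x) (fun i => pd g i x) (fun i => pd f i x) := by
    rw [qf_symm hs (fun i => pd g i x)]; ring
  rw [e]
  simp only [A0_eq, hess_mul hf hg, pd_mul (C2.diff hf) (C2.diff hg), mul_add, qf,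
    Finset.sum_add_distrib, Finset.mul_sum]
  have e1 : ∀ (a : ℝ) (g : Euc d → ℝ), (∑ i, ∑ j, Q t x i j * (a * hess d g x i j)) =
    ∑ i, ∑ j, a * (Q t x i j * hess d g x i j) := fun a g =>
    Finset.sum_congr rfl fun i _ => Finset.sum_congr rfl fun j _ => by ring
  have e2 : ∀ (a : ℝ) (g : Euc d → ℝ), (∑ i, b t x i * (a * pd g i x)) =
    ∑ i, a * (b t x i * pd g i x) := fun a g =>
    Finset.sum_congr rfl fun i _ => by ring
  simp only [e1, e2, mul_assoc]
  ring

theorem bern_op {d : ℕ} {Q : ℝ → Euc d → Fin d → Fin d → ℝ} (b : ℝ → Euc d → Fin d → ℝ)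
    {t : ℝ} {η Y : Euc d → ℝ} {G : Fin d → Euc d → ℝ} (hη : ContDiff ℝ 2 η) (hY : ContDiff ℝ 2 Y)
    (hG : ∀ k, ContDiff ℝ 2 (G k)) (x : Euc d) (hs : ∀ i j, Q t x i j = Q t x j i) :
    A0 Q b t (fun x => η x * (∑ k, G k x * G k x) + Y x) x =
      A0 Q b t η x * (∑ k, G k x * G k x)
      + η x * ∑ k, (2 * G k x * A0 Q b t (G k) x
          + 2 * qf (Q t x) (fun i => pd (G k) i x) (fun i => pd (G k) i x))
      + 4 * ∑ k, G k x * qf (Q t x) (fun i => pd η i x) (fun i => pd (G k) i x)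
      + A0 Q b t Y x := by
  have h1 : ∀ k, ContDiff ℝ 2 (fun x => G k x * G k x) := fun k => (hG k).mul (hG k)
  have h2 : ContDiff ℝ 2 (fun x => ∑ k, G k x * G k x) := ContDiff.sum fun k _ => h1 k
  rw [A0_add Q b t (hη.mul h2) hY, A0_mul b hη h2 x hs, A0_sum Q b t h1]
  have e1 : ∀ k, A0 Q b t (fun x => G k x * G k x) x = 2 * G k x * A0 Q b t (G k) x
          + 2 * qf (Q t x) (fun i => pd (G k) i x) (fun i => pd (G k) i x) := fun k => by
    rw [A0_mul b (hG k) (hG k) x hs]; ring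
  have e2 : ∀ i, pd (fun x => ∑ k, G k x * G k x) i x = ∑ k, (2 * G k x) * pd (G k) i x := by
    intro i
    rw [pd_sum (fun k => C2.diff (h1 k))]
    refine Finset.sum_congr rfl fun k _ => ?_
    rw [pd_mul (C2.diff (hG k)) (C2.diff (hG k))]; ring
  simp only [e1, e2]
  rw [qf_sum_right]
  simp only [qf_smul_right]
  have e3 : 2 * (∑ k, (2 * G k x) * qf (Q t x) (fun i => pd η i x) (fun i => pd (G k) i x)) =
    4 * ∑ k, (G k x * qf (Q t x) (fun i => pd η i x) (fun i => pd (G k) i x)) := by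
    rw [Finset.mul_sum, Finset.mul_sum]
    refine Finset.sum_congr rfl fun k _ => by ring
  rw [e3]
  ring

theorem deriv_nonneg_of_left {f : ℝ → ℝ} {t0 t : ℝ} (h : t0 < t) (hd : DifferentiableAt ℝ f t)
    (hm : ∀ τ ∈ Ioo t0 t, f τ ≤ f t) : 0 ≤ deriv f t := by
  have h1 : Tendsto (slope f t) (𝓝[<] t) (𝓝 (deriv f t)) :=
    (hasDerivAt_iff_tendsto_slope.1 hd.hasDerivAt).mono_left
      (nhdsWithin_mono _ fun x hx => ne_of_lt hx)
  refine ge_of_tendsto h1 ?_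
  filter_upwards [Ioo_mem_nhdsLT h] with τ hτ
  rw [slope_def_field]
  exact div_nonneg_of_nonpos (by linarith [hm τ hτ]) (by linarith [hτ.2])

theorem pd_shift {d : ℕ} (g : Euc d → ℝ) (a : Euc d) (i : Fin d) :
    pd (fun x => g (x + a)) i = fun x => pd g i (x + a) := by
  funext x; simp [pd, fderiv_comp_add_right]

theorem hess_shift {d : ℕ} (g : Euc d → ℝ) (a x : Euc d) (i j : Fin d) :
    hess d (fun x => g (x + a)) x i j = hess d g (x + a) i j := by
  rw [hess_eq_pd, pd_shift, pd_shift, hess_eq_pd]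

theorem C12.shift {d : ℕ} {s : ℝ} {w : ℝ → Euc d → ℝ} (hw : C12 s w) (a : Euc d) :
    C12 s (fun t x => w t (x + a)) := by
  have hs : Continuous (fun p : ℝ × Euc d => (p.1, p.2 + a)) := by fun_prop
  have hm : MapsTo (fun p : ℝ × Euc d => (p.1, p.2 + a)) (Ioi s ×ˢ univ) (Ioi s ×ˢ univ) :=
    fun p hp => ⟨hp.1, trivial⟩
  refine ⟨hw.cont.comp hs.continuousOn hm, fun t ht x => hw.tdiff t ht (x + a),
    hw.tc.comp hs.continuousOn hm, fun t ht => ?_, fun i => ?_, fun i j => ?_⟩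
  · exact (hw.xdiff t ht).comp (contDiff_id.add contDiff_const)
  · simp only [pd_shift]; exact (hw.gc i).comp hs.continuousOn hm
  · simp only [hess_shift]; exact (hw.hc i j).comp hs.continuousOn hm

/-- difference quotient -/
def dq {d : ℕ} (u : ℝ → Euc d → ℝ) (h : ℝ) (k : Fin d) (t : ℝ) (x : Euc d) : ℝ :=
  h⁻¹ * (u t (x + h • EuclideanSpace.single k 1) + (-1) * u t x)

theorem C12.dq {d : ℕ} {s : ℝ} {w : ℝ → Euc d → ℝ} (hw : C12 s w) (h : ℝ) (k : Fin d) :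
    C12 s (dq w h k) :=
  (C12.const s h⁻¹).mul ((hw.shift _).add ((C12.const s (-1)).mul hw))

structure Coef {d : ℕ} (s : ℝ) (Q : ℝ → Euc d → Fin d → Fin d → ℝ) (b : ℝ → Euc d → Fin d → ℝ) :
    Prop where
  qs : ∀ t, s < t → ∀ x i j, Q t x i j = Q t x j i
  qp : ∀ t, s < t → ∀ x (ξ : Fin d → ℝ), 0 ≤ ∑ i, ∑ j, Q t x i j * ξ i * ξ j
  qc : ∀ i j, ContinuousOn (fun p : ℝ × Euc d => Q p.1 p.2 i j) (Ioi s ×ˢ univ)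
  qd : ∀ i j, ∀ t, s < t → Differentiable ℝ (fun y => Q t y i j)
  qg : ∀ i j k, ContinuousOn (fun p : ℝ × Euc d => pd (fun y => Q p.1 y i j) k p.2) (Ioi s ×ˢ univ)
  bc : ∀ j, ContinuousOn (fun p : ℝ × Euc d => b p.1 p.2 j) (Ioi s ×ˢ univ)
  bd : ∀ j, ∀ t, s < t → Differentiable ℝ (fun y => b t y j)
  bg : ∀ j k, ContinuousOn (fun p : ℝ × Euc d => pd (fun y => b p.1 y j) k p.2) (Ioi s ×ˢ univ)

/-- source of the equation of the difference quotient -/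
def dqS {d : ℕ} (Q : ℝ → Euc d → Fin d → Fin d → ℝ) (b : ℝ → Euc d → Fin d → ℝ)
    (u : ℝ → Euc d → ℝ) (h : ℝ) (k : Fin d) (t : ℝ) (x : Euc d) : ℝ :=
  (∑ i, ∑ j, (Q t (x + h • EuclideanSpace.single k 1) i j - Q t x i j) / h *
      hess d (u t) (x + h • EuclideanSpace.single k 1) i j)
    + ∑ j, (b t (x + h • EuclideanSpace.single k 1) j - b t x j) / h *
      pd (u t) j (x + h • EuclideanSpace.single k 1)

theorem dq_eq {d : ℕ} {Q : ℝ → Euc d → Fin d → Fin d → ℝ} {b : ℝ → Euc d → Fin d → ℝ}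
    {s : ℝ} {f : Euc d → ℝ} {u : ℝ → Euc d → ℝ}
    (hu : IsClassicalSolution d Q b (fun _ _ => 0) s f u) {h : ℝ} (k : Fin d)
    {t : ℝ} (ht : s < t) (x : Euc d) :
    deriv (fun τ => dq u h k τ x) t = A0 Q b t (dq u h k t) x + dqS Q b u h k t x := by
  have C := C12.ofSol hu
  set a : Euc d := h • EuclideanSpace.single k 1 with ha
  have e1 : deriv (fun τ => dq u h k τ x) t = h⁻¹ * (A0 Q b t (u t) (x + a) - A0 Q b t (u t) x) := by
    unfold dq
    rw [deriv_const_mul_field, deriv_fun_add (C.tdiff t ht _) ((C.tdiff t ht _).const_mul _),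
      deriv_const_mul_field, hu.pde t ht, hu.pde t ht]
    ring
  have hx := C.xdiff t ht
  have hx' := (C.shift a).xdiff t ht
  have hxn : ContDiff ℝ 2 (fun x => (-1) * u t x) := contDiff_const.mul hx
  have e2 : ∀ i j, hess d (dq u h k t) x i j =
      h⁻¹ * (hess d (u t) (x + a) i j - hess d (u t) x i j) := by
    intro i j
    have : dq u h k t = fun x => h⁻¹ * (u t (x + a) + (-1) * u t x) := rfl
    rw [this, hess_mul (f := fun _ => h⁻¹) (g := fun x => u t (x + a) + (-1) * u t x)
      contDiff_const (hx'.add hxn), hess_add hx' hxn,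
      hess_mul (f := fun _ => (-1 : ℝ)) contDiff_const hx, hess_shift]
    simp only [hess_const, pd_const]
    ring
  have e3 : ∀ i, pd (dq u h k t) i x = h⁻¹ * (pd (u t) i (x + a) - pd (u t) i x) := by
    intro i
    have : dq u h k t = fun x => h⁻¹ * (u t (x + a) + (-1) * u t x) := rfl
    rw [this, pd_mul (f := fun _ => h⁻¹) (g := fun x => u t (x + a) + (-1) * u t x)
      (by fun_prop) (C2.diff (hx'.add hxn)), pd_add (C2.diff hx') (C2.diff hxn),
      pd_mul (f := fun _ => (-1 : ℝ)) (by fun_prop) (C2.diff hx), pd_shift]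
    simp only [pd_const]
    ring
  rw [e1]
  simp only [A0_eq, e2, e3, dqS, ← ha]
  have r1 : ∀ i j, (Q t (x + a) i j - Q t x i j) / h * hess d (u t) (x + a) i j =
    h⁻¹ * (Q t (x + a) i j * hess d (u t) (x + a) i j) - h⁻¹ * (Q t x i j * hess d (u t) (x + a) i j) := by
    intro i j; rw [div_eq_mul_inv]; ring
  have r2 : ∀ i, (b t (x + a) i - b t x i) / h * pd (u t) i (x + a) =
    h⁻¹ * (b t (x + a) i * pd (u t) i (x + a)) - h⁻¹ * (b t x i * pd (u t) i (x + a)) := by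
    intro i; rw [div_eq_mul_inv]; ring
  have r3 : ∀ i j, Q t x i j * (h⁻¹ * (hess d (u t) (x + a) i j - hess d (u t) x i j)) =
     h⁻¹ * (Q t x i j * hess d (u t) (x + a) i j) - h⁻¹ * (Q t x i j * hess d (u t) x i j) := by
    intro i j; ring
  have r4 : ∀ i, b t x i * (h⁻¹ * (pd (u t) i (x + a) - pd (u t) i x)) =
    h⁻¹ * (b t x i * pd (u t) i (x + a)) - h⁻¹ * (b t x i * pd (u t) i x) := by
    intro i; ring
  simp only [r1, r2, r3, r4, Finset.sum_sub_distrib, ← Finset.mul_sum]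
  ring

abbrev BData (d : ℕ) := ℝ × ℝ × (Fin d → ℝ) × (Fin d → Fin d → ℝ) × (Fin d → ℝ) × (Fin d → ℝ) ×
  (Fin d → Fin d → ℝ) × ℝ

/-- the Bernstein expression: data `(η_t - Aη, η, ∇η, Q, g, S, H, Y_t - AY)` -/
def Ebern {d : ℕ} (p : BData d) : ℝ :=
  p.1 * (∑ k, p.2.2.2.2.1 k * p.2.2.2.2.1 k)
    + p.2.1 * ∑ k, (2 * p.2.2.2.2.1 k * p.2.2.2.2.2.1 k
      - 2 * qf p.2.2.2.1 (p.2.2.2.2.2.2.1 k) (p.2.2.2.2.2.2.1 k))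
    - 4 * ∑ k, p.2.2.2.2.1 k * qf p.2.2.2.1 p.2.2.1 (p.2.2.2.2.2.2.1 k)
    + p.2.2.2.2.2.2.2

theorem continuous_Ebern {d : ℕ} : Continuous (Ebern (d := d)) := by
  unfold Ebern qf
  fun_prop

def srcS {d : ℕ} (Q : ℝ → Euc d → Fin d → Fin d → ℝ) (b : ℝ → Euc d → Fin d → ℝ)
    (u : ℝ → Euc d → ℝ) (t : ℝ) (x : Euc d) (k : Fin d) : ℝ :=
  (∑ i, ∑ j, pd (fun y => Q t y i j) k x * hess d (u t) x i j)
    + ∑ j, pd (fun y => b t y j) k x * pd (u t) j x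

theorem bernstein_max {d : ℕ} {Q : ℝ → Euc d → Fin d → Fin d → ℝ} {b : ℝ → Euc d → Fin d → ℝ}
    {s : ℝ} {f : Euc d → ℝ} {u : ℝ → Euc d → ℝ} (hC : Coef s Q b)
    (hu : IsClassicalSolution d Q b (fun _ _ => 0) s f u) {η Y : ℝ → Euc d → ℝ}
    (hη : C12 s η) (hY : C12 s Y) {t0 T R : ℝ} (ht0 : s < t0)
    (hb1 : ∀ x, ‖x‖ ≤ R → η t0 x * (∑ k, pd (u t0) k x * pd (u t0) k x) + Y t0 x ≤ 0)
    (hb2 : ∀ t ∈ Icc t0 T, ∀ x, ‖x‖ = R → η t x * (∑ k, pd (u t) k x * pd (u t) k x) + Y t x ≤ 0)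
    (hno : ∀ t ∈ Ioc t0 T, ∀ x, ‖x‖ < R →
      0 < η t x * (∑ k, pd (u t) k x * pd (u t) k x) + Y t x →
      (∀ i, pd (η t) i x * (∑ k, pd (u t) k x * pd (u t) k x)
        + η t x * (∑ k, 2 * pd (u t) k x * hess d (u t) x k i) + pd (Y t) i x = 0) →
      0 ≤ Ebern (deriv (fun τ => η τ x) t - A0 Q b t (η t) x, η t x, (fun i => pd (η t) i x),
        Q t x, (fun k => pd (u t) k x), srcS Q b u t x, hess d (u t) x,
        deriv (fun τ => Y τ x) t - A0 Q b t (Y t) x) → False) :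
    ∀ t ∈ Icc t0 T, ∀ x, ‖x‖ ≤ R → η t x * (∑ k, pd (u t) k x * pd (u t) k x) + Y t x ≤ 0 := by
  intro t1 ht1 x1 hx1
  by_contra hpos
  push Not at hpos
  have C := C12.ofSol hu
  set K : Set (ℝ × Euc d) := Icc t0 T ×ˢ Metric.closedBall 0 R with hK
  have hKc : IsCompact K := isCompact_Icc.prod (isCompact_closedBall 0 R)
  have hKs : K ⊆ Ioi s ×ˢ univ := fun p hp => ⟨lt_of_lt_of_le ht0 hp.1.1, trivial⟩
  set h : ℕ → ℝ := fun n => 1 / ((n : ℝ) + 1) with hh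
  have hhp : ∀ n, 0 < h n := fun n => by simp only [hh]; positivity
  have hh0 : Tendsto h atTop (𝓝 0) := tendsto_one_div_add_atTop_nhds_zero_nat
  have hG : ∀ n k, C12 s (dq u (h n) k) := fun n k => C.dq (h n) k
  have hW : ∀ n, C12 s (fun t x => ∑ k, dq u (h n) k t x * dq u (h n) k t x) := by
    intro n
    have hk := fun k => (hG n k).mul (hG n k)
    refine ⟨?_, ?_, ?_, ?_, ?_, ?_⟩
    · exact continuousOn_finset_sum _ fun k _ => (hk k).cont
    · exact fun t ht x => DifferentiableAt.fun_sum fun k _ => (hk k).tdiff t ht x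
    · exact (continuousOn_finset_sum _ fun k _ => (hk k).tc).congr fun p hp =>
        deriv_fun_sum fun k _ => (hk k).tdiff _ hp.1 _
    · exact fun t ht => ContDiff.sum fun k _ => (hk k).xdiff t ht
    · exact fun i => (continuousOn_finset_sum Finset.univ fun k _ => (hk k).gc i).congr fun p hp => by
        rw [pd_sum fun k => C2.diff ((hk k).xdiff _ hp.1)]
    · exact fun i j => (continuousOn_finset_sum Finset.univ fun k _ => (hk k).hc i j).congr fun p hp => by
        rw [hess_sum fun k => (hk k).xdiff _ hp.1]
  have hΦ : ∀ n, C12 s (fun t x => η t x * (∑ k, dq u (h n) k t x * dq u (h n) k t x) + Y t x) :=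
    fun n => (hη.mul (hW n)).add hY
  have hne : K.Nonempty := ⟨(t1, x1), ht1, by simpa using hx1⟩
  have hmax : ∀ n, ∃ z ∈ K, ∀ w ∈ K,
      η w.1 w.2 * (∑ k, dq u (h n) k w.1 w.2 * dq u (h n) k w.1 w.2) + Y w.1 w.2 ≤
      η z.1 z.2 * (∑ k, dq u (h n) k z.1 z.2 * dq u (h n) k z.1 z.2) + Y z.1 z.2 := by
    intro n
    obtain ⟨z, hz, hz2⟩ := hKc.exists_isMaxOn hne ((hΦ n).cont.mono hKs)
    exact ⟨z, hz, fun w hw => hz2 hw⟩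
  choose z0 hz0K hz0m using hmax
  obtain ⟨z', hz'K, φ, hφ, hφt⟩ := hKc.tendsto_subseq hz0K
  have hz's : s < z'.1 := (hKs hz'K).1
  set z : ℕ → ℝ × Euc d := z0 ∘ φ with hzdef
  set g : ℕ → ℝ := h ∘ φ with hgdef
  have hzK : ∀ n, z n ∈ K := fun n => hz0K _
  have hzs : ∀ n, s < (z n).1 := fun n => (hKs (hzK n)).1
  have hg0 : Tendsto g atTop (𝓝 0) := hh0.comp hφ.tendsto_atTop
  have hgp : ∀ n, 0 < g n := fun n => hhp _
  have hnb : Ioi s ×ˢ (univ : Set (Euc d)) ∈ 𝓝 z' :=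
    (isOpen_Ioi.prod isOpen_univ).mem_nhds ⟨hz's, trivial⟩
  have lim : ∀ {F : ℝ × Euc d → ℝ}, ContinuousOn F (Ioi s ×ˢ univ) →
      Tendsto (fun n => F (z n)) atTop (𝓝 (F z')) := fun hF =>
    ((hF.continuousAt hnb).tendsto).comp hφt
  have hdqs : ∀ h k t x, dq u h k t x = (u t (x + h • EuclideanSpace.single k 1) - u t x) / h := by
    intro h k t x; unfold dq; rw [div_eq_mul_inv]; ring
  have limG : ∀ k, Tendsto (fun n => dq u (g n) k (z n).1 (z n).2) atTop (𝓝 (pd (u z'.1) k z'.2)) := by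
    intro k
    simp only [hdqs]
    exact slope_tendsto k (fun t ht => C2.diff (C.xdiff t ht)) (C.gc k) hφt hzs hz's hg0 hgp
  have limG' : ∀ k, ∀ w ∈ K, Tendsto (fun n => dq u (g n) k w.1 w.2) atTop (𝓝 (pd (u w.1) k w.2)) := by
    intro k w hw
    simp only [hdqs]
    exact slope_tendsto k (fun t ht => C2.diff (C.xdiff t ht)) (C.gc k) (z := fun _ => w)
      tendsto_const_nhds (fun _ => (hKs hw).1) (hKs hw).1 hg0 hgp
  have pddq : ∀ h k t, s < t → ∀ i x, pd (dq u h k t) i x =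
      (pd (u t) i (x + h • EuclideanSpace.single k 1) - pd (u t) i x) / h := by
    intro h k t ht i x
    have hx := C.xdiff t ht
    have hx' := (C.shift (h • EuclideanSpace.single k 1)).xdiff t ht
    have hxn : ContDiff ℝ 2 (fun x => (-1) * u t x) := contDiff_const.mul hx
    have : dq u h k t = fun x => h⁻¹ * (u t (x + h • EuclideanSpace.single k 1) + (-1) * u t x) := rfl
    rw [this, pd_mul (f := fun _ => h⁻¹)
      (g := fun x => u t (x + h • EuclideanSpace.single k 1) + (-1) * u t x)
      (by fun_prop) (C2.diff (hx'.add hxn)), pd_add (C2.diff hx') (C2.diff hxn),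
      pd_mul (f := fun _ => (-1 : ℝ)) (by fun_prop) (C2.diff hx), pd_shift]
    simp only [pd_const]
    rw [div_eq_mul_inv]
    ring
  have limH : ∀ k i, Tendsto (fun n => pd (dq u (g n) k (z n).1) i (z n).2) atTop
      (𝓝 (hess d (u z'.1) z'.2 k i)) := by
    intro k i
    simp only [fun n => pddq (g n) k _ (hzs n) i]
    exact slope_tendsto (F := fun t => pd (u t) i) k (fun t ht => diff_pd (C.xdiff t ht) i)
      (C.hc k i) hφt hzs hz's hg0 hgp
  have limshift : ∀ k, Tendsto (fun n => ((z n).1, (z n).2 + g n • (EuclideanSpace.single k 1 : Euc d)))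
      atTop (𝓝 z') := by
    intro k
    have h1 := (continuous_fst.tendsto z').comp hφt
    have h2 := (continuous_snd.tendsto z').comp hφt
    have h3 := h2.add (hg0.smul_const (EuclideanSpace.single k 1 : Euc d))
    simp only [zero_smul, add_zero] at h3
    exact h1.prodMk_nhds h3
  have limS : ∀ k, Tendsto (fun n => dqS Q b u (g n) k (z n).1 (z n).2) atTop
      (𝓝 (srcS Q b u z'.1 z'.2 k)) := by
    intro k
    unfold dqS srcS
    refine Tendsto.add (tendsto_finset_sum _ fun i _ => tendsto_finset_sum _ fun j _ => ?_)
      (tendsto_finset_sum _ fun j _ => ?_)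
    · refine Tendsto.mul ?_ ?_
      · exact slope_tendsto (F := fun t y => Q t y i j) k (hC.qd i j) (hC.qg i j k) hφt hzs hz's hg0 hgp
      · exact (((C.hc i j).continuousAt hnb).tendsto).comp (limshift k)
    · refine Tendsto.mul ?_ ?_
      · exact slope_tendsto (F := fun t y => b t y j) k (hC.bd j) (hC.bg j k) hφt hzs hz's hg0 hgp
      · exact (((C.gc j).continuousAt hnb).tendsto).comp (limshift k)
  have limΦ : Tendsto (fun n => η (z n).1 (z n).2 *
      (∑ k, dq u (g n) k (z n).1 (z n).2 * dq u (g n) k (z n).1 (z n).2) + Y (z n).1 (z n).2) atTop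
      (𝓝 (η z'.1 z'.2 * (∑ k, pd (u z'.1) k z'.2 * pd (u z'.1) k z'.2) + Y z'.1 z'.2)) :=
    ((lim hη.cont).mul (tendsto_finset_sum _ fun k _ => (limG k).mul (limG k))).add (lim hY.cont)
  have hge : ∀ w ∈ K, η w.1 w.2 * (∑ k, pd (u w.1) k w.2 * pd (u w.1) k w.2) + Y w.1 w.2 ≤
      η z'.1 z'.2 * (∑ k, pd (u z'.1) k z'.2 * pd (u z'.1) k z'.2) + Y z'.1 z'.2 := by
    intro w hw
    have l1 : Tendsto (fun n => η w.1 w.2 *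
      (∑ k, dq u (g n) k w.1 w.2 * dq u (g n) k w.1 w.2) + Y w.1 w.2) atTop
      (𝓝 (η w.1 w.2 * (∑ k, pd (u w.1) k w.2 * pd (u w.1) k w.2) + Y w.1 w.2)) :=
      (tendsto_const_nhds.mul (tendsto_finset_sum _ fun k _ =>
        (limG' k w hw).mul (limG' k w hw))).add tendsto_const_nhds
    exact le_of_tendsto_of_tendsto' l1 limΦ fun n => hz0m (φ n) w hw
  have hz'pos := lt_of_lt_of_le hpos (hge (t1, x1) ⟨ht1, by simpa using hx1⟩)
  have hz't : t0 < z'.1 := by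
    rcases eq_or_lt_of_le hz'K.1.1 with he | hl
    · have := hb1 z'.2 (by simpa using hz'K.2)
      rw [he] at this
      linarith
    · exact hl
  have hz'x : ‖z'.2‖ < R := by
    have h1 : ‖z'.2‖ ≤ R := by simpa using hz'K.2
    rcases eq_or_lt_of_le h1 with he | hl
    · have := hb2 z'.1 hz'K.1 z'.2 he
      linarith
    · exact hl
  have hev : ∀ᶠ n in atTop, t0 < (z n).1 ∧ ‖(z n).2‖ < R := by
    have hO : IsOpen {p : ℝ × Euc d | t0 < p.1 ∧ ‖p.2‖ < R} :=
      (isOpen_lt continuous_const continuous_fst).inter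
        (isOpen_lt (continuous_norm.comp continuous_snd) continuous_const)
    exact hφt.eventually (hO.mem_nhds ⟨hz't, hz'x⟩)
  have main : ∀ᶠ n in atTop,
      (∀ i, pd (η (z n).1) i (z n).2 *
          (∑ k, dq u (g n) k (z n).1 (z n).2 * dq u (g n) k (z n).1 (z n).2)
        + η (z n).1 (z n).2 * (∑ k, 2 * dq u (g n) k (z n).1 (z n).2 *
          pd (dq u (g n) k (z n).1) i (z n).2) + pd (Y (z n).1) i (z n).2 = 0) ∧
      0 ≤ Ebern (deriv (fun τ => η τ (z n).2) (z n).1 - A0 Q b (z n).1 (η (z n).1) (z n).2,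
        η (z n).1 (z n).2, (fun i => pd (η (z n).1) i (z n).2),
        Q (z n).1 (z n).2, (fun k => dq u (g n) k (z n).1 (z n).2),
        (fun k => dqS Q b u (g n) k (z n).1 (z n).2),
        (fun k i => pd (dq u (g n) k (z n).1) i (z n).2),
        deriv (fun τ => Y τ (z n).2) (z n).1 - A0 Q b (z n).1 (Y (z n).1) (z n).2) := by
    filter_upwards [hev] with n hn
    have hm := hz0m (φ n)
    change ∀ w ∈ K, η w.1 w.2 * (∑ k, dq u (g n) k w.1 w.2 * dq u (g n) k w.1 w.2) + Y w.1 w.2 ≤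
      η (z n).1 (z n).2 * (∑ k, dq u (g n) k (z n).1 (z n).2 * dq u (g n) k (z n).1 (z n).2)
        + Y (z n).1 (z n).2 at hm
    have hzn := hzK n
    have hsn := hzs n
    have hCn := hΦ (φ n)
    change C12 s (fun t x => η t x * (∑ k, dq u (g n) k t x * dq u (g n) k t x) + Y t x) at hCn
    have hGn : ∀ k, C12 s (dq u (g n) k) := fun k => C.dq (g n) k
    have hWn := hW (φ n)
    change C12 s (fun t x => ∑ k, dq u (g n) k t x * dq u (g n) k t x) at hWn
    generalize hzn' : z n = y at *
    obtain ⟨t, x⟩ := y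
    simp only at *
    have hloc : IsLocalMax (fun x => η t x * (∑ k, dq u (g n) k t x * dq u (g n) k t x) + Y t x) x := by
      have : {y : Euc d | ‖y‖ < R} ∈ 𝓝 x :=
        (isOpen_lt continuous_norm continuous_const).mem_nhds hn.2
      filter_upwards [this] with y hy
      exact hm (t, y) ⟨hzn.1, by simpa using le_of_lt hy⟩
    obtain ⟨hgrad, hhess⟩ := max_test (hCn.xdiff t hsn) hloc
    have hA : A0 Q b t (fun x => η t x * (∑ k, dq u (g n) k t x * dq u (g n) k t x) + Y t x) x ≤ 0 := by
      rw [A0_eq]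
      simp only [hgrad, mul_zero, Finset.sum_const_zero, add_zero]
      exact hhess _ (hC.qs t hsn x) (hC.qp t hsn x)
    have hT : 0 ≤ deriv (fun τ => η τ x * (∑ k, dq u (g n) k τ x * dq u (g n) k τ x) + Y τ x) t := by
      refine deriv_nonneg_of_left hn.1 (hCn.tdiff t hsn x) fun τ hτ => ?_
      exact hm (τ, x) ⟨⟨hτ.1.le, hτ.2.le.trans hzn.1.2⟩, hzn.2⟩
    rw [bern_op b (hη.xdiff t hsn) (hY.xdiff t hsn) (fun k => (hGn k).xdiff t hsn) x
      (hC.qs t hsn x)] at hA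
    rw [deriv_fun_add ((hη.tdiff t hsn x).fun_mul (hWn.tdiff t hsn x)) (hY.tdiff t hsn x),
      deriv_fun_mul (hη.tdiff t hsn x) (hWn.tdiff t hsn x),
      deriv_fun_sum (fun k _ => ((hGn k).tdiff t hsn x).fun_mul ((hGn k).tdiff t hsn x))] at hT
    have eT : ∀ k, deriv (fun τ => dq u (g n) k τ x * dq u (g n) k τ x) t =
        2 * dq u (g n) k t x * (A0 Q b t (dq u (g n) k t) x + dqS Q b u (g n) k t x) := by
      intro k
      rw [deriv_fun_mul ((hGn k).tdiff t hsn x) ((hGn k).tdiff t hsn x), dq_eq hu k hsn x]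
      ring
    simp only [eT] at hT
    constructor
    · intro i
      have := hgrad i
      rw [pd_add (C2.diff ((hη.xdiff t hsn).mul (hWn.xdiff t hsn))) (C2.diff (hY.xdiff t hsn)),
        pd_mul (C2.diff (hη.xdiff t hsn)) (C2.diff (hWn.xdiff t hsn)),
        pd_sum (fun k => C2.diff (((hGn k).mul (hGn k)).xdiff t hsn))] at this
      have e : ∀ k, pd (fun x => dq u (g n) k t x * dq u (g n) k t x) i x =
          2 * dq u (g n) k t x * pd (dq u (g n) k t) i x := by
        intro k
        rw [pd_mul (C2.diff ((hGn k).xdiff t hsn)) (C2.diff ((hGn k).xdiff t hsn))]; ring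
      simp only [e] at this
      linarith
    · unfold Ebern
      simp only
      have e : ∑ k, 2 * dq u (g n) k t x * (A0 Q b t (dq u (g n) k t) x + dqS Q b u (g n) k t x)
          - ∑ k, (2 * dq u (g n) k t x * A0 Q b t (dq u (g n) k t) x
          + 2 * qf (Q t x) (fun i => pd (dq u (g n) k t) i x) (fun i => pd (dq u (g n) k t) i x))
          = ∑ k, (2 * dq u (g n) k t x * dqS Q b u (g n) k t x
          - 2 * qf (Q t x) (fun i => pd (dq u (g n) k t) i x) (fun i => pd (dq u (g n) k t) i x)) := by
        rw [← Finset.sum_sub_distrib]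
        exact Finset.sum_congr rfl fun k _ => by ring
      rw [← e]
      linarith
  refine hno z'.1 ⟨hz't, hz'K.1.2⟩ z'.2 hz'x hz'pos ?_ ?_
  · intro i
    have l : Tendsto (fun n => pd (η (z n).1) i (z n).2 *
          (∑ k, dq u (g n) k (z n).1 (z n).2 * dq u (g n) k (z n).1 (z n).2)
        + η (z n).1 (z n).2 * (∑ k, 2 * dq u (g n) k (z n).1 (z n).2 *
          pd (dq u (g n) k (z n).1) i (z n).2) + pd (Y (z n).1) i (z n).2) atTop
        (𝓝 (pd (η z'.1) i z'.2 * (∑ k, pd (u z'.1) k z'.2 * pd (u z'.1) k z'.2)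
        + η z'.1 z'.2 * (∑ k, 2 * pd (u z'.1) k z'.2 * hess d (u z'.1) z'.2 k i)
        + pd (Y z'.1) i z'.2)) := by
      refine Tendsto.add (Tendsto.add (Tendsto.mul (lim (hη.gc i)) (tendsto_finset_sum _ fun k _ =>
        (limG k).mul (limG k))) (Tendsto.mul (lim hη.cont) (tendsto_finset_sum _ fun k _ =>
        (tendsto_const_nhds.mul (limG k)).mul (limH k i)))) (lim (hY.gc i))
    refine tendsto_nhds_unique l (tendsto_const_nhds.congr' ?_)
    filter_upwards [main] with n hn
    exact (hn.1 i).symm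
  · have hAc : ∀ {w : ℝ → Euc d → ℝ}, C12 s w →
        ContinuousOn (fun p : ℝ × Euc d => deriv (fun τ => w τ p.2) p.1 - A0 Q b p.1 (w p.1) p.2)
          (Ioi s ×ˢ univ) := by
      intro w hw
      simp only [A0_eq]
      refine hw.tc.sub (ContinuousOn.add (continuousOn_finset_sum _ fun i _ =>
        continuousOn_finset_sum _ fun j _ => (hC.qc i j).mul (hw.hc i j))
        (continuousOn_finset_sum _ fun i _ => (hC.bc i).mul (hw.gc i)))
    have l := (continuous_Ebern (d := d)).tendsto (deriv (fun τ => η τ z'.2) z'.1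
        - A0 Q b z'.1 (η z'.1) z'.2, η z'.1 z'.2, (fun i => pd (η z'.1) i z'.2),
        Q z'.1 z'.2, (fun k => pd (u z'.1) k z'.2), srcS Q b u z'.1 z'.2, hess d (u z'.1) z'.2,
        deriv (fun τ => Y τ z'.2) z'.1 - A0 Q b z'.1 (Y z'.1) z'.2)
    have l2 := l.comp ((lim (hAc hη)).prodMk_nhds ((lim hη.cont).prodMk_nhds
      ((tendsto_pi_nhds.2 fun i => lim (hη.gc i)).prodMk_nhds
      ((tendsto_pi_nhds.2 fun i => tendsto_pi_nhds.2 fun j => lim (hC.qc i j)).prodMk_nhds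
      ((tendsto_pi_nhds.2 limG).prodMk_nhds ((tendsto_pi_nhds.2 limS).prodMk_nhds
      ((tendsto_pi_nhds.2 fun i => tendsto_pi_nhds.2 fun j => limH i j).prodMk_nhds
      (lim (hAc hY)))))))))
    refine ge_of_tendsto l2 ?_
    filter_upwards [main] with n hn
    exact hn.2

theorem block_sum {d : ℕ} {Qx Qy S Hx Hy T : Fin d → Fin d → ℝ} {K : ℝ}
    (sx : ∀ i j, Qx i j = Qx j i) (sy : ∀ i j, Qy i j = Qy j i) (sS : ∀ i j, S i j = S j i)
    (hp : ∀ ξ η : Fin d → ℝ, 0 ≤ ∑ i, ∑ j, (Qx i j * ξ i * ξ j + 2 * (S i j * ξ i * η j)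
      + Qy i j * η i * η j))
    (h2 : ∀ ξ η : Fin d → ℝ, ∑ i, ∑ j, (Hx i j * ξ i * ξ j - Hy i j * η i * η j) ≤
      (∑ i, ∑ j, T i j * (ξ i - η i) * (ξ j - η j)) + 2 * K * ∑ i, ξ i * ξ i) :
    ∑ i, ∑ j, (Qx i j * Hx i j - Qy i j * Hy i j) ≤
      (∑ i, ∑ j, (Qx i j + Qy i j - 2 * S i j) * T i j) + 2 * K * ∑ i, Qx i i := by
  let A : (Fin d ⊕ Fin d) → (Fin d ⊕ Fin d) → ℝ := fun a b =>
    match a, b with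
    | .inl i, .inl j => Qx i j
    | .inl i, .inr j => S i j
    | .inr i, .inl j => S i j
    | .inr i, .inr j => Qy i j
  obtain ⟨m, v, hv⟩ := psd_decomp A
    (by
      rintro (i | i) (j | j)
      · exact sx i j
      · exact sS i j
      · exact sS i j
      · exact sy i j)
    (by
      intro w
      refine (hp (fun i => w (.inl i)) (fun i => w (.inr i))).trans_eq ?_
      simp only [Fintype.sum_sum_type, A, Finset.sum_add_distrib]
      have : ∑ i, ∑ j, S i j * w (.inr i) * w (.inl j) = ∑ i, ∑ j, S i j * w (.inl i) * w (.inr j) := by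
        rw [Finset.sum_comm]
        refine Finset.sum_congr rfl fun i _ => Finset.sum_congr rfl fun j _ => ?_
        rw [sS]; ring
      rw [this]
      simp only [← Finset.mul_sum]; ring)
  have hx : ∀ i j, Qx i j = ∑ k, v k (.inl i) * v k (.inl j) := fun i j => hv (.inl i) (.inl j)
  have hS : ∀ i j, S i j = ∑ k, v k (.inl i) * v k (.inr j) := fun i j => hv (.inl i) (.inr j)
  have hS' : ∀ i j, S i j = ∑ k, v k (.inr i) * v k (.inl j) := fun i j => hv (.inr i) (.inl j)
  have hy : ∀ i j, Qy i j = ∑ k, v k (.inr i) * v k (.inr j) := fun i j => hv (.inr i) (.inr j)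
  have sw : ∀ F : Fin m → Fin d → Fin d → ℝ, ∑ i, ∑ j, ∑ k, F k i j = ∑ k, ∑ i, ∑ j, F k i j := by
    intro F
    conv_rhs => rw [Finset.sum_comm]
    refine Finset.sum_congr rfl fun i _ => ?_
    rw [Finset.sum_comm]
  have key := Finset.sum_le_sum (s := Finset.univ) fun k _ =>
    h2 (fun i => v k (.inl i)) (fun i => v k (.inr i))
  have e1 : ∑ i, ∑ j, (Qx i j * Hx i j - Qy i j * Hy i j) = ∑ k, ∑ i, ∑ j,
      (Hx i j * v k (.inl i) * v k (.inl j) - Hy i j * v k (.inr i) * v k (.inr j)) := by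
    rw [← sw]
    refine Finset.sum_congr rfl fun i _ => Finset.sum_congr rfl fun j _ => ?_
    rw [hx, hy, Finset.sum_mul, Finset.sum_mul, ← Finset.sum_sub_distrib]
    refine Finset.sum_congr rfl fun k _ => ?_
    ring
  have e2 : (∑ i, ∑ j, (Qx i j + Qy i j - 2 * S i j) * T i j) = ∑ k, ∑ i, ∑ j,
      T i j * (v k (.inl i) - v k (.inr i)) * (v k (.inl j) - v k (.inr j)) := by
    rw [← sw]
    refine Finset.sum_congr rfl fun i _ => Finset.sum_congr rfl fun j _ => ?_
    have : Qx i j + Qy i j - 2 * S i j = Qx i j + Qy i j - S i j - S i j := by ring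
    rw [this]
    nth_rewrite 1 [hS]
    rw [hx, hy, hS', ← Finset.sum_add_distrib, ← Finset.sum_sub_distrib, ← Finset.sum_sub_distrib,
      Finset.sum_mul]
    refine Finset.sum_congr rfl fun k _ => ?_
    ring
  have e3 : ∑ i, Qx i i = ∑ k, ∑ i, v k (.inl i) * v k (.inl i) := by
    rw [Finset.sum_comm]
    exact Finset.sum_congr rfl fun i _ => hx i i
  rw [e1, e2, e3, Finset.mul_sum, ← Finset.sum_add_distrib]
  exact key

theorem norm_le_quad {E : Type*} [NormedAddCommGroup E] [InnerProductSpace ℝ E] {n z : E} {ρ : ℝ}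
    (hn : ‖n‖ = 1) (hρ : 0 < ρ) (h : ρ / 2 ≤ inner ℝ n z) :
    ‖z‖ ≤ inner ℝ n z + (‖z‖ ^ 2 - (inner ℝ n z) ^ 2) / ρ := by
  have h1 : inner ℝ n z ≤ ‖z‖ := by simpa [hn] using real_inner_le_norm n z
  set a := inner ℝ n z
  have : ‖z‖ - a ≤ (‖z‖ ^ 2 - a ^ 2) / ρ := by
    rw [le_div_iff₀ hρ]; nlinarith
  linarith

/-- first and second order conditions at a maximum of the doubled function -/
theorem doubled_max {d : ℕ} {g : Euc d → ℝ} (hg : ContDiff ℝ 2 g) {x y x1 : Euc d} {L M K : ℝ}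
    (hL : 0 ≤ L) (hρ : 0 < ‖x - y‖)
    (hm : IsLocalMax (fun z : Euc d × Euc d => g z.1 - g z.2
      - L * (‖z.1 - z.2‖ - M / 2 * ‖z.1 - z.2‖ ^ 2) - K * ‖z.1 - x1‖ ^ 2) (x, y)) :
    (∀ ξ η : Euc d, (∑ i, ξ i * pd g i x) - (∑ i, η i * pd g i y) =
      L * (1 - M * ‖x - y‖) * (inner ℝ (x - y) (ξ - η) / ‖x - y‖) + 2 * K * inner ℝ (x - x1) ξ) ∧
    (∀ ξ η : Euc d, (∑ i, ∑ j, ξ i * ξ j * hess d g x i j) - (∑ i, ∑ j, η i * η j * hess d g y i j) ≤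
      2 * L / ‖x - y‖ * (‖ξ - η‖ ^ 2 - (inner ℝ (x - y) (ξ - η) / ‖x - y‖) ^ 2)
        - L * M * ‖ξ - η‖ ^ 2 + 2 * K * ‖ξ‖ ^ 2) := by
  simp only [← forall_and]
  intro ξ η
  set ρ := ‖x - y‖ with hρd
  set ζ := ξ - η with hζ
  set n : Euc d := ρ⁻¹ • (x - y) with hn
  have hn1 : ‖n‖ = 1 := by
    rw [hn, norm_smul, norm_inv, Real.norm_of_nonneg hρ.le, ← hρd, inv_mul_cancel₀ hρ.ne']
  have hin : inner ℝ (x - y) ζ / ρ = inner ℝ n ζ := by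
    rw [hn, real_inner_smul_left, div_eq_inv_mul]
  have hxy : inner ℝ n (x - y) = ρ := by
    rw [hn, real_inner_smul_left, real_inner_self_eq_norm_sq, ← hρd]; field_simp
  have hxyz : inner ℝ (x - y) ζ = ρ * inner ℝ n ζ := by rw [← hin]; field_simp
  rw [hin]
  have hd1 : ∀ τ, HasDerivAt (fun τ : ℝ => g (x + τ • ξ) - g (y + τ • η))
      ((∑ i, ξ i * pd g i (x + τ • ξ)) - ∑ i, η i * pd g i (y + τ • η)) τ := fun τ =>
    (line_deriv (C2.diff hg) x ξ τ).sub (line_deriv (C2.diff hg) y η τ)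
  have hd2 := (line_deriv2 hg x ξ 0).sub (line_deriv2 hg y η 0)
  have := second_deriv_test (a := L * (1 - M * ρ) * inner ℝ n ζ + 2 * K * inner ℝ (x - x1) ξ)
    (b := 2 * L / ρ * (‖ζ‖ ^ 2 - (inner ℝ n ζ) ^ 2) - L * M * ‖ζ‖ ^ 2 + 2 * K * ‖ξ‖ ^ 2)
    hd1 hd2 (by
      have hc : Tendsto (fun τ : ℝ => (x + τ • ξ, y + τ • η)) (𝓝 0) (𝓝 (x, y)) := by
        have : Continuous (fun τ : ℝ => (x + τ • ξ, y + τ • η)) := by fun_prop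
        simpa using this.tendsto 0
      have hc2 : ∀ᶠ τ in 𝓝 (0:ℝ), ρ / 2 < inner ℝ n (x - y + τ • ζ) := by
        have : Continuous (fun τ : ℝ => inner ℝ n (x - y + τ • ζ)) := by fun_prop
        refine (this.tendsto 0).eventually_const_lt ?_
        simp only [zero_smul, add_zero, hxy]; linarith
      filter_upwards [hc hm, hc2] with τ h1 h2
      simp only [mem_setOf_eq, mem_preimage] at h1
      have e1 : x + τ • ξ - (y + τ • η) = x - y + τ • ζ := by rw [hζ, smul_sub]; abel
      have e2 : x + τ • ξ - x1 = (x - x1) + τ • ξ := by abel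
      rw [e1, e2] at h1
      have h3 := norm_le_quad hn1 hρ h2.le
      have h4 : ‖x - y + τ • ζ‖ ^ 2 = ρ ^ 2 + 2 * τ * (ρ * inner ℝ n ζ) + τ ^ 2 * ‖ζ‖ ^ 2 := by
        rw [norm_add_sq_real, real_inner_smul_right, norm_smul, hxyz, mul_pow, Real.norm_eq_abs, sq_abs]
        ring
      have h5 : ‖x - x1 + τ • ξ‖ ^ 2 = ‖x - x1‖ ^ 2 + 2 * τ * inner ℝ (x - x1) ξ + τ ^ 2 * ‖ξ‖ ^ 2 := by
        rw [norm_add_sq_real, real_inner_smul_right, norm_smul, mul_pow, Real.norm_eq_abs, sq_abs]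
        ring
      rw [inner_add_right, hxy, real_inner_smul_right, h4] at h3
      rw [h4, h5] at h1
      have h6 : L * ‖x - y + τ • ζ‖ ≤ L * (ρ + τ * inner ℝ n ζ + τ ^ 2 * (‖ζ‖ ^ 2 - (inner ℝ n ζ) ^ 2) / ρ) := by
        refine mul_le_mul_of_nonneg_left (h3.trans_eq ?_) hL
        congr 2; ring
      have e6 : 2 * L / ρ * (‖ζ‖ ^ 2 - (inner ℝ n ζ) ^ 2) / 2 * τ ^ 2 =
        L * (τ ^ 2 * (‖ζ‖ ^ 2 - (inner ℝ n ζ) ^ 2) / ρ) := by ring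
      simp only [zero_smul, add_zero]
      linear_combination h1 + h6 - e6)
  simpa using this

theorem sum_abs_sq_le {d : ℕ} (σ : Fin d → ℝ) : (∑ i, |σ i|) ^ 2 ≤ d * ∑ i, σ i ^ 2 := by
  have := sq_sum_le_card_mul_sum_sq (s := Finset.univ) (f := fun i => |σ i|)
  simpa using this

theorem block_psd {d : ℕ} {Qx Qy : Fin d → Fin d → ℝ} {ν₀ ρ ℓ : ℝ} (hρ : 0 ≤ ρ) (hℓ : 0 ≤ ℓ) {n : Fin d → ℝ}
    (hn : ∑ i, n i ^ 2 = 1)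
    (sx : ∀ i j, Qx i j = Qx j i) (sy : ∀ i j, Qy i j = Qy j i)
    (px : ∀ ξ : Fin d → ℝ, ν₀ * ∑ i, ξ i ^ 2 ≤ ∑ i, ∑ j, Qx i j * ξ i * ξ j)
    (py : ∀ ξ : Fin d → ℝ, ν₀ * ∑ i, ξ i ^ 2 ≤ ∑ i, ∑ j, Qy i j * ξ i * ξ j)
    (hν : 0 < ν₀)
    (hl : ∀ i j, |Qx i j - Qy i j| ≤ ℓ * ρ) (h1 : ρ ≤ ν₀ / 2) (h2 : ρ * ℓ ^ 2 * d ^ 2 ≤ ν₀)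
    (ξ η : Fin d → ℝ) :
    0 ≤ ∑ i, ∑ j, (Qx i j * ξ i * ξ j + 2 * (((Qx i j + Qy i j) / 2 - (if i = j then ρ else 0)
      - ν₀ / 2 * n i * n j) * ξ i * η j) + Qy i j * η i * η j) := by
  set σ : Fin d → ℝ := fun i => ξ i + η i with hσ
  set ζ : Fin d → ℝ := fun i => ξ i - η i with hζ
  have hpx := px σ
  have hpy := py σ
  have e : ∑ i, ∑ j, (Qx i j * ξ i * ξ j + 2 * (((Qx i j + Qy i j) / 2 - (if i = j then ρ else 0)
      - ν₀ / 2 * n i * n j) * ξ i * η j) + Qy i j * η i * η j) =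
      (1/2) * (∑ i, ∑ j, Qx i j * σ i * σ j) + (1/2) * (∑ i, ∑ j, Qy i j * σ i * σ j)
      + (1/2) * (∑ i, ∑ j, (Qx i j - Qy i j) * σ i * ζ j)
      - ρ / 2 * ((∑ i, σ i ^ 2) - ∑ i, ζ i ^ 2)
      - ν₀ / 4 * ((∑ i, n i * σ i) ^ 2 - (∑ i, n i * ζ i) ^ 2) := by
    have c1 : ∀ A : Fin d → Fin d → ℝ, (∀ i j, A i j = A j i) → ∀ ξ η : Fin d → ℝ,
      ∑ i, ∑ j, A i j * η i * ξ j = ∑ i, ∑ j, A i j * ξ i * η j := fun A hA ξ η => qf_symm hA η ξ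
    have d1 : ∑ i, ∑ j, (if i = j then ρ else 0) * ξ i * η j = ρ * ∑ i, ξ i * η i := by
      simp [Finset.mul_sum, mul_assoc]
    have d2 : (∑ i, σ i ^ 2) - ∑ i, ζ i ^ 2 = 4 * ∑ i, ξ i * η i := by
      rw [← Finset.sum_sub_distrib, Finset.mul_sum]
      refine Finset.sum_congr rfl fun i _ => ?_
      simp only [hσ, hζ]; ring
    have d3 : (∑ i, n i * σ i) ^ 2 - (∑ i, n i * ζ i) ^ 2 = 4 * ((∑ i, n i * ξ i) * ∑ i, n i * η i) := by
      have a1 : ∑ i, n i * σ i = (∑ i, n i * ξ i) + ∑ i, n i * η i := by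
        simp only [hσ, mul_add, Finset.sum_add_distrib]
      have a2 : ∑ i, n i * ζ i = (∑ i, n i * ξ i) - ∑ i, n i * η i := by
        simp only [hζ, mul_sub, Finset.sum_sub_distrib]
      rw [a1, a2]; ring
    rw [d2, d3]
    have d4 : ∑ i, ∑ j, (ν₀ / 2 * n i * n j) * ξ i * η j
        = ν₀ / 2 * ((∑ i, n i * ξ i) * ∑ i, n i * η i) := by
      rw [Finset.sum_mul_sum, Finset.mul_sum]
      refine Finset.sum_congr rfl fun i _ => ?_
      rw [Finset.mul_sum]
      refine Finset.sum_congr rfl fun j _ => ?_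
      ring
    have q1 : ∑ i, ∑ j, Qx i j * σ i * σ j = (∑ i, ∑ j, Qx i j * ξ i * ξ j)
       + 2 * (∑ i, ∑ j, Qx i j * ξ i * η j) + ∑ i, ∑ j, Qx i j * η i * η j := by
      have := c1 Qx sx ξ η
      simp only [hσ, mul_add, add_mul, Finset.sum_add_distrib]
      rw [this]; ring
    have q2 : ∑ i, ∑ j, Qy i j * σ i * σ j = (∑ i, ∑ j, Qy i j * ξ i * ξ j)
       + 2 * (∑ i, ∑ j, Qy i j * ξ i * η j) + ∑ i, ∑ j, Qy i j * η i * η j := by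
      have := c1 Qy sy ξ η
      simp only [hσ, mul_add, add_mul, Finset.sum_add_distrib]
      rw [this]; ring
    have q3 : ∑ i, ∑ j, (Qx i j - Qy i j) * σ i * ζ j = (∑ i, ∑ j, Qx i j * ξ i * ξ j)
        - (∑ i, ∑ j, Qx i j * η i * η j) - (∑ i, ∑ j, Qy i j * ξ i * ξ j)
        + ∑ i, ∑ j, Qy i j * η i * η j := by
      have r1 := c1 Qy sy ξ η
      have r2 := c1 Qx sx ξ η
      simp only [hσ, hζ, mul_add, add_mul, mul_sub, sub_mul, Finset.sum_add_distrib, Finset.sum_sub_distrib]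
      rw [r1, r2]; ring
    rw [q1, q2, q3]
    have l : ∑ i, ∑ j, (Qx i j * ξ i * ξ j + 2 * (((Qx i j + Qy i j) / 2 - (if i = j then ρ else 0)
      - ν₀ / 2 * n i * n j) * ξ i * η j) + Qy i j * η i * η j) = (∑ i, ∑ j, Qx i j * ξ i * ξ j)
       + (∑ i, ∑ j, Qx i j * ξ i * η j) + (∑ i, ∑ j, Qy i j * ξ i * η j)
       - 2 * (∑ i, ∑ j, (if i = j then ρ else 0) * ξ i * η j)
       - 2 * (∑ i, ∑ j, (ν₀ / 2 * n i * n j) * ξ i * η j)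
       + ∑ i, ∑ j, Qy i j * η i * η j := by
      simp only [Finset.mul_sum, ← Finset.sum_add_distrib, ← Finset.sum_sub_distrib]
      refine Finset.sum_congr rfl fun i _ => Finset.sum_congr rfl fun j _ => ?_
      ring
    rw [l, d1, d4]; ring
  rw [e]
  set s2 := ∑ i, σ i ^ 2
  set z2 := ∑ i, ζ i ^ 2
  have hs2 : 0 ≤ s2 := Finset.sum_nonneg fun i _ => sq_nonneg _
  have hz2 : 0 ≤ z2 := Finset.sum_nonneg fun i _ => sq_nonneg _
  have hcs : (∑ i, n i * σ i) ^ 2 ≤ s2 := by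
    have := Finset.sum_mul_sq_le_sq_mul_sq Finset.univ n σ
    rwa [hn, one_mul] at this
  have hcross : |∑ i, ∑ j, (Qx i j - Qy i j) * σ i * ζ j| ≤ ℓ * ρ * ((∑ i, |σ i|) * ∑ j, |ζ j|) := by
    rw [Finset.sum_mul_sum, Finset.mul_sum]
    refine (Finset.abs_sum_le_sum_abs _ _).trans (Finset.sum_le_sum fun i _ => ?_)
    rw [Finset.mul_sum]
    refine (Finset.abs_sum_le_sum_abs _ _).trans (Finset.sum_le_sum fun j _ => ?_)
    rw [abs_mul, abs_mul, mul_assoc]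
    exact mul_le_mul_of_nonneg_right (hl i j) (by positivity)
  have hc2 : ℓ * ((∑ i, |σ i|) * ∑ j, |ζ j|) ≤ (ℓ ^ 2 * d ^ 2 * s2 + z2) / 2 := by
    have a1 := sum_abs_sq_le σ
    have a2 := sum_abs_sq_le ζ
    have hd0 : (0:ℝ) ≤ d := Nat.cast_nonneg d
    have b1 : ((∑ i, |σ i|) * ∑ j, |ζ j|) ^ 2 ≤ d ^ 2 * s2 * z2 := by
      rw [mul_pow]
      calc _ ≤ (d * s2) * (d * z2) := mul_le_mul a1 a2 (sq_nonneg _) (by positivity)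
        _ = _ := by ring
    refine abs_le_of_sq_le_sq' ?_ (by positivity) |>.2
    rw [mul_pow]
    nlinarith [mul_le_mul_of_nonneg_left b1 (sq_nonneg ℓ), sq_nonneg (ℓ ^ 2 * d ^ 2 * s2 - z2)]
  have hc3 := (abs_le.1 hcross).1
  have hc4 : ℓ * ρ * ((∑ i, |σ i|) * ∑ j, |ζ j|) ≤ ρ * ((ℓ ^ 2 * d ^ 2 * s2 + z2) / 2) := by
    nlinarith
  have hc5 : ρ * ℓ ^ 2 * d ^ 2 * s2 ≤ ν₀ * s2 := mul_le_mul_of_nonneg_right h2 hs2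
  have hc6 : ρ * s2 ≤ ν₀ / 2 * s2 := mul_le_mul_of_nonneg_right h1 hs2
  have hc7 : 0 ≤ ν₀ * (∑ i, n i * ζ i) ^ 2 := by positivity
  have hc8 := mul_le_mul_of_nonneg_left hcs hν.le
  have hc9 : 0 ≤ ρ * z2 := by positivity
  nlinarith

theorem doubled_contra {d : ℕ} {g : Euc d → ℝ} (hg : ContDiff ℝ 2 g) {x y x1 : Euc d} {L M K : ℝ}
    (hL : 0 < L) (hM : 0 ≤ M) (hK : 0 ≤ K) (hρ : 0 < ‖x - y‖)
    (hm : IsLocalMax (fun z : Euc d × Euc d => g z.1 - g z.2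
      - L * (‖z.1 - z.2‖ - M / 2 * ‖z.1 - z.2‖ ^ 2) - K * ‖z.1 - x1‖ ^ 2) (x, y))
    {Qx Qy : Fin d → Fin d → ℝ} {bx b' : Euc d} {ν₀ ℓ Λ : ℝ} (hℓ : 0 ≤ ℓ)
    (sx : ∀ i j, Qx i j = Qx j i) (sy : ∀ i j, Qy i j = Qy j i)
    (px : ∀ ξ : Fin d → ℝ, ν₀ * ∑ i, ξ i ^ 2 ≤ ∑ i, ∑ j, Qx i j * ξ i * ξ j)
    (py : ∀ ξ : Fin d → ℝ, ν₀ * ∑ i, ξ i ^ 2 ≤ ∑ i, ∑ j, Qy i j * ξ i * ξ j)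
    (hν : 0 < ν₀)
    (hl : ∀ i j, |Qx i j - Qy i j| ≤ ℓ * ‖x - y‖) (h1 : ‖x - y‖ ≤ ν₀ / 2)
    (h2 : ‖x - y‖ * ℓ ^ 2 * d ^ 2 ≤ ν₀)
    (hMρ : M * ‖x - y‖ ≤ 1) (hr : ‖x - x1‖ ≤ 1) (hbx : ‖bx‖ ≤ Λ) (hby : ‖b'‖ ≤ Λ)
    (htr : ∑ i, Qx i i ≤ Λ) (hbig : 4 * L * d + 2 * L * Λ + 4 * K * Λ < L * M * ν₀)
    (ht : 0 ≤ ((∑ i, ∑ j, Qx i j * hess d g x i j) + ∑ i, bx i * pd g i x)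
      - ((∑ i, ∑ j, Qy i j * hess d g y i j) + ∑ i, b' i * pd g i y)) : False := by
  obtain ⟨c1, c2⟩ := doubled_max hg hL.le hρ hm
  set ρ := ‖x - y‖ with hρd
  set n : Fin d → ℝ := fun i => (x i - y i) / ρ with hn
  have hn1 : ∑ i, n i ^ 2 = 1 := by
    simp only [hn, div_pow, ← Finset.sum_div]
    rw [div_eq_one_iff_eq (by positivity), hρd, EuclideanSpace.real_norm_sq_eq]
    simp
  have hin : ∀ ξ : Euc d, inner ℝ (x - y) ξ / ρ = ∑ i, n i * ξ i := by
    intro ξ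
    simp only [PiLp.inner_apply, hn, Finset.sum_div]
    refine Finset.sum_congr rfl fun i _ => ?_
    simp; ring
  have hb := c1 bx b'
  have hb2 : inner ℝ (x - y) (bx - b') / ρ ≤ 2 * Λ := by
    rw [div_le_iff₀ hρ]
    refine (real_inner_le_norm _ _).trans ?_
    rw [← hρd, mul_comm]
    exact mul_le_mul_of_nonneg_right ((norm_sub_le _ _).trans (by linarith)) hρ.le
  have hΛ : 0 ≤ Λ := (norm_nonneg _).trans hbx
  have hb3 : inner ℝ (x - x1) bx ≤ Λ := by
    refine (real_inner_le_norm _ _).trans ?_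
    calc _ ≤ 1 * Λ := mul_le_mul hr hbx (norm_nonneg _) zero_le_one
      _ = Λ := one_mul _
  have hb4 : L * (1 - M * ρ) * (inner ℝ (x - y) (bx - b') / ρ) ≤ 2 * L * Λ := by
    have a1 : 0 ≤ 1 - M * ρ := by linarith
    have a2 : 0 ≤ M * ρ := by positivity
    calc _ ≤ L * (1 - M * ρ) * (2 * Λ) := mul_le_mul_of_nonneg_left hb2 (by positivity)
      _ ≤ L * 1 * (2 * Λ) := by
        refine mul_le_mul_of_nonneg_right (mul_le_mul_of_nonneg_left (by linarith) hL.le) (by positivity)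
      _ = _ := by ring
  have hb5 : 2 * K * inner ℝ (x - x1) bx ≤ 2 * K * Λ := mul_le_mul_of_nonneg_left hb3 (by positivity)
  have hblock := block_sum (Qx := Qx) (Qy := Qy) (Hx := hess d g x) (Hy := hess d g y) (K := K)
    (S := fun i j => (Qx i j + Qy i j) / 2 - (if i = j then ρ else 0) - ν₀ / 2 * n i * n j)
    (T := fun i j => 2 * L / ρ * ((if i = j then 1 else 0) - n i * n j) - L * M * (if i = j then 1 else 0))
    sx sy (by
      intro i j
      rw [sx i j, sy i j]
      simp only [eq_comm (a := i)]
      ring)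
    (block_psd hρ.le hℓ hn1 sx sy px py hν hl h1 h2)
    (by
      intro ξ η
      have := c2 (WithLp.toLp 2 ξ) (WithLp.toLp 2 η)
      rw [hin, EuclideanSpace.real_norm_sq_eq, EuclideanSpace.real_norm_sq_eq] at this
      simp only [PiLp.sub_apply] at this
      have e1 : ∑ i, ∑ j, (hess d g x i j * ξ i * ξ j - hess d g y i j * η i * η j) =
        (∑ i, ∑ j, ξ i * ξ j * hess d g x i j) - (∑ i, ∑ j, η i * η j * hess d g y i j) := by
        simp only [← Finset.sum_sub_distrib]
        refine Finset.sum_congr rfl fun i _ => Finset.sum_congr rfl fun j _ => ?_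
        ring
      rw [e1]
      refine this.trans_eq ?_
      have e2 : ∑ i, ∑ j, (2 * L / ρ * ((if i = j then 1 else 0) - n i * n j)
          - L * M * (if i = j then 1 else 0)) * (ξ i - η i) * (ξ j - η j)
          = 2 * L / ρ * ((∑ i, (ξ i - η i) ^ 2) - (∑ i, n i * (ξ i - η i)) ^ 2)
            - L * M * ∑ i, (ξ i - η i) ^ 2 := by
        have e3 : ∀ i j, (2 * L / ρ * ((if i = j then 1 else 0) - n i * n j)
          - L * M * (if i = j then 1 else 0)) * (ξ i - η i) * (ξ j - η j) =
          (if i = j then (2 * L / ρ - L * M) * (ξ i - η i) * (ξ j - η j) else 0)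
          - 2 * L / ρ * ((n i * (ξ i - η i)) * (n j * (ξ j - η j))) := by
          intro i j
          split_ifs <;> ring
        simp only [e3, Finset.sum_sub_distrib, ← Finset.mul_sum, ← Finset.sum_mul]
        simp only [Finset.sum_ite_eq, Finset.mem_univ, if_true]
        have : ∑ x, (2 * L / ρ - L * M) * (ξ x - η x) * (ξ x - η x) =
          (2 * L / ρ - L * M) * ∑ i, (ξ i - η i) ^ 2 := by
          rw [Finset.mul_sum]
          exact Finset.sum_congr rfl fun i _ => by ring
        rw [this]; ring
      rw [e2]
      simp only [sq])
  have hT : ∑ i, ∑ j, (Qx i j + Qy i j - 2 * ((Qx i j + Qy i j) / 2 - (if i = j then ρ else 0) - ν₀ / 2 * n i * n j))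
     * (2 * L / ρ * ((if i = j then 1 else 0) - n i * n j) - L * M * (if i = j then 1 else 0))
     = 4 * L * d - 4 * L - 2 * ρ * L * M * d - ν₀ * L * M := by
    have e3 : ∀ i j, (Qx i j + Qy i j - 2 * ((Qx i j + Qy i j) / 2 - (if i = j then ρ else 0) - ν₀ / 2 * n i * n j))
     * (2 * L / ρ * ((if i = j then 1 else 0) - n i * n j) - L * M * (if i = j then 1 else 0)) =
      (if i = j then 4 * L - 2 * ρ * L * M + (- 4 * L + ν₀ * (2 * L / ρ) - ν₀ * L * M) * (n i * n j) else 0)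
       - ν₀ * (2 * L / ρ) * (n i ^ 2 * n j ^ 2) := by
      intro i j
      split_ifs
      · field_simp; ring
      · ring
    simp only [e3, Finset.sum_sub_distrib, ← Finset.mul_sum, ← Finset.sum_mul]
    simp only [Finset.sum_ite_eq, Finset.mem_univ, if_true, hn1, Finset.sum_add_distrib, ← Finset.mul_sum, ← sq]
    simp
    ring
  rw [hT] at hblock
  have hK2 : 2 * K * ∑ i, Qx i i ≤ 2 * K * Λ := mul_le_mul_of_nonneg_left htr (by positivity)
  simp only [Finset.sum_sub_distrib] at hblock
  have hp : 0 ≤ 2 * ρ * L * M * d := by positivity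
  nlinarith

structure Amb {d : ℕ} (s : ℝ) (Q : ℝ → Euc d → Fin d → Fin d → ℝ) (b : ℝ → Euc d → Fin d → ℝ)
    (ν₀ : ℝ) : Prop extends Coef s Q b where
  ν0 : 0 < ν₀
  ell : ∀ t, s < t → ∀ x (ξ : Fin d → ℝ), ν₀ * ∑ i, ξ i ^ 2 ≤ ∑ i, ∑ j, Q t x i j * ξ i * ξ j
  loc : ∀ R : ℝ, ∃ Λ : ℝ, 0 ≤ Λ ∧ ∀ t, s < t → t ≤ s + 1 → ∀ x : Euc d, ‖x‖ ≤ R →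
    (∑ i, Q t x i i ≤ Λ) ∧ ‖(WithLp.toLp 2 (b t x) : Euc d)‖ ≤ Λ ∧
    ∀ y : Euc d, ‖y‖ ≤ R → ∀ i j, |Q t x i j - Q t y i j| ≤ Λ * ‖x - y‖

set_option maxHeartbeats 1000000 in
theorem init_doubling {d : ℕ} {s : ℝ} {Q : ℝ → Euc d → Fin d → Fin d → ℝ} {b : ℝ → Euc d → Fin d → ℝ}
    {ν₀ : ℝ} (hA : Amb s Q b ν₀) {u : ℝ → Euc d → ℝ} {f : Euc d → ℝ}
    (hu : IsClassicalSolution d Q b (fun _ _ => 0) s f u)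
    {x0 x1 : Euc d} {r Mu Λ L M K ρ0 τ ε a : ℝ} (hr : 0 < r) (hr1 : r ≤ 1)
    (hMu : ∀ t ∈ Icc s (s + 1), ∀ x, |u t x| ≤ Mu) (hε : 0 < ε) (ha : 0 ≤ a)
    (hfl : ∀ x, ‖x - x0‖ < 3 * r → ∀ y, ‖y - x0‖ < 3 * r → f x - f y ≤ (a + ε) * ‖x - y‖)
    (hΛ0 : 0 ≤ Λ) (hΛ : ∀ t, s < t → t ≤ s + 1 → ∀ x : Euc d, ‖x‖ ≤ ‖x0‖ + 3 →
    (∑ i, Q t x i i ≤ Λ) ∧ ‖(WithLp.toLp 2 (b t x) : Euc d)‖ ≤ Λ ∧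
    ∀ y : Euc d, ‖y‖ ≤ ‖x0‖ + 3 → ∀ i j, |Q t x i j - Q t y i j| ≤ Λ * ‖x - y‖)
    (hL : L = a + 2 * ε) (hK : 2 * Mu ≤ K * r ^ 2) (hK0 : 0 ≤ K) (hM0 : 0 ≤ M)
    (hM : 4 * L * d + 2 * L * Λ + 4 * K * Λ < L * M * ν₀)
    (hρ0 : 0 < ρ0) (hρr : ρ0 < r) (hρM : L * M * ρ0 ≤ ε) (hρM2 : M * ρ0 ≤ 1) (hρν : ρ0 ≤ ν₀ / 2)
    (hρΛ : ρ0 * Λ ^ 2 * d ^ 2 ≤ ν₀) (hτ0 : 0 < τ) (hτ1 : τ ≤ 1)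
    (hτ : ∀ t ∈ Icc s (s + τ), ∀ x, ‖x - x0‖ ≤ 3 → |u t x - f x| ≤ ε * ρ0 / 4)
    (hx1 : ‖x1 - x0‖ < r) :
    ∀ t, s < t → t ≤ s + τ → ∀ y, ‖x1 - y‖ ≤ ρ0 → u t x1 - u t y ≤ L * ‖x1 - y‖ := by
  have hL0 : 0 < L := by rw [hL]; positivity
  set Ψ : ℝ × (Euc d × Euc d) → ℝ := fun p => u p.1 p.2.1 - u p.1 p.2.2
      - L * (‖p.2.1 - p.2.2‖ - M / 2 * ‖p.2.1 - p.2.2‖ ^ 2) - K * ‖p.2.1 - x1‖ ^ 2 with hΨ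
  set G : Set (Euc d × Euc d) := {z | ‖z.1 - x1‖ ≤ r ∧ ‖z.1 - z.2‖ ≤ ρ0} with hG
  have hx3 : ∀ x, ‖x - x1‖ ≤ r → ‖x - x0‖ < 2 * r := by
    intro x hx
    have : x - x0 = (x - x1) + (x1 - x0) := by abel
    rw [this]; exact (norm_add_le _ _).trans_lt (by linarith)
  have hy3 : ∀ x y, ‖x - x1‖ ≤ r → ‖x - y‖ ≤ ρ0 → ‖y - x0‖ < 3 * r := by
    intro x y hx hy
    have : y - x0 = (x - x0) - (x - y) := by abel
    rw [this]; exact (norm_sub_le _ _).trans_lt (by linarith [hx3 x hx])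
  have hnb : ∀ x, ‖x - x0‖ < 3 * r → ‖x‖ ≤ ‖x0‖ + 3 := by
    intro x hx
    have : x = (x - x0) + x0 := by abel
    rw [this]; exact (norm_add_le _ _).trans (by linarith)
  have hGc : IsCompact G := by
    have hsub : G ⊆ Metric.closedBall x0 3 ×ˢ Metric.closedBall x0 3 := by
      rintro ⟨x, y⟩ ⟨h1, h2⟩
      simp only [mem_prod, Metric.mem_closedBall, dist_eq_norm]
      exact ⟨by linarith [hx3 x h1], by linarith [hy3 x y h1 h2]⟩
    refine ((isCompact_closedBall _ _).prod (isCompact_closedBall _ _)).of_isClosed_subset ?_ hsub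
    have c1 : Continuous (fun z : Euc d × Euc d => ‖z.1 - x1‖) := by fun_prop
    have c2 : Continuous (fun z : Euc d × Euc d => ‖z.1 - z.2‖) := by fun_prop
    exact (isClosed_le c1 continuous_const).inter (isClosed_le c2 continuous_const)
  have hDc : IsCompact (Icc s (s + τ) ×ˢ G) := isCompact_Icc.prod hGc
  have hcont : ContinuousOn Ψ (Icc s (s + τ) ×ˢ G) := by
    have m1 : ContinuousOn (fun p : ℝ × (Euc d × Euc d) => u p.1 p.2.1) (Icc s (s + τ) ×ˢ G) :=
      hu.cont.comp (f := fun p : ℝ × (Euc d × Euc d) => (p.1, p.2.1)) (by fun_prop)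
        fun p hp => ⟨hp.1.1, trivial⟩
    have m2 : ContinuousOn (fun p : ℝ × (Euc d × Euc d) => u p.1 p.2.2) (Icc s (s + τ) ×ˢ G) :=
      hu.cont.comp (f := fun p : ℝ × (Euc d × Euc d) => (p.1, p.2.2)) (by fun_prop)
        fun p hp => ⟨hp.1.1, trivial⟩
    refine ((m1.sub m2).sub ?_).sub ?_ <;> fun_prop
  have main : ∀ p ∈ Icc s (s + τ) ×ˢ G, Ψ p ≤ 0 := by
    by_contra hcon
    push Not at hcon
    obtain ⟨p0, hp0, hpos0⟩ := hcon
    obtain ⟨⟨t, x, y⟩, hp, hmax⟩ := hDc.exists_isMaxOn ⟨p0, hp0⟩ hcont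
    have hpos : 0 < Ψ (t, x, y) := hpos0.trans_le (hmax hp0)
    obtain ⟨⟨hts, htT⟩, hxr, hxy⟩ := hp
    simp only at hts htT hxr hxy
    have hρe : ∀ ρ, 0 ≤ ρ → ρ ≤ ρ0 → (a + 3 / 2 * ε) * ρ ≤ L * (ρ - M / 2 * ρ ^ 2) := by
      intro ρ h0 h1
      have : L * M * ρ ≤ ε := by
        refine le_trans (mul_le_mul_of_nonneg_left h1 (by positivity)) hρM
      have h3 : L * M * ρ * ρ ≤ ε * ρ := mul_le_mul_of_nonneg_right this h0
      rw [hL] at h3 ⊢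
      nlinarith
    have hpos' := hpos
    simp only [hΨ] at hpos'
    have hKn : 0 ≤ K * ‖x - x1‖ ^ 2 := by positivity
    have hρn : 0 ≤ ‖x - y‖ := norm_nonneg _
    have hρx := hρe ‖x - y‖ hρn hxy
    have hff := hfl x (by linarith [hx3 x hxr]) y (hy3 x y hxr hxy)
    have htt : t ∈ Icc s (s + τ) := ⟨hts, htT⟩
    have htt1 : t ∈ Icc s (s + 1) := ⟨hts, by linarith⟩
    have hx3' := hx3 x hxr
    have hy3' := hy3 x y hxr hxy
    have hts' : s < t := by
      rcases hts.lt_or_eq with h | h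
      · exact h
      exfalso
      rw [← h, hu.init, hu.init] at hpos'
      nlinarith
    have hxy0 : 0 < ‖x - y‖ := by
      rcases hρn.lt_or_eq with h | h
      · exact h
      exfalso
      have : x = y := by rw [← sub_eq_zero, ← norm_eq_zero]; exact h.symm
      subst this
      simp at hpos'
      linarith
    have hxy1 : ‖x - y‖ < ρ0 := by
      rcases hxy.lt_or_eq with h | h
      · exact h
      exfalso
      have k1 := abs_le.1 (hτ t htt x (by linarith))
      have k2 := abs_le.1 (hτ t htt y (by linarith))
      rw [h] at hρx hff hpos'
      nlinarith
    have hxr1 : ‖x - x1‖ < r := by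
      rcases hxr.lt_or_eq with h | h
      · exact h
      exfalso
      have k1 := abs_le.1 (hMu t htt1 x)
      have k2 := abs_le.1 (hMu t htt1 y)
      rw [h] at hpos'
      have : 0 ≤ (a + 3 / 2 * ε) * ‖x - y‖ := by positivity
      linarith
    have hlm : IsLocalMax (fun z : Euc d × Euc d => u t z.1 - u t z.2
      - L * (‖z.1 - z.2‖ - M / 2 * ‖z.1 - z.2‖ ^ 2) - K * ‖z.1 - x1‖ ^ 2) (x, y) := by
      have c1 : Continuous (fun z : Euc d × Euc d => ‖z.1 - x1‖) := by fun_prop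
      have c2 : Continuous (fun z : Euc d × Euc d => ‖z.1 - z.2‖) := by fun_prop
      filter_upwards [(c1.tendsto (x, y)).eventually_lt_const hxr1,
        (c2.tendsto (x, y)).eventually_lt_const hxy1] with z h1 h2
      exact hmax (show (t, z) ∈ Icc s (s + τ) ×ˢ G from ⟨htt, h1.le, h2.le⟩)
    have htd := deriv_nonneg_of_left hts' ((hu.tdiff t hts' x).sub (hu.tdiff t hts' y)) (by
      intro σ hσ
      have := hmax (show (σ, x, y) ∈ Icc s (s + τ) ×ˢ G from ⟨⟨hσ.1.le, by linarith [hσ.2]⟩, hxr, hxy⟩)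
      simp only [hΨ, mem_setOf_eq] at this
      simp only [Pi.sub_apply]
      linarith)
    rw [deriv_sub (hu.tdiff t hts' x) (hu.tdiff t hts' y), hu.pde t hts' x, hu.pde t hts' y] at htd
    have e1 := A0_eq Q b t (u t) x
    have e2 := A0_eq Q b t (u t) y
    simp only [A0] at e1 e2
    rw [e1, e2] at htd
    obtain ⟨l1, l2, l3⟩ := hΛ t hts' htt1.2 x (hnb x (by linarith))
    obtain ⟨-, l4, -⟩ := hΛ t hts' htt1.2 y (hnb y hy3')
    refine doubled_contra (Qx := Q t x) (Qy := Q t y) (bx := WithLp.toLp 2 (b t x))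
      (b' := WithLp.toLp 2 (b t y)) (hu.xdiff t hts') hL0 hM0 hK0 hxy0 hlm hΛ0 (hA.qs t hts' x) (hA.qs t hts' y)
      (hA.ell t hts' x) (hA.ell t hts' y) hA.ν0 (l3 y (hnb y hy3')) (hxy.trans hρν) ?_ ?_
      (by linarith) l2 l4 l1 hM ?_
    · refine le_trans ?_ hρΛ
      gcongr
    · refine le_trans ?_ hρM2
      gcongr
    · exact htd
  intro t ht1 ht2 y hy
  have := main (t, x1, y) ⟨⟨ht1.le, ht2⟩, by simpa using hr.le, hy⟩
  simp only [hΨ, sub_self, norm_zero] at this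
  have h3 : 0 ≤ L * (M / 2 * ‖x1 - y‖ ^ 2) := by positivity
  nlinarith

theorem init_grad {d : ℕ} {s : ℝ} {Q : ℝ → Euc d → Fin d → Fin d → ℝ} {b : ℝ → Euc d → Fin d → ℝ}
    {ν₀ : ℝ} (hA : Amb s Q b ν₀) {u : ℝ → Euc d → ℝ} {f : Euc d → ℝ}
    (hu : IsClassicalSolution d Q b (fun _ _ => 0) s f u) (hub : BoundedOnStrips d s u)
    (hf : ContDiff ℝ 1 f) (x0 : Euc d) {ε : ℝ} (hε : 0 < ε) :
    ∃ δ > 0, ∀ t, s < t → t ≤ s + δ → ∀ x, ‖x - x0‖ < δ →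
      ‖fderiv ℝ (u t) x‖ ≤ ‖fderiv ℝ f x0‖ + 2 * ε := by
  set a := ‖fderiv ℝ f x0‖ with ha
  have ha0 : 0 ≤ a := norm_nonneg _
  have hfc : Continuous (fun x => ‖fderiv ℝ f x‖) := (hf.continuous_fderiv (by norm_num)).norm
  obtain ⟨r0, hr0, hr0'⟩ := Metric.eventually_nhds_iff.1
    ((hfc.tendsto x0).eventually_lt_const (show ‖fderiv ℝ f x0‖ < a + ε by linarith))
  set r := min (r0 / 3) 1 with hrd
  have hr : 0 < r := by positivity
  have hr1 : r ≤ 1 := min_le_right _ _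
  have hr3 : 3 * r ≤ r0 := by linarith [min_le_left (r0 / 3) 1]
  have hfl : ∀ x, ‖x - x0‖ < 3 * r → ∀ y, ‖y - x0‖ < 3 * r → f x - f y ≤ (a + ε) * ‖x - y‖ := by
    intro x hx y hy
    have := (convex_ball x0 r0).norm_image_sub_le_of_norm_fderiv_le (𝕜 := ℝ) (f := f) (C := a + ε)
      (fun z _ => (hf.differentiable (by norm_num)) z) (fun z hz => (hr0' (Metric.mem_ball.1 hz)).le)
      (x := y) (y := x) (by rw [Metric.mem_ball, dist_eq_norm]; linarith)
      (by rw [Metric.mem_ball, dist_eq_norm]; linarith)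
    exact (le_abs_self _).trans this
  obtain ⟨Mu, hMu⟩ := hub (s + 1) (by linarith)
  have hMu0 : 0 ≤ Mu := (abs_nonneg _).trans (hMu s ⟨le_rfl, by linarith⟩ x0)
  obtain ⟨Λ, hΛ0, hΛ⟩ := hA.loc (‖x0‖ + 3)
  set L := a + 2 * ε with hL
  have hL0 : 0 < L := by positivity
  set K := 2 * Mu / r ^ 2 with hK
  have hK0 : 0 ≤ K := by positivity
  have hν := hA.ν0
  set M := (4 * L * d + 2 * L * Λ + 4 * K * Λ + 1) / (L * ν₀) with hM
  have hM0 : 0 ≤ M := by positivity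
  have hM1 : 4 * L * d + 2 * L * Λ + 4 * K * Λ < L * M * ν₀ := by
    have : L * M * ν₀ = 4 * L * d + 2 * L * Λ + 4 * K * Λ + 1 := by
      rw [hM]; field_simp
    linarith
  obtain ⟨ρ0, hρ0, k1, k2, k3, k4, k5⟩ : ∃ ρ0 : ℝ, 0 < ρ0 ∧ ρ0 < r ∧ L * M * ρ0 ≤ ε ∧ M * ρ0 ≤ 1 ∧
      ρ0 ≤ ν₀ / 2 ∧ ρ0 * Λ ^ 2 * d ^ 2 ≤ ν₀ := by
    have ev : ∀ c e : ℝ, 0 < e → ∀ᶠ ρ in 𝓝[>] (0:ℝ), c * ρ ≤ e := by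
      intro c e he
      have : Tendsto (fun ρ : ℝ => c * ρ) (𝓝[>] 0) (𝓝 0) := by
        have h : Continuous (fun ρ : ℝ => c * ρ) := by fun_prop
        have := h.tendsto 0
        simp only [mul_zero] at this
        exact this.mono_left nhdsWithin_le_nhds
      exact (this.eventually_lt_const he).mono fun _ h => h.le
    obtain ⟨ρ, h⟩ := ((((((ev 2 r hr).and (ev (L * M) ε hε)).and (ev M 1 one_pos)).and
      (ev 1 (ν₀ / 2) (by positivity))).and (ev (Λ ^ 2 * d ^ 2) ν₀ hν)).and
      (self_mem_nhdsWithin (a := (0:ℝ)) (s := Ioi 0))).exists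
    obtain ⟨⟨⟨⟨⟨h1, h2⟩, h3⟩, h4⟩, h5⟩, h6⟩ := h
    have h6' : 0 < ρ := h6
    exact ⟨ρ, h6', by linarith, h2, h3, by linarith, by linarith⟩
  obtain ⟨τ, hτ0, hτ1, hτ⟩ : ∃ τ : ℝ, 0 < τ ∧ τ ≤ 1 ∧
      ∀ t ∈ Icc s (s + τ), ∀ x, ‖x - x0‖ ≤ 3 → |u t x - f x| ≤ ε * ρ0 / 4 := by
    have hc : IsCompact (Icc s (s + 1) ×ˢ Metric.closedBall x0 3) :=
      isCompact_Icc.prod (isCompact_closedBall _ _)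
    have huc := hc.uniformContinuousOn_of_continuous
      (hu.cont.mono (fun p hp => ⟨hp.1.1, trivial⟩))
    obtain ⟨δ, hδ, h⟩ := Metric.uniformContinuousOn_iff.1 huc (ε * ρ0 / 4) (by positivity)
    refine ⟨min (δ / 2) 1, by positivity, min_le_right _ _, fun t ht x hx => ?_⟩
    have hδ2 := min_le_left (δ / 2) 1
    have hδ1 := min_le_right (δ / 2) 1
    have hxb : x ∈ Metric.closedBall x0 3 := by rwa [Metric.mem_closedBall, dist_eq_norm]
    have := h (t, x) ⟨⟨ht.1, by linarith [ht.2]⟩, hxb⟩ (s, x) ⟨⟨le_rfl, by simp⟩, hxb⟩ (by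
      rw [Prod.dist_eq]
      simp only [dist_self, Real.dist_eq]
      rw [abs_of_nonneg (by linarith [ht.1])]
      refine max_lt ?_ hδ
      linarith [ht.2])
    simp only [Real.dist_eq, hu.init] at this
    exact this.le
  have claim := fun x1 (h : ‖x1 - x0‖ < r) => init_doubling hA hu hr hr1 hMu hε ha0 hfl hΛ0 hΛ hL
    (K := K) (by rw [hK]; field_simp; exact le_rfl) hK0 hM0 hM1 hρ0 k1 k2 k3 k4 k5 hτ0 hτ1 hτ h
  refine ⟨min τ r, by positivity, fun t ht1 ht2 x hx => ?_⟩
  have hxr : ‖x - x0‖ < r := hx.trans_le (min_le_right _ _)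
  have htτ : t ≤ s + τ := by linarith [min_le_left τ r]
  refine (((hu.xdiff t ht1).differentiable (by norm_num)) x).hasFDerivAt.le_of_lip' hL0.le ?_
  have c1 : Continuous (fun y => ‖y - x0‖) := by fun_prop
  have c2 : Continuous (fun y => ‖x - y‖) := by fun_prop
  filter_upwards [(c1.tendsto x).eventually_lt_const hxr,
    (c2.tendsto x).eventually_lt_const (show ‖x - x‖ < ρ0 by simpa using hρ0)] with y h1 h2
  have q1 := claim x hxr t ht1 htτ y h2.le
  have q2 := claim y h1 t ht1 htτ x (by rw [norm_sub_rev]; exact h2.le)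
  rw [norm_sub_rev] at q1
  rw [Real.norm_eq_abs, abs_le]
  constructor <;> linarith

theorem minEig_le {d : ℕ} {A : Fin d → Fin d → ℝ} (h : 0 < minEig d A) (ξ : Fin d → ℝ) :
    minEig d A * ∑ i, ξ i ^ 2 ≤ ∑ i, ∑ j, A i j * ξ i * ξ j := by
  set S := {r : ℝ | ∃ ξ : Euc d, ‖ξ‖ = 1 ∧ (∑ i, ∑ j, A i j * ξ i * ξ j) = r} with hS
  have hbb : BddBelow S := by
    by_contra hb
    have : minEig d A = 0 := Real.sInf_of_not_bddBelow hb
    linarith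
  set x : Euc d := WithLp.toLp 2 ξ with hx
  have hxi : ∀ i, x i = ξ i := fun i => rfl
  have hns : ‖x‖ ^ 2 = ∑ i, ξ i ^ 2 := by rw [EuclideanSpace.real_norm_sq_eq]
  by_cases h0 : ‖x‖ = 0
  · have hz : x = 0 := norm_eq_zero.1 h0
    have : ∀ i, ξ i = 0 := fun i => by rw [← hxi, hz]; rfl
    simp [this]
  have hpos : 0 < ‖x‖ := lt_of_le_of_ne (norm_nonneg _) (Ne.symm h0)
  have hm : minEig d A ≤ ∑ i, ∑ j, A i j * (‖x‖⁻¹ • x) i * (‖x‖⁻¹ • x) j := by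
    refine csInf_le hbb ⟨‖x‖⁻¹ • x, ?_, rfl⟩
    rw [norm_smul, norm_inv, norm_norm, inv_mul_cancel₀ h0]
  have e : ∑ i, ∑ j, A i j * (‖x‖⁻¹ • x) i * (‖x‖⁻¹ • x) j = (‖x‖ ^ 2)⁻¹ * ∑ i, ∑ j, A i j * ξ i * ξ j := by
    simp only [Finset.mul_sum]
    refine Finset.sum_congr rfl fun i _ => Finset.sum_congr rfl fun j _ => ?_
    simp only [PiLp.smul_apply, hxi, smul_eq_mul]
    field_simp
  rw [e, inv_mul_eq_div, le_div_iff₀ (by positivity), hns] at hm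
  exact hm

theorem LocHolderParab.continuousOn {d : ℕ} {α : ℝ} (hα : 0 < α) {I : Set ℝ}
    (hI : ∀ ⦃t t' : ℝ⦄, t ∈ I → t ≤ t' → t' ∈ I) {g : ℝ → Euc d → ℝ} (hg : LocHolderParab d α I g)
    {s : ℝ} (hs : s ∈ I) :
    ContinuousOn (fun p : ℝ × Euc d => g p.1 p.2) (Ici s ×ˢ univ) := by
  rintro ⟨t, x⟩ ⟨ht, -⟩
  have ht : s ≤ t := ht
  obtain ⟨C, hC, h⟩ := hg (Icc s (t + 1) ×ˢ Metric.closedBall x 1)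
    (isCompact_Icc.prod (isCompact_closedBall _ _)) (fun p hp => ⟨hI hs hp.1.1, trivial⟩)
  have hz : Tendsto (fun q : ℝ × Euc d => C * pdist d q (t, x) ^ α) (𝓝[Ici s ×ˢ univ] (t, x)) (𝓝 0) := by
    have c1 : Continuous (fun q : ℝ × Euc d => pdist d q (t, x)) := by
      unfold pdist; fun_prop
    have c2 := ((c1.rpow_const (p := α) (fun q => Or.inr hα.le)).const_mul C).tendsto (t, x)
    have : C * pdist d (t, x) (t, x) ^ α = 0 := by simp [pdist, Real.zero_rpow hα.ne']
    rw [this] at c2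
    exact c2.mono_left nhdsWithin_le_nhds
  rw [ContinuousWithinAt, tendsto_iff_dist_tendsto_zero]
  refine squeeze_zero' (Eventually.of_forall fun _ => dist_nonneg) ?_ hz
  have hn : Iio (t + 1) ×ˢ Metric.ball x 1 ∈ 𝓝 (t, x) :=
    (isOpen_Iio.prod Metric.isOpen_ball).mem_nhds ⟨by simp, Metric.mem_ball_self one_pos⟩
  filter_upwards [self_mem_nhdsWithin, mem_nhdsWithin_of_mem_nhds hn] with q h1 h2
  rw [Real.dist_eq]
  refine h q ⟨⟨h1.1, le_of_lt h2.1⟩, Metric.ball_subset_closedBall h2.2⟩ (t, x)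
    ⟨⟨ht, by simp⟩, Metric.mem_closedBall_self zero_le_one⟩

theorem opNorm_le_pd {d : ℕ} (L : Euc d →L[ℝ] ℝ) {Λ : ℝ} (hΛ : 0 ≤ Λ)
    (h : ∀ k, |L (EuclideanSpace.single k 1)| ≤ Λ) : ‖L‖ ≤ d * Λ := by
  refine L.opNorm_le_bound (by positivity) fun ξ => ?_
  rw [fderiv_eq_sum, Real.norm_eq_abs]
  refine (Finset.abs_sum_le_sum_abs _ _).trans ?_
  have : ∀ i ∈ Finset.univ, |ξ i * L (EuclideanSpace.single i 1)| ≤ ‖ξ‖ * Λ := by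
    intro i _
    rw [abs_mul]
    refine mul_le_mul ?_ (h i) (abs_nonneg _) (norm_nonneg _)
    have := PiLp.norm_apply_le ξ i
    rwa [Real.norm_eq_abs] at this
  refine (Finset.sum_le_sum this).trans_eq ?_
  simp; ring

theorem mkAmb {d : ℕ} {I : Set ℝ}
    (hI : ∀ ⦃t t' : ℝ⦄, t ∈ I → t ≤ t' → t' ∈ I)
    {Q : ℝ → Euc d → Fin d → Fin d → ℝ} {b : ℝ → Euc d → Fin d → ℝ}
    {α : ℝ} (hα : α ∈ Ioo (0:ℝ) 1)
    (hQhold : ∀ i j, LocHolderParab d α I (fun t x => Q t x i j))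
    (hbhold : ∀ j, LocHolderParab d α I (fun t x => b t x j))
    (hsymm : ∀ t ∈ I, ∀ x : Euc d, ∀ i j, Q t x i j = Q t x j i)
    {ν₀ : ℝ} (hν₀ : 0 < ν₀) (hell : ∀ t ∈ I, ∀ x : Euc d, ν₀ ≤ minEig d (Q t x))
    (hQdiff : ∀ t ∈ I, ∀ (x : Euc d) (i j : Fin d),
      DifferentiableAt ℝ (fun y => Q t y i j) x)
    (hbdiff : ∀ t ∈ I, ∀ (x : Euc d) (j : Fin d),
      DifferentiableAt ℝ (fun y => b t y j) x)
    (hgradHold : ∃ α' ∈ Ioo (0:ℝ) 1,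
      (∀ i j k, LocHolderParab d α' I
        (fun t x => fderiv ℝ (fun y => Q t y i j) x (EuclideanSpace.single k 1))) ∧
      (∀ j k, LocHolderParab d α' I
        (fun t x => fderiv ℝ (fun y => b t y j) x (EuclideanSpace.single k 1))))
    {s : ℝ} (hs : s ∈ I) : Amb s Q b ν₀ := by
  obtain ⟨α', hα', hgQ, hgb⟩ := hgradHold
  have hsub : Ioi s ×ˢ (univ : Set (Euc d)) ⊆ Ici s ×ˢ univ := prod_mono Ioi_subset_Ici_self subset_rfl
  have hsI : ∀ t, s < t → t ∈ I := fun t ht => hI hs ht.le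
  have hQc := fun i j => (hQhold i j).continuousOn hα.1 hI hs
  have hbc := fun j => (hbhold j).continuousOn hα.1 hI hs
  have hQg := fun i j k => (hgQ i j k).continuousOn hα'.1 hI hs
  have hbg := fun j k => (hgb j k).continuousOn hα'.1 hI hs
  have hel : ∀ t, s < t → ∀ x (ξ : Fin d → ℝ), ν₀ * ∑ i, ξ i ^ 2 ≤ ∑ i, ∑ j, Q t x i j * ξ i * ξ j := by
    intro t ht x ξ
    have h := hell t (hsI t ht) x
    refine le_trans ?_ (minEig_le (hν₀.trans_le h) ξ)
    exact mul_le_mul_of_nonneg_right h (Finset.sum_nonneg fun i _ => sq_nonneg _)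
  refine
    { qs := fun t ht => hsymm t (hsI t ht)
      qp := ?_
      qc := fun i j => (hQc i j).mono hsub
      qd := fun i j t ht x => hQdiff t (hsI t ht) x i j
      qg := fun i j k => (hQg i j k).mono hsub
      bc := fun j => (hbc j).mono hsub
      bd := fun j t ht x => hbdiff t (hsI t ht) x j
      bg := fun j k => (hbg j k).mono hsub
      ν0 := hν₀
      ell := hel
      loc := ?_ }
  · intro t ht x ξ
    exact (mul_nonneg hν₀.le (Finset.sum_nonneg fun i _ => sq_nonneg _)).trans (hel t ht x ξ)
  intro R
  have hK : IsCompact (Icc s (s + 1) ×ˢ Metric.closedBall (0 : Euc d) R) :=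
    isCompact_Icc.prod (isCompact_closedBall _ _)
  have hKs : Icc s (s + 1) ×ˢ Metric.closedBall (0 : Euc d) R ⊆ Ici s ×ˢ univ :=
    prod_mono Icc_subset_Ici_self (subset_univ _)
  have bd : ∀ F : ℝ × Euc d → ℝ, ContinuousOn F (Ici s ×ˢ univ) → ∃ Λ : ℝ, 0 ≤ Λ ∧
      ∀ t, s < t → t ≤ s + 1 → ∀ x : Euc d, ‖x‖ ≤ R → |F (t, x)| ≤ Λ := by
    intro F hF
    obtain ⟨Λ, h⟩ := hK.exists_bound_of_continuousOn (hF.mono hKs)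
    refine ⟨max Λ 0, le_max_right _ _, fun t h1 h2 x hx => ?_⟩
    exact (h (t, x) ⟨⟨h1.le, h2⟩, by simpa using hx⟩).trans (le_max_left _ _)
  obtain ⟨Λ1, hΛ1, h1⟩ := bd (fun p => ∑ i, Q p.1 p.2 i i)
    (continuousOn_finsetSum _ fun i _ => hQc i i)
  obtain ⟨Λ2, hΛ2, h2⟩ := bd (fun p => ‖(WithLp.toLp 2 (b p.1 p.2) : Euc d)‖) (by
    simp only [EuclideanSpace.norm_eq]
    refine ContinuousOn.sqrt (continuousOn_finsetSum _ fun i _ => ?_)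
    exact ((hbc i).norm).pow 2)
  have h3 := fun i j k => bd (fun p => pd (fun y => Q p.1 y i j) k p.2) (hQg i j k)
  choose Λ3 hΛ3 h3 using h3
  set Λ4 := ∑ i, ∑ j, ∑ k, Λ3 i j k with hΛ4
  have hn1 : ∀ i j, 0 ≤ ∑ k, Λ3 i j k := fun i j => Finset.sum_nonneg fun k _ => hΛ3 i j k
  have hn2 : ∀ i, 0 ≤ ∑ j, ∑ k, Λ3 i j k := fun i => Finset.sum_nonneg fun j _ => hn1 i j
  have hΛ40 : 0 ≤ Λ4 := Finset.sum_nonneg fun i _ => hn2 i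
  have hle : ∀ i j k, Λ3 i j k ≤ Λ4 := fun i j k =>
    ((Finset.single_le_sum (f := fun k => Λ3 i j k) (fun k _ => hΛ3 i j k) (Finset.mem_univ k)).trans
    (Finset.single_le_sum (f := fun j => ∑ k, Λ3 i j k) (fun j _ => hn1 i j) (Finset.mem_univ j))).trans
    (Finset.single_le_sum (f := fun i => ∑ j, ∑ k, Λ3 i j k) (fun i _ => hn2 i) (Finset.mem_univ i))
  have hdΛ : 0 ≤ d * Λ4 := by positivity
  refine ⟨Λ1 + Λ2 + d * Λ4, by positivity, fun t ht1 ht2 x hx => ⟨?_, ?_, fun y hy i j => ?_⟩⟩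
  · linarith [(abs_le.1 (h1 t ht1 ht2 x hx)).2]
  · linarith [(abs_le.1 (h2 t ht1 ht2 x hx)).2]
  · have := (convex_closedBall (0 : Euc d) R).norm_image_sub_le_of_norm_fderiv_le (𝕜 := ℝ)
      (f := fun y => Q t y i j) (C := d * Λ4)
      (fun z _ => hQdiff t (hsI t ht1) z i j) (fun z hz => opNorm_le_pd _ hΛ40 fun k =>
        (h3 i j k t ht1 ht2 z (by simpa using hz)).trans (hle i j k))
      (x := y) (y := x) (by simpa using hy) (by simpa using hx)
    refine (show |Q t x i j - Q t y i j| ≤ d * Λ4 * ‖x - y‖ from this).trans ?_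
    exact mul_le_mul_of_nonneg_right (by linarith) (norm_nonneg _)

theorem norm_clm_sq {d : ℕ} (L : Euc d →L[ℝ] ℝ) :
    ‖L‖ ^ 2 = ∑ k, L (EuclideanSpace.single k 1) * L (EuclideanSpace.single k 1) := by
  set w := (InnerProductSpace.toDual ℝ (Euc d)).symm L with hw
  have h1 : ‖w‖ = ‖L‖ := LinearIsometryEquiv.norm_map _ _
  have h2 : ∀ k, w k = L (EuclideanSpace.single k 1) := by
    intro k
    have := InnerProductSpace.toDual_symm_apply (𝕜 := ℝ) (E := Euc d) (x := EuclideanSpace.single k 1) (y := L)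
    rw [← this, ← hw, EuclideanSpace.inner_single_right]
    simp
  rw [← h1, EuclideanSpace.real_norm_sq_eq]
  exact Finset.sum_congr rfl fun k _ => by rw [h2, sq]

theorem unif_init {d : ℕ} {s R : ℝ} {P : ℝ → Euc d → Prop}
    (h : ∀ x0 : Euc d, ∃ δ > 0, ∀ t, s < t → t ≤ s + δ → ∀ x, ‖x - x0‖ < δ → P t x) :
    ∃ δ > 0, ∀ t, s < t → t ≤ s + δ → ∀ x : Euc d, ‖x‖ ≤ R → P t x := by
  have := (isCompact_closedBall (0 : Euc d) R).induction_on
    (p := fun S => ∃ δ > 0, ∀ t, s < t → t ≤ s + δ → ∀ x ∈ S, P t x)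
    ⟨1, one_pos, by simp⟩
    (fun S S' hS ⟨δ, h1, h2⟩ => ⟨δ, h1, fun t a b x hx => h2 t a b x (hS hx)⟩)
    (by
      rintro S S' ⟨δ, h1, h2⟩ ⟨δ', h1', h2'⟩
      refine ⟨min δ δ', lt_min h1 h1', fun t a b x hx => ?_⟩
      rcases hx with hx | hx
      · exact h2 t a (b.trans (by linarith [min_le_left δ δ'])) x hx
      · exact h2' t a (b.trans (by linarith [min_le_right δ δ'])) x hx)
    (by
      intro x _
      obtain ⟨δ, h1, h2⟩ := h x
      refine ⟨Metric.ball x δ, mem_nhdsWithin_of_mem_nhds (Metric.ball_mem_nhds x h1), δ, h1,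
        fun t a b y hy => h2 t a b y ?_⟩
      rwa [Metric.mem_ball, dist_eq_norm] at hy)
  obtain ⟨δ, h1, h2⟩ := this
  exact ⟨δ, h1, fun t a b x hx => h2 t a b x (by simpa using hx)⟩

/-- squared Frobenius norm -/
def fro {d : ℕ} (H : Fin d → Fin d → ℝ) : ℝ := ∑ k, ∑ i, H k i ^ 2

theorem fro_nonneg {d : ℕ} (H : Fin d → Fin d → ℝ) : 0 ≤ fro H :=
  Finset.sum_nonneg fun _ _ => Finset.sum_nonneg fun _ _ => sq_nonneg _

theorem alg_i {d : ℕ} {A H : Fin d → Fin d → ℝ} (h : 0 < minEig d A) :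
    minEig d A * fro H ≤ ∑ k, qf A (H k) (H k) := by
  unfold fro
  rw [Finset.mul_sum]
  exact Finset.sum_le_sum fun k _ => minEig_le h (H k)

theorem sum_abs_fro {d : ℕ} (H : Fin d → Fin d → ℝ) : ∑ i, ∑ j, |H i j| ≤ d * √(fro H) := by
  refine abs_le_of_sq_le_sq' ?_ (by positivity) |>.2
  rw [mul_pow, Real.sq_sqrt (fro_nonneg H)]
  have h1 := sq_sum_le_card_mul_sum_sq (s := Finset.univ) (f := fun i => ∑ j, |H i j|)
  refine h1.trans ?_
  have h2 : ∑ i, (∑ j, |H i j|) ^ 2 ≤ d * fro H := by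
    unfold fro
    rw [Finset.mul_sum]
    exact Finset.sum_le_sum fun i _ => sum_abs_sq_le (H i)
  simp only [Finset.card_univ, Fintype.card_fin]
  calc (d:ℝ) * _ ≤ d * (d * fro H) := mul_le_mul_of_nonneg_left h2 (Nat.cast_nonneg d)
    _ = _ := by ring

theorem alg_src {d : ℕ} {Q : ℝ → Euc d → Fin d → Fin d → ℝ} {b : ℝ → Euc d → Fin d → ℝ}
    {u : ℝ → Euc d → ℝ} {t : ℝ} {x : Euc d} {c r : ℝ}
    (hc : ∀ i j, ‖fderiv ℝ (fun y => Q t y i j) x‖ ≤ c)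
    (hJac : ∀ (ξ : Euc d),
      (∑ i, ∑ j, fderiv ℝ (fun y => b t y i) x (EuclideanSpace.single j 1) * ξ i * ξ j) ≤
        r * ‖ξ‖ ^ 2) (g : Fin d → ℝ) (hg : g = fun k => pd (u t) k x) {G : ℝ} (hG : 0 ≤ G)
    (hG2 : ∑ k, g k * g k = G ^ 2) :
    ∑ k, g k * srcS Q b u t x k ≤ d * c * G * √(fro (hess d (u t) x)) + r * G ^ 2 := by
  set ξ : Euc d := WithLp.toLp 2 g with hξ
  have hξn : ‖ξ‖ = G := by
    rw [EuclideanSpace.norm_eq, ← Real.sqrt_sq hG, ← hG2]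
    congr 1
    exact Finset.sum_congr rfl fun i _ => by rw [Real.norm_eq_abs, sq_abs, sq]
  have hξi : ∀ i, ξ i = g i := fun i => rfl
  have h1 : ∑ k, g k * srcS Q b u t x k =
      (∑ i, ∑ j, fderiv ℝ (fun y => Q t y i j) x ξ * hess d (u t) x i j)
      + ∑ i, ∑ j, fderiv ℝ (fun y => b t y i) x (EuclideanSpace.single j 1) * ξ i * ξ j := by
    simp only [srcS, mul_add, Finset.sum_add_distrib]
    congr 1
    · simp only [fderiv_eq_sum _ ξ, Finset.mul_sum, Finset.sum_mul]
      rw [Finset.sum_comm]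
      refine Finset.sum_congr rfl fun i _ => ?_
      rw [Finset.sum_comm]
      refine Finset.sum_congr rfl fun j _ => Finset.sum_congr rfl fun k _ => ?_
      rw [hξi, pd]; ring
    · simp only [Finset.mul_sum]
      rw [Finset.sum_comm]
      refine Finset.sum_congr rfl fun j _ => Finset.sum_congr rfl fun k _ => ?_
      rw [hξi, hξi]
      simp only [hg, pd]
      ring
  have h2 : ∑ i, ∑ j, fderiv ℝ (fun y => Q t y i j) x ξ * hess d (u t) x i j ≤
      c * G * ∑ i, ∑ j, |hess d (u t) x i j| := by
    simp only [Finset.mul_sum]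
    refine Finset.sum_le_sum fun i _ => Finset.sum_le_sum fun j _ => ?_
    refine (le_abs_self _).trans ?_
    rw [abs_mul]
    refine mul_le_mul_of_nonneg_right ?_ (abs_nonneg _)
    have := (fderiv ℝ (fun y => Q t y i j) x).le_opNorm ξ
    rw [hξn, Real.norm_eq_abs] at this
    exact this.trans (mul_le_mul_of_nonneg_right (hc i j) hG)
  have h3 := hJac ξ
  rw [hξn] at h3
  rw [h1]
  rcases Nat.eq_zero_or_pos d with h0 | h0
  · subst h0; simp at h3 ⊢; exact h3
  have hc0 : 0 ≤ c := (norm_nonneg _).trans (hc ⟨0, h0⟩ ⟨0, h0⟩)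
  have h4 := mul_le_mul_of_nonneg_left (sum_abs_fro (hess d (u t) x)) (mul_nonneg hc0 hG)
  linarith

theorem alg_iv {d : ℕ} {A H : Fin d → Fin d → ℝ} (hs : ∀ i j, A i j = A j i)
    (hp : ∀ ξ : Fin d → ℝ, 0 ≤ ∑ i, ∑ j, A i j * ξ i * ξ j) (g : Fin d → ℝ) :
    qf A (fun i => ∑ k, g k * H k i) (fun i => ∑ k, g k * H k i) ≤
      (∑ k, g k * g k) * ∑ k, qf A (H k) (H k) := by
  obtain ⟨m, v, hv⟩ := psd_decomp A hs hp
  have e : ∀ ξ : Fin d → ℝ, qf A ξ ξ = ∑ l, (∑ i, v l i * ξ i) ^ 2 := by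
    intro ξ
    unfold qf
    have : ∀ l, (∑ i, v l i * ξ i) ^ 2 = ∑ i, ∑ j, v l i * v l j * ξ i * ξ j := by
      intro l
      rw [sq, Finset.sum_mul_sum]
      refine Finset.sum_congr rfl fun i _ => Finset.sum_congr rfl fun j _ => by ring
    simp only [this, hv, Finset.sum_mul]
    conv_rhs => rw [Finset.sum_comm]
    refine Finset.sum_congr rfl fun i _ => ?_
    rw [Finset.sum_comm]
  simp only [e]
  rw [Finset.sum_comm, Finset.mul_sum]
  refine Finset.sum_le_sum fun l _ => ?_
  have : ∑ i, v l i * ∑ k, g k * H k i = ∑ k, g k * ∑ i, v l i * H k i := by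
    simp only [Finset.mul_sum]
    rw [Finset.sum_comm]
    refine Finset.sum_congr rfl fun i _ => Finset.sum_congr rfl fun j _ => by ring
  rw [this]
  have := Finset.sum_mul_sq_le_sq_mul_sq Finset.univ g (fun k => ∑ i, v l i * H k i)
  simpa only [← sq] using this

theorem alg_v {d : ℕ} {A H : Fin d → Fin d → ℝ} (hs : ∀ i j, A i j = A j i) (g y : Fin d → ℝ) {G : ℝ}
    (hG : 0 ≤ G) (hG2 : ∑ k, g k * g k = G ^ 2) :
    |∑ k, g k * qf A y (H k)| ≤ √(∑ i, (∑ j, A i j * y j) ^ 2) * (G * √(fro H)) := by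
  set w : Fin d → ℝ := fun i => ∑ j, A i j * y j with hw
  have e : ∀ k, qf A y (H k) = ∑ i, w i * H k i := by
    intro k
    unfold qf
    rw [Finset.sum_comm]
    refine Finset.sum_congr rfl fun i _ => ?_
    rw [hw, Finset.sum_mul]
    exact Finset.sum_congr rfl fun j _ => by rw [hs]
  have h1 : (∑ k, g k * qf A y (H k)) ^ 2 ≤ (∑ i, w i ^ 2) * (G ^ 2 * fro H) := by
    refine (Finset.sum_mul_sq_le_sq_mul_sq Finset.univ g (fun k => qf A y (H k))).trans ?_
    have h2 : ∑ k, qf A y (H k) ^ 2 ≤ (∑ i, w i ^ 2) * fro H := by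
      unfold fro
      rw [Finset.mul_sum]
      refine Finset.sum_le_sum fun k _ => ?_
      rw [e]
      exact Finset.sum_mul_sq_le_sq_mul_sq Finset.univ w (H k)
    have h3 : ∑ k, g k ^ 2 = G ^ 2 := by simpa only [sq] using hG2
    rw [h3]
    calc _ ≤ G ^ 2 * ((∑ i, w i ^ 2) * fro H) := mul_le_mul_of_nonneg_left h2 (sq_nonneg _)
      _ = _ := by ring
  refine abs_le_of_sq_le_sq ?_ (by positivity)
  rw [mul_pow, mul_pow, Real.sq_sqrt (Finset.sum_nonneg fun i _ => sq_nonneg _),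
    Real.sq_sqrt (fro_nonneg H)]
  exact h1

def cut {d : ℕ} (c : ℝ) (x : Euc d) : ℝ := 1 + (-c) * ∑ k, x k * x k

theorem euc_sq {d : ℕ} (x : Euc d) : ∑ k, x k * x k = ‖x‖ ^ 2 := by
  rw [EuclideanSpace.real_norm_sq_eq]
  exact Finset.sum_congr rfl fun i _ => by rw [sq]

theorem coord_pd {d : ℕ} (k i : Fin d) :
    pd (fun x : Euc d => x k) i = fun _ => if k = i then (1:ℝ) else 0 := by
  funext x
  unfold pd
  have : (fun x : Euc d => x k) = (EuclideanSpace.proj k : Euc d →L[ℝ] ℝ) := rfl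
  rw [this, ContinuousLinearMap.fderiv]
  simp [EuclideanSpace.proj, PiLp.proj_apply]

theorem coord_diff {d : ℕ} (k : Fin d) : ContDiff ℝ 2 (fun x : Euc d => x k) :=
  (EuclideanSpace.proj k : Euc d →L[ℝ] ℝ).contDiff

theorem cut_diff {d : ℕ} (c : ℝ) : ContDiff ℝ 2 (cut (d := d) c) := by
  unfold cut
  exact contDiff_const.add (contDiff_const.mul
    (ContDiff.sum fun k _ => (coord_diff k).mul (coord_diff k)))

theorem cut_pd {d : ℕ} (c : ℝ) (i : Fin d) : pd (cut (d := d) c) i = fun x => -2 * c * x i := by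
  have h := fun k : Fin d => (coord_diff k).mul (coord_diff k)
  have hs := ContDiff.sum (s := Finset.univ) fun k _ => h k
  unfold cut
  rw [pd_add (by fun_prop) (C2.diff (contDiff_const.mul hs)), pd_const,
    pd_mul (by fun_prop) (C2.diff hs), pd_const, pd_sum (fun k => C2.diff (h k))]
  funext x
  simp only [pd_mul (C2.diff (coord_diff _)) (C2.diff (coord_diff _)), coord_pd]
  simp only [mul_ite, mul_one, mul_zero, ← two_mul, Finset.sum_ite_eq', Finset.mem_univ, if_true]
  ring

theorem cut_hess {d : ℕ} (c : ℝ) (x : Euc d) (i j : Fin d) :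
    hess d (cut (d := d) c) x i j = if j = i then -2 * c else 0 := by
  rw [hess_eq_pd, cut_pd, pd_mul (f := fun _ => -2 * c) (by fun_prop) (C2.diff (coord_diff j)), pd_const,
    coord_pd]
  simp

theorem A0_cut {d : ℕ} (Q : ℝ → Euc d → Fin d → Fin d → ℝ) (b : ℝ → Euc d → Fin d → ℝ) (t c : ℝ)
    (x : Euc d) : A0 Q b t (cut c) x = -2 * c * (∑ i, Q t x i i + ∑ i, b t x i * x i) := by
  rw [A0_eq]
  simp only [cut_hess, cut_pd, mul_ite, mul_zero, Finset.sum_ite_eq',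
    Finset.mem_univ, if_true, mul_add, Finset.mul_sum]
  congr 1
  · exact Finset.sum_congr rfl fun i _ => by ring
  · exact Finset.sum_congr rfl fun i _ => by ring

theorem step1_alg {ν ψ G h a k1 k2 : ℝ} (hν : 0 < ν) (hG : 0 < G)
    (ha : a = k1 + k2 ^ 2 + 1) (hk1 : 0 ≤ k1) {e : ℝ}
    (he : e ≤ ν * ((k1 - 2 * a) * G ^ 2 + k2 * G * (ψ * h) - 2 * (ψ * h) ^ 2)) : e < 0 := by
  refine he.trans_lt ?_
  refine mul_neg_of_pos_of_neg hν ?_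
  subst ha
  nlinarith [sq_nonneg (k2 * G - ψ * h), sq_nonneg (ψ * h), mul_pos hG hG, mul_nonneg hk1 (mul_pos hG hG).le,
    sq_nonneg (k2 * G)]

set_option maxHeartbeats 2000000 in
theorem step1 {d : ℕ} {s T : ℝ} {Q : ℝ → Euc d → Fin d → Fin d → ℝ} {b : ℝ → Euc d → Fin d → ℝ}
    {ν₀ : ℝ} (hA : Amb s Q b ν₀) {u : ℝ → Euc d → ℝ} {f : Euc d → ℝ}
    (hu : IsClassicalSolution d Q b (fun _ _ => 0) s f u) (hub : BoundedOnStrips d s u)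
    (hf : ContDiff ℝ 1 f) {Mf : ℝ} (hMf : ∀ x, ‖fderiv ℝ f x‖ ≤ Mf) (hT : s < T)
    {K1 K2 K3 K4 : ℝ} (hK1 : 0 ≤ K1) (hK2 : 0 ≤ K2) (hK4 : 0 ≤ K4)
    (hν : ∀ t, s < t → ∀ x, ν₀ ≤ minEig d (Q t x))
    (h1 : ∀ t, s < t → t ≤ T → ∀ x : Euc d, √(∑ i, (∑ j, Q t x i j * x j) ^ 2) + (∑ i, Q t x i i) ≤
        K1 * (1 + ‖x‖ ^ 2) * minEig d (Q t x))
    (h2 : ∀ t, s < t → t ≤ T → ∀ x : Euc d,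
      (∑ i, b t x i * x i) ≤ K2 * (1 + ‖x‖ ^ 2) * minEig d (Q t x))
    (h3 : ∀ t, s < t → t ≤ T → ∀ (x : Euc d) (i j : Fin d),
      ‖fderiv ℝ (fun y => Q t y i j) x‖ ≤ K3 * minEig d (Q t x))
    (h4 : ∀ t, s < t → t ≤ T → ∀ (x : Euc d) (ξ : Euc d),
      (∑ i, ∑ j, fderiv ℝ (fun y => b t y i) x (EuclideanSpace.single j 1) * ξ i * ξ j) ≤
        (K4 * minEig d (Q t x)) * ‖ξ‖ ^ 2) :
    ∃ N : ℝ, ∀ t, s < t → t ≤ T → ∀ x, ‖fderiv ℝ (u t) x‖ ^ 2 ≤ N := by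
  obtain ⟨Mu, hMu⟩ := hub T hT
  set k1 := 8 * (K1 + K2) + 2 * K4 with hk1
  set k2 := 2 * (d * K3) + 32 * K1 with hk2
  set a := k1 + k2 ^ 2 + 1 with ha
  have hk1' : 0 ≤ k1 := by positivity
  have ha0 : 0 < a := by positivity
  set N := a * Mu ^ 2 + (Mf + 1) ^ 2 with hN
  refine ⟨4 * N, fun t1 ht1 ht1T x1 => ?_⟩
  set R := 1 + 2 * ‖x1‖ with hR
  have hx1 := norm_nonneg x1
  have hR1 : 1 ≤ R := by linarith
  set c := 1 / R ^ 2 with hc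
  have hc0 : 0 < c := by positivity
  have hcR : c * R ^ 2 = 1 := by rw [hc]; field_simp
  have hc1 : c ≤ 1 := by
    rw [hc, div_le_one (by positivity)]; nlinarith
  have hψ : ∀ x : Euc d, cut c x = 1 - c * ‖x‖ ^ 2 := fun x => by
    unfold cut; rw [euc_sq]; ring
  have hψ1 : ∀ x : Euc d, cut c x ≤ 1 := fun x => by
    rw [hψ]; nlinarith [mul_nonneg hc0.le (sq_nonneg ‖x‖)]
  have hψ0 : ∀ x : Euc d, ‖x‖ ≤ R → 0 ≤ cut c x := fun x hx => by
    rw [hψ]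
    have : ‖x‖ ^ 2 ≤ R ^ 2 := pow_le_pow_left₀ (norm_nonneg x) hx 2
    nlinarith [mul_le_mul_of_nonneg_left this hc0.le]
  have hu2 : ∀ t, s < t → t ≤ T → ∀ x, u t x * u t x ≤ Mu ^ 2 := fun t ht hT x => by
    have := hMu t ⟨ht.le, hT⟩ x
    rw [← sq, ← sq_abs]
    exact pow_le_pow_left₀ (abs_nonneg _) this 2
  have hgs : ∀ t x, ∑ k, pd (u t) k x * pd (u t) k x = ‖fderiv ℝ (u t) x‖ ^ 2 := fun t x =>
    (norm_clm_sq _).symm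
  obtain ⟨δ, hδ, hδ'⟩ := unif_init (R := R) (s := s)
    (P := fun t x => ‖fderiv ℝ (u t) x‖ ≤ Mf + 1) (by
      intro x0
      obtain ⟨δ, h, h'⟩ := init_grad hA hu hub hf x0 (show (0:ℝ) < 1 / 2 by norm_num)
      exact ⟨δ, h, fun t ht ht' x hx => (h' t ht ht' x hx).trans (by linarith [hMf x0])⟩)
  set t0 := min (s + δ) t1 with ht0
  have hst0 : s < t0 := lt_min (by linarith) ht1
  have hCu := C12.ofSol hu
  have key := bernstein_max hA.toCoef hu (C12.ofSpace s ((cut_diff c).mul (cut_diff c)))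
    (((C12.const s a).mul (hCu.mul hCu)).add (C12.const s (-N))) (T := t1) (R := R) hst0 ?_ ?_ ?_
    t1 ⟨min_le_right _ _, le_rfl⟩ x1 (by linarith)
  · simp only [hgs] at key
    have hh : 1 / 2 ≤ cut c x1 := by
      rw [hψ]
      have : 2 * ‖x1‖ ^ 2 ≤ R ^ 2 := by rw [hR]; nlinarith
      nlinarith [mul_le_mul_of_nonneg_left this hc0.le]
    have : 1 / 4 ≤ cut c x1 * cut c x1 := by nlinarith
    have h5 := mul_le_mul_of_nonneg_right this (sq_nonneg ‖fderiv ℝ (u t1) x1‖)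
    have h6 : 0 ≤ a * (u t1 x1 * u t1 x1) := mul_nonneg ha0.le (mul_self_nonneg _)
    linarith
  · intro x hx
    simp only [hgs]
    have hb := hδ' t0 hst0 (min_le_left _ _) x hx
    have hb2 := pow_le_pow_left₀ (norm_nonneg _) hb 2
    have : cut c x * cut c x ≤ 1 := by nlinarith [hψ0 x hx, hψ1 x]
    have h5 := mul_le_mul_of_nonneg_right this (sq_nonneg ‖fderiv ℝ (u t0) x‖)
    have h6 := mul_le_mul_of_nonneg_left (hu2 t0 hst0 ((min_le_right _ _).trans ht1T) x) ha0.le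
    linarith
  · intro t ht x hx
    have : cut c x = 0 := by rw [hψ, hx, hcR]; ring
    rw [this]
    have h6 := mul_le_mul_of_nonneg_left (hu2 t (hst0.trans_le ht.1) (ht.2.trans ht1T) x) ha0.le
    nlinarith [sq_nonneg (Mf + 1)]
  · intro t ht x hx hpos hgrad hE
    have hst : s < t := hst0.trans ht.1
    have htT : t ≤ T := ht.2.trans ht1T
    set ν := minEig d (Q t x) with hνd
    have hνp : 0 < ν := hA.ν0.trans_le (hν t hst x)
    set G := ‖fderiv ℝ (u t) x‖ with hGd
    have hG0 : 0 ≤ G := norm_nonneg _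
    have h6 := mul_le_mul_of_nonneg_left (hu2 t hst htT x) ha0.le
    rw [hgs] at hpos
    have hGp : 0 < G := by
      rcases hG0.lt_or_eq with h | h
      · exact h
      · exfalso
        rw [← hGd, ← h] at hpos
        nlinarith [sq_nonneg (Mf + 1)]
    have hp0 := hψ0 x hx.le
    have hp1 := hψ1 x
    set ψ := cut c x with hψd
    set H := hess d (u t) x with hH
    set g : Fin d → ℝ := fun k => pd (u t) k x with hg
    have hG2 : ∑ k, g k * g k = G ^ 2 := hgs t x
    have hQs := hA.qs t hst x
    have hQp := hA.qp t hst x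
    have hcx : c * (1 + ‖x‖ ^ 2) ≤ 2 := by
      have : ‖x‖ ^ 2 ≤ R ^ 2 := pow_le_pow_left₀ (norm_nonneg x) hx.le 2
      nlinarith [mul_le_mul_of_nonneg_left this hc0.le]
    have hsx := Real.sqrt_nonneg (∑ i, (∑ j, Q t x i j * x j) ^ 2)
    have htr : 0 ≤ ∑ i, Q t x i i := by
      refine Finset.sum_nonneg fun i _ => ?_
      have := hQp (Pi.single i 1)
      simpa [Pi.single_apply] using this
    have a1 := h1 t hst htT x
    have a2 := h2 t hst htT x
    -- time derivative and operators
    have eη : deriv (fun τ : ℝ => cut c x * cut c x) t - A0 Q b t (fun x => cut c x * cut c x) x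
        ≤ 8 * (K1 + K2) * ν := by
      rw [deriv_const, A0_mul b (cut_diff c) (cut_diff c) x hQs, A0_cut]
      have q0 : 0 ≤ qf (Q t x) (fun i => pd (cut c) i x) (fun i => pd (cut c) i x) := hQp _
      have : c * (∑ i, Q t x i i + ∑ i, b t x i * x i) ≤ 2 * (K1 + K2) * ν := by
        have l1 : ∑ i, Q t x i i + ∑ i, b t x i * x i ≤ (K1 + K2) * ν * (1 + ‖x‖ ^ 2) := by
          rw [← hνd] at a1 a2
          linarith
        have l2 := mul_le_mul_of_nonneg_left l1 hc0.le
        have l3 : 0 ≤ (K1 + K2) * ν := by positivity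
        linarith [mul_le_mul_of_nonneg_left hcx l3]
      have l4 := mul_le_mul_of_nonneg_left this hp0
      have l5 : ψ * (2 * (K1 + K2) * ν) ≤ 1 * (2 * (K1 + K2) * ν) :=
        mul_le_mul_of_nonneg_right hp1 (by positivity)
      rw [← hψd]
      linarith
    have eY : deriv (fun τ : ℝ => a * (u τ x * u τ x) + -N) t
        - A0 Q b t (fun x => a * (u t x * u t x) + -N) x ≤ - (2 * a * (ν * G ^ 2)) := by
      have hux := hu.xdiff t hst
      have dt := hu.tdiff t hst x
      have e1 : deriv (fun τ : ℝ => a * (u τ x * u τ x) + -N) t = 2 * a * u t x * deriv (fun τ => u τ x) t := by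
        rw [deriv_add_const, deriv_const_mul _ (dt.fun_mul dt), deriv_fun_mul dt dt]; ring
      have e2 : A0 Q b t (fun x => a * (u t x * u t x) + -N) x =
          2 * a * u t x * A0 Q b t (u t) x + 2 * a * qf (Q t x) g g := by
        rw [A0_add Q b t (contDiff_const.mul (hux.mul hux)) contDiff_const, A0_const,
          A0_mul b (f := fun _ => a) contDiff_const (hux.mul hux) x hQs, A0_const,
          A0_mul b hux hux x hQs]
        have : qf (Q t x) (fun i => pd (fun _ => a) i x) (fun i => pd (fun x => u t x * u t x) i x) = 0 := by
          simp [qf, pd_const]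
        rw [this]; ring
      rw [e1, e2, hu.pde t hst x]
      have := minEig_le hνp g
      simp only [sq] at this
      rw [hG2] at this
      have : ν * G ^ 2 ≤ qf (Q t x) g g := this
      have := mul_le_mul_of_nonneg_left this (show 0 ≤ 2 * a by positivity)
      have e3 : Aop d Q b (fun _ _ => 0) t (u t) x = A0 Q b t (u t) x := rfl
      rw [e3]
      linarith
    have a3 := alg_src (h3 t hst htT x) (h4 t hst htT x) g hg hG0 hG2
    have a4 := alg_i (A := Q t x) (H := H) hνp
    have a5 := alg_v (H := H) hQs g (fun j => x j) hG0 hG2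
    set h := √(fro H) with hh
    have hh0 : 0 ≤ h := Real.sqrt_nonneg _
    have hh2 : fro H = h ^ 2 := (Real.sq_sqrt (fro_nonneg H)).symm
    rw [hh2] at a4
    have e3 : ∑ k, g k * qf (Q t x) (fun i => pd (fun x => cut c x * cut c x) i x) (H k) =
        (-4 * c * ψ) * ∑ k, g k * qf (Q t x) (fun j => x j) (H k) := by
      have : (fun i => pd (fun x : Euc d => cut c x * cut c x) i x) = fun i => (-4 * c * ψ) * x i := by
        funext i
        rw [pd_mul (C2.diff (cut_diff c)) (C2.diff (cut_diff c)), cut_pd]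
        ring
      rw [this, Finset.mul_sum]
      refine Finset.sum_congr rfl fun k _ => ?_
      rw [qf_smul_left (-4 * c * ψ) (fun j => x j)]; ring
    have t3 : -4 * ∑ k, g k * qf (Q t x) (fun i => pd (fun x => cut c x * cut c x) i x) (H k) ≤
        32 * K1 * ν * G * (ψ * h) := by
      rw [e3]
      have l1 := (le_abs_self _).trans a5
      have l2 : √(∑ i, (∑ j, Q t x i j * x j) ^ 2) ≤ K1 * ν * (1 + ‖x‖ ^ 2) := by
        rw [← hνd] at a1; linarith
      have l3 : c * √(∑ i, (∑ j, Q t x i j * x j) ^ 2) ≤ 2 * K1 * ν := by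
        have := mul_le_mul_of_nonneg_left l2 hc0.le
        have l3 : 0 ≤ K1 * ν := by positivity
        linarith [mul_le_mul_of_nonneg_left hcx l3]
      have l4 := mul_le_mul_of_nonneg_left l1 (show 0 ≤ 16 * c * ψ by positivity)
      have l5 := mul_le_mul_of_nonneg_right l3 (show 0 ≤ 16 * ψ * (G * h) by positivity)
      linarith
    have t2 : ψ * ψ * ∑ k, (2 * g k * srcS Q b u t x k - 2 * qf (Q t x) (H k) (H k)) ≤
        2 * (d * K3) * ν * G * (ψ * h) + 2 * K4 * ν * G ^ 2 - 2 * ν * (ψ * h) ^ 2 := by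
      have e : ∑ k, (2 * g k * srcS Q b u t x k - 2 * qf (Q t x) (H k) (H k)) =
          2 * ∑ k, g k * srcS Q b u t x k - 2 * ∑ k, qf (Q t x) (H k) (H k) := by
        rw [Finset.sum_sub_distrib, Finset.mul_sum, Finset.mul_sum]
        congr 1
        exact Finset.sum_congr rfl fun k _ => by ring
      rw [e]
      have hψψ : ψ * ψ ≤ ψ := mul_le_of_le_one_left hp0 hp1
      have hψψ1 : ψ * ψ ≤ 1 := by linarith
      have hK3 : 0 ≤ d * K3 := by
        rcases Nat.eq_zero_or_pos d with h0 | h0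
        · subst h0; simp
        have := (norm_nonneg _).trans (h3 t hst htT x ⟨0, h0⟩ ⟨0, h0⟩)
        have : 0 ≤ K3 := by
          by_contra hn
          push Not at hn
          exact absurd this (not_le.2 (mul_neg_of_neg_of_pos hn hνp))
        positivity
      have l1 : ψ * ψ * (2 * ∑ k, g k * srcS Q b u t x k - 2 * ∑ k, qf (Q t x) (H k) (H k)) ≤
          ψ * ψ * (2 * (d * (K3 * ν) * G * h + K4 * ν * G ^ 2) - 2 * (ν * h ^ 2)) :=
        mul_le_mul_of_nonneg_left (by linarith) (mul_nonneg hp0 hp0)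
      have l2 := mul_le_mul_of_nonneg_right hψψ (show 0 ≤ 2 * ((d * K3) * ν * G * h) by positivity)
      have l3 := mul_le_mul_of_nonneg_right hψψ1 (show 0 ≤ 2 * (K4 * ν * G ^ 2) by positivity)
      linarith
    have t1' := mul_le_mul_of_nonneg_right eη (sq_nonneg G)
    refine absurd hE (not_le.2 (step1_alg (ψ := ψ) (h := h) hνp hGp ha hk1' ?_))
    unfold Ebern
    dsimp only
    have e0 : ∑ k, pd (u t) k x * pd (u t) k x = G ^ 2 := hgs t x
    rw [e0]
    have t2' := t2
    have t3' := t3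
    simp only [hg] at t2' t3'
    linarith

theorem near_init {d : ℕ} {s : ℝ} {F : ℝ × Euc d → ℝ} (hF : ContinuousOn F (Ici s ×ˢ univ)) (x0 : Euc d)
    {m : ℝ} (hm : m < F (s, x0)) :
    ∃ δ > 0, ∀ t, s < t → t ≤ s + δ → ∀ x, ‖x - x0‖ < δ → m < F (t, x) := by
  have h := hF (s, x0) ⟨self_mem_Ici, trivial⟩
  have h2 := h.eventually (lt_mem_nhds hm)
  rw [Filter.Eventually, Metric.mem_nhdsWithin_iff] at h2
  obtain ⟨δ, hδ, h3⟩ := h2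
  refine ⟨δ / 2, by positivity, fun t ht ht' x hx => ?_⟩
  refine h3 ⟨?_, ht.le, trivial⟩
  rw [Metric.mem_ball, Prod.dist_eq]
  refine max_lt ?_ ?_
  · simp only; rw [Real.dist_eq, abs_of_pos (by linarith)]; linarith
  · simp only; rw [dist_eq_norm]; linarith

def zf {d : ℕ} (s lam ε : ℝ) (φ : Euc d → ℝ) (v : ℝ → Euc d → ℝ) (t : ℝ) (x : Euc d) : ℝ :=
  v t x + ε * Real.exp (lam * (t - s)) * φ x

theorem zf_C12 {d : ℕ} {s lam ε : ℝ} {φ : Euc d → ℝ} {v : ℝ → Euc d → ℝ} (hv : C12 s v)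
    (hφ : ContDiff ℝ 2 φ) : C12 s (zf s lam ε φ v) :=
  hv.add ((C12.ofTime s (g := fun t => ε * Real.exp (lam * (t - s))) (by fun_prop)).mul (C12.ofSpace s hφ))

theorem zf_ge {d : ℕ} {s lam ε : ℝ} {φ : Euc d → ℝ} {v : ℝ → Euc d → ℝ} (hφ0 : ∀ x, 0 < φ x) (hε : 0 < ε)
    (hlam : 0 < lam) {t : ℝ} (ht : s < t) (x : Euc d) : v t x + ε * φ x ≤ zf s lam ε φ v t x := by
  unfold zf
  have : 1 ≤ Real.exp (lam * (t - s)) := Real.one_le_exp (mul_nonneg hlam.le (by linarith))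
  have h2 := mul_le_mul_of_nonneg_right this (mul_pos hε (hφ0 x)).le
  linarith

theorem zf_op {d : ℕ} {s lam ε : ℝ} {Q : ℝ → Euc d → Fin d → Fin d → ℝ} {b : ℝ → Euc d → Fin d → ℝ}
    {φ f : Euc d → ℝ} {v : ℝ → Euc d → ℝ} (hv : IsClassicalSolution d Q b (fun _ _ => 0) s f v)
    (hC : Coef s Q b)
    (hφ : ContDiff ℝ 2 φ) (hε : 0 < ε) {t : ℝ} (ht : s < t) {x : Euc d}
    (hL : A0 Q b t φ x < lam * φ x) :
    0 < deriv (fun τ => zf s lam ε φ v τ x) t - A0 Q b t (zf s lam ε φ v t) x := by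
  have e1 : deriv (fun τ => zf s lam ε φ v τ x) t =
      deriv (fun τ => v τ x) t + ε * Real.exp (lam * (t - s)) * lam * φ x := by
    have h1 : HasDerivAt (fun τ => Real.exp (lam * (τ - s))) (Real.exp (lam * (t - s)) * (lam * 1)) t :=
      (((hasDerivAt_id t).sub_const s).const_mul lam).exp
    have h2 := (hv.tdiff t ht x).hasDerivAt.add ((h1.const_mul ε).mul_const (φ x))
    have := h2.deriv
    simp only [zf]
    refine this.trans ?_
    ring
  have e2 : A0 Q b t (zf s lam ε φ v t) x = A0 Q b t (v t) x + ε * Real.exp (lam * (t - s)) * A0 Q b t φ x := by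
    have : zf s lam ε φ v t = fun x => v t x + ((fun _ => ε * Real.exp (lam * (t - s))) x * φ x) := rfl
    rw [this, A0_add Q b t (hv.xdiff t ht) (contDiff_const.mul hφ),
      A0_mul b contDiff_const hφ x (hC.qs t ht x), A0_const]
    simp [qf, pd_const]
  rw [e1, e2, hv.pde t ht x]
  have : 0 < ε * Real.exp (lam * (t - s)) * (lam * φ x - A0 Q b t φ x) :=
    mul_pos (mul_pos hε (Real.exp_pos _)) (by linarith)
  have e3 : Aop d Q b (fun _ _ => 0) t (v t) x = A0 Q b t (v t) x := rfl
  rw [e3]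
  linarith

theorem v_nonneg {d : ℕ} {s T lam : ℝ} {Q : ℝ → Euc d → Fin d → Fin d → ℝ} {b : ℝ → Euc d → Fin d → ℝ}
    {φ f : Euc d → ℝ} {v : ℝ → Euc d → ℝ} (hv : IsClassicalSolution d Q b (fun _ _ => 0) s f v)
    (hvb : BoundedOnStrips d s v) (hf : ∀ x, 0 ≤ f x)
    (hC : Coef s Q b) (hT : s < T)
    (hφ : ContDiff ℝ 2 φ) (hφ0 : ∀ x, 0 < φ x)
    (hφi : ∀ M : ℝ, ∃ R : ℝ, ∀ x : Euc d, R ≤ ‖x‖ → M ≤ φ x) (hlam : 0 < lam)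
    (hL : ∀ t, s < t → t ≤ T → ∀ x, A0 Q b t φ x < lam * φ x) :
    ∀ t, s < t → t ≤ T → ∀ x, 0 ≤ v t x := by
  intro t1 ht1 ht1T x1
  obtain ⟨Mv, hMv⟩ := hvb T hT
  have main : ∀ ε : ℝ, 0 < ε → 0 ≤ zf s lam ε φ v t1 x1 := by
    intro ε hε
    obtain ⟨R0, hR0⟩ := hφi (Mv / ε)
    set R := max R0 ‖x1‖ with hR
    obtain ⟨δ, hδ, hδ'⟩ := unif_init (R := R) (s := s)
      (P := fun t x => 0 < v t x + ε * φ x) (fun x0 => near_init (s := s)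
        (F := fun p => v p.1 p.2 + ε * φ p.2)
        (hv.cont.add ((continuous_const.mul (hφ.continuous.comp continuous_snd)).continuousOn)) x0
        (by simp only [hv.init]; exact add_pos_of_nonneg_of_pos (hf x0) (mul_pos hε (hφ0 x0))))
    set t0 := min (s + δ) t1 with ht0
    have hst0 : s < t0 := lt_min (by linarith) ht1
    have hZ := zf_C12 (lam := lam) (ε := ε) (C12.ofSol hv) hφ
    have key := bernstein_max hC hv (C12.const s 0) ((C12.const s (-1)).mul hZ)
      (T := t1) (R := R) hst0 ?_ ?_ ?_
      t1 ⟨min_le_right _ _, le_rfl⟩ x1 (le_max_right _ _)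
    · linarith
    · intro x hx
      have := hδ' t0 hst0 (min_le_left _ _) x hx
      have := zf_ge (v := v) hφ0 hε hlam hst0 x
      linarith
    · intro t ht x hx
      have h1 := hR0 x (by rw [hx]; exact le_max_left _ _)
      rw [div_le_iff₀ hε] at h1
      have h2 := (abs_le.1 (hMv t ⟨(hst0.trans_le ht.1).le, ht.2.trans ht1T⟩ x)).1
      have := zf_ge (v := v) hφ0 hε hlam (hst0.trans_le ht.1) x
      linarith
    · intro t ht x hx hpos hgrad hE
      have hst : s < t := hst0.trans ht.1
      have h1 := zf_op hv hC hφ hε hst (hL t hst (ht.2.trans ht1T) x)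
      have e2 : A0 Q b t (fun x => (fun _ => (-1:ℝ)) x * zf s lam ε φ v t x) x =
          - A0 Q b t (zf s lam ε φ v t) x := by
        rw [A0_mul b contDiff_const (hZ.xdiff t hst) x (hC.qs t hst x), A0_const]
        simp [qf, pd_const]
      have e1 : deriv (fun τ => -1 * zf s lam ε φ v τ x) t = - deriv (fun τ => zf s lam ε φ v τ x) t := by
        rw [deriv_const_mul _ (hZ.tdiff t hst x)]; ring
      unfold Ebern at hE
      dsimp only at hE e2
      simp only [e1, e2, A0_const, deriv_const, pd_const, zero_mul, sub_zero, qf, mul_zero,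
        Finset.sum_const_zero] at hE
      linarith
  by_contra hneg
  push Not at hneg
  set e := Real.exp (lam * (t1 - s)) * φ x1 with he
  have he0 : 0 < e := mul_pos (Real.exp_pos _) (hφ0 x1)
  have := main (-v t1 x1 / (2 * e)) (div_pos (by linarith) (by positivity))
  unfold zf at this
  rw [mul_assoc, ← he] at this
  have e3 : -v t1 x1 / (2 * e) * e = -v t1 x1 / 2 := by field_simp
  rw [e3] at this
  linarith

theorem A0_rpow {d : ℕ} (Q : ℝ → Euc d → Fin d → Fin d → ℝ) (b : ℝ → Euc d → Fin d → ℝ)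
    {t : ℝ} {g : Euc d → ℝ} (hg : ContDiff ℝ 2 g) (hp : ∀ x, 0 < g x) (r : ℝ) (x : Euc d) :
    A0 Q b t (fun x => g x ^ r) x = r * g x ^ (r - 1) * A0 Q b t g x
      + r * (r - 1) * g x ^ (r - 2) * qf (Q t x) (fun i => pd g i x) (fun i => pd g i x) := by
  simp only [A0_eq, hess_rpow hg hp, pd_rpow (C2.diff hg) hp, qf, mul_add, Finset.mul_sum,
    Finset.sum_add_distrib]
  have : ∀ a b c : ℝ, a + b + c = a + c + b := fun a b c => by ring
  rw [this]
  congr 1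
  · congr 1
    · exact Finset.sum_congr rfl fun i _ => Finset.sum_congr rfl fun j _ => by ring
    · exact Finset.sum_congr rfl fun i _ => by ring
  · exact Finset.sum_congr rfl fun i _ => Finset.sum_congr rfl fun j _ => by ring

theorem eta_iff {p ω τ G Z : ℝ} (hp : 0 < p) (hG : 0 ≤ G) (hZ : 0 < Z) :
    Real.exp (-(2 / p * ω) * τ) * Z ^ (-(2 / p)) * G ^ 2 + -1 ≤ 0 ↔ G ^ p ≤ Real.exp (ω * τ) * Z := by
  have hq : 0 < 2 / p := by positivity
  have e1 : G ^ 2 = (G ^ p) ^ (2 / p) := by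
    rw [← Real.rpow_mul hG, mul_div_cancel₀ _ hp.ne']; simp
  have e2 : Real.exp (-(2 / p * ω) * τ) * Z ^ (-(2 / p)) = ((Real.exp (ω * τ) * Z) ^ (2 / p))⁻¹ := by
    rw [Real.mul_rpow (Real.exp_pos _).le hZ.le, Real.rpow_neg hZ.le, mul_inv, ← Real.exp_mul,
      ← Real.exp_neg]
    congr 2; ring
  have hpos : 0 < Real.exp (ω * τ) * Z := mul_pos (Real.exp_pos _) hZ
  have hpos2 := Real.rpow_pos_of_pos hpos (2 / p)
  rw [e1, e2, ← Real.rpow_le_rpow_iff (Real.rpow_nonneg hG p) hpos.le hq, inv_mul_eq_div]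
  constructor
  · intro h
    rw [← div_le_one hpos2]; linarith
  · intro h
    rw [← div_le_one hpos2] at h; linarith

theorem eta_op {d : ℕ} {s q ω : ℝ} {Q : ℝ → Euc d → Fin d → Fin d → ℝ} {b : ℝ → Euc d → Fin d → ℝ}
    {Z : ℝ → Euc d → ℝ} (hC : Coef s Q b) (hZ : C12 s Z) (hZ0 : ∀ t, s < t → ∀ x, 0 < Z t x)
    {t : ℝ} (ht : s < t) (x : Euc d)
    (hop : 0 < deriv (fun τ => Z τ x) t - A0 Q b t (Z t) x) (hq : 0 < q)
    {e : ℝ} (he : e = Real.exp (-(q * ω) * (t - s)) * Z t x ^ (-q)) {y : Fin d → ℝ}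
    (hy : y = fun i => pd (fun x => Real.exp (-(q * ω) * (t - s)) * Z t x ^ (-q)) i x) :
    deriv (fun τ => Real.exp (-(q * ω) * (τ - s)) * Z τ x ^ (-q)) t
      - A0 Q b t (fun x => Real.exp (-(q * ω) * (t - s)) * Z t x ^ (-q)) x
      < -(q * ω) * e - (q + 1) / q / e * qf (Q t x) y y := by
  have hz := hZ0 t ht x
  have hZx := hZ.xdiff t ht
  set E := Real.exp (-(q * ω) * (t - s)) with hE
  have hE0 : 0 < E := Real.exp_pos _
  set W := Z t x ^ (-q) with hW
  have hW0 : 0 < W := Real.rpow_pos_of_pos hz _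
  have r1 : Z t x ^ (-q - 1) = W / Z t x := by rw [Real.rpow_sub_one hz.ne']
  have r2 : Z t x ^ (-q - 2) = W / Z t x ^ 2 := by
    rw [Real.rpow_sub hz]; norm_num [hW]
  have e1 : deriv (fun τ => Real.exp (-(q * ω) * (τ - s)) * Z τ x ^ (-q)) t =
      -(q * ω) * (E * W) - q * E * (W / Z t x) * deriv (fun τ => Z τ x) t := by
    have h1 : HasDerivAt (fun τ => Real.exp (-(q * ω) * (τ - s))) (E * (-(q * ω) * 1)) t :=
      (((hasDerivAt_id t).sub_const s).const_mul (-(q * ω))).exp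
    have h2 := (hZ.tdiff t ht x).hasDerivAt.rpow_const (p := -q) (Or.inl hz.ne')
    refine (h1.mul h2).deriv.trans ?_
    rw [r1]; ring
  have hpw := contDiff_rpow hZx (hZ0 t ht) (-q)
  have e2 : A0 Q b t (fun x => E * Z t x ^ (-q)) x = E * (-q * (W / Z t x) * A0 Q b t (Z t) x
      + q * (q + 1) * (W / Z t x ^ 2) * qf (Q t x) (fun i => pd (Z t) i x) (fun i => pd (Z t) i x)) := by
    have := A0_mul (Q := Q) b (f := fun _ => E) contDiff_const hpw x (hC.qs t ht x)
    rw [this, A0_const, A0_rpow Q b hZx (hZ0 t ht), r1, r2]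
    simp only [pd_const]
    have : qf (Q t x) (fun _ => 0) (fun i => pd (fun x => Z t x ^ (-q)) i x) = 0 := by simp [qf]
    rw [this]; ring
  have e3 : y = fun i => (-(q * (E * W) / Z t x)) * pd (Z t) i x := by
    rw [hy]; funext i
    rw [pd_mul (f := fun _ => E) (by fun_prop) (C2.diff hpw), pd_const, pd_rpow (C2.diff hZx) (hZ0 t ht)]
    dsimp only
    rw [r1]; ring
  rw [e1, e2, e3, qf_smul_left, qf_smul_right, he]
  set X := qf (Q t x) (fun i => pd (Z t) i x) (fun i => pd (Z t) i x)
  set D := deriv (fun τ => Z τ x) t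
  set A := A0 Q b t (Z t) x
  have : 0 < q * E * (W / Z t x) * (D - A) := by positivity
  have e4 : (q + 1) / q / (E * W) * (-(q * (E * W) / Z t x) * (-(q * (E * W) / Z t x) * X)) =
      E * (q * (q + 1) * (W / Z t x ^ 2) * X) := by
    field_simp
  rw [e4]
  linarith

theorem step2_alg {p κ ω ν G h r c dd F M S : ℝ} (hp : 1 < p) (hκ : κ = min (p - 1) 1) (hν : 0 < ν)
    (hG : 0 < G) (hF : ν * h ^ 2 ≤ F) (hM : M ≤ G ^ 2 * F) (hM0 : 0 ≤ M)
    (hS : S ≤ dd * c * G * h + r * G ^ 2) (hst : r + dd ^ 2 * c ^ 2 / (4 * κ * ν) ≤ ω / p) :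
    -(2 / p * ω) * G ^ 2 + 2 * (2 - p) * (M / G ^ 2) + 2 * S - 2 * F ≤ 0 := by
  have hκ0 : 0 < κ := by rw [hκ]; exact lt_min (by linarith) one_pos
  have hG2 : 0 < G ^ 2 := by positivity
  have hF0 : 0 ≤ F := le_trans (by positivity) hF
  have hMG : M / G ^ 2 ≤ F := by rw [div_le_iff₀ hG2]; linarith
  have hMG0 : 0 ≤ M / G ^ 2 := by positivity
  have h1 : 2 * (2 - p) * (M / G ^ 2) - 2 * F ≤ - (2 * κ * F) := by
    rcases le_total p 2 with h | h
    · have : κ ≤ p - 1 := by rw [hκ]; exact min_le_left _ _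
      nlinarith
    · have : κ ≤ 1 := by rw [hκ]; exact min_le_right _ _
      nlinarith
  have h2 : 2 * (dd * c * G * h) ≤ 2 * κ * (ν * h ^ 2) + 2 * (dd ^ 2 * c ^ 2 / (4 * κ * ν)) * G ^ 2 := by
    have e : 2 * κ * (ν * h ^ 2) + 2 * (dd ^ 2 * c ^ 2 / (4 * κ * ν)) * G ^ 2 - 2 * (dd * c * G * h)
      = (2 * κ * ν * h - dd * c * G) ^ 2 / (2 * κ * ν) := by field_simp; ring
    have : 0 ≤ (2 * κ * ν * h - dd * c * G) ^ 2 / (2 * κ * ν) := by positivity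
    linarith
  have h3 := mul_le_mul_of_nonneg_right hst hG2.le
  have h4 := mul_le_mul_of_nonneg_left hF (show 0 ≤ 2 * κ by positivity)
  have e5 : 2 / p * ω = 2 * (ω / p) := by ring
  rw [e5]
  linarith

set_option maxHeartbeats 1000000 in
theorem step2_contra {d : ℕ} {s p ω r c : ℝ} {Q : ℝ → Euc d → Fin d → Fin d → ℝ} {b : ℝ → Euc d → Fin d → ℝ}
    {u Z : ℝ → Euc d → ℝ} (hC : Coef s Q b) (hZ : C12 s Z)
    (hZ0 : ∀ t, s < t → ∀ x, 0 < Z t x)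
    {t : ℝ} (ht : s < t) (x : Euc d) (hν : 0 < minEig d (Q t x))
    (hop : 0 < deriv (fun τ => Z τ x) t - A0 Q b t (Z t) x) (hp : 1 < p)
    (hc : ∀ i j, ‖fderiv ℝ (fun y => Q t y i j) x‖ ≤ c)
    (hJac : ∀ (ξ : Euc d),
      (∑ i, ∑ j, fderiv ℝ (fun y => b t y i) x (EuclideanSpace.single j 1) * ξ i * ξ j) ≤
        r * ‖ξ‖ ^ 2)
    (hst : r + (d:ℝ) ^ 2 * c ^ 2 / (4 * min (p - 1) 1 * minEig d (Q t x)) ≤ ω / p)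
    (hpos : 0 < (Real.exp (-(2 / p * ω) * (t - s)) * Z t x ^ (-(2 / p))) *
      (∑ k, pd (u t) k x * pd (u t) k x) + -1)
    (hgrad : ∀ i, pd (fun x => Real.exp (-(2 / p * ω) * (t - s)) * Z t x ^ (-(2 / p))) i x
        * (∑ k, pd (u t) k x * pd (u t) k x)
        + Real.exp (-(2 / p * ω) * (t - s)) * Z t x ^ (-(2 / p)) *
          (∑ k, 2 * pd (u t) k x * hess d (u t) x k i) + pd (fun _ : Euc d => (-1:ℝ)) i x = 0)
    (hE : 0 ≤ Ebern (deriv (fun τ => Real.exp (-(2 / p * ω) * (τ - s)) * Z τ x ^ (-(2 / p))) t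
        - A0 Q b t (fun x => Real.exp (-(2 / p * ω) * (t - s)) * Z t x ^ (-(2 / p))) x,
        Real.exp (-(2 / p * ω) * (t - s)) * Z t x ^ (-(2 / p)),
        (fun i => pd (fun x => Real.exp (-(2 / p * ω) * (t - s)) * Z t x ^ (-(2 / p))) i x),
        Q t x, (fun k => pd (u t) k x), srcS Q b u t x, hess d (u t) x,
        deriv (fun _ : ℝ => (-1:ℝ)) t - A0 Q b t (fun _ => (-1:ℝ)) x)) : False := by
  have hq : 0 < 2 / p := by positivity
  set e := Real.exp (-(2 / p * ω) * (t - s)) * Z t x ^ (-(2 / p)) with he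
  have he0 : 0 < e := mul_pos (Real.exp_pos _) (Real.rpow_pos_of_pos (hZ0 t ht x) _)
  set y : Fin d → ℝ := fun i => pd (fun x => Real.exp (-(2 / p * ω) * (t - s)) * Z t x ^ (-(2 / p))) i x with hy
  have hη := eta_op (ω := ω) hC hZ hZ0 ht x hop hq he hy
  set P := deriv (fun τ => Real.exp (-(2 / p * ω) * (τ - s)) * Z τ x ^ (-(2 / p))) t
      - A0 Q b t (fun x => Real.exp (-(2 / p * ω) * (t - s)) * Z t x ^ (-(2 / p))) x with hP
  set ν := minEig d (Q t x) with hνd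
  set g : Fin d → ℝ := fun k => pd (u t) k x with hg
  set H := hess d (u t) x with hH
  set G := ‖fderiv ℝ (u t) x‖ with hGd
  have hG0 : 0 ≤ G := norm_nonneg _
  have hG2 : ∑ k, g k * g k = G ^ 2 := (norm_clm_sq _).symm
  have hG2' : ∑ k, pd (u t) k x * pd (u t) k x = G ^ 2 := (norm_clm_sq _).symm
  rw [hG2'] at hpos
  have hGp : 0 < G := by
    rcases hG0.lt_or_eq with h | h
    · exact h
    · exfalso
      rw [← h] at hpos
      norm_num at hpos
  have hGsq : 0 < G ^ 2 := by positivity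
  have hQs := hC.qs t ht x
  have hQp := hC.qp t ht x
  set m : Fin d → ℝ := fun i => ∑ k, g k * H k i with hm
  have hym : y = fun i => (-(2 * e / G ^ 2)) * m i := by
    funext i
    have h := hgrad i
    rw [hG2', pd_const] at h
    have e1 : ∑ k, 2 * pd (u t) k x * H k i = 2 * m i := by
      rw [hm, Finset.mul_sum]
      exact Finset.sum_congr rfl fun k _ => by simp only [hg]; ring
    rw [e1] at h
    have h' : y i * G ^ 2 = -(2 * e) * m i := by
      have : y i * G ^ 2 + e * (2 * m i) + 0 = 0 := h
      linarith
    field_simp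
    linarith
  set M := qf (Q t x) m m with hM
  have q1 : qf (Q t x) y y = 4 * e ^ 2 / (G ^ 2) ^ 2 * M := by
    rw [hym, qf_smul_left, qf_smul_right]; field_simp; ring
  have q2 : ∑ k, g k * qf (Q t x) y (H k) = -(2 * e / G ^ 2) * M := by
    have l1 : ∀ k, g k * qf (Q t x) y (H k) = qf (Q t x) y (fun i => g k * H k i) := fun k =>
      (qf_smul_right (g k) y (H k)).symm
    simp only [l1]
    rw [← qf_sum_right y (fun k i => g k * H k i), hym, qf_smul_left]
  have a3 := alg_src hc hJac g hg hG0 hG2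
  have a4 := alg_i (A := Q t x) (H := H) hν
  have a5 := alg_iv (H := H) hQs hQp g
  set h := √(fro H) with hh
  have hh2 : fro H = h ^ 2 := (Real.sq_sqrt (fro_nonneg H)).symm
  rw [hh2] at a4
  rw [hG2] at a5
  have hM0 : 0 ≤ M := hQp _
  have fin := step2_alg (p := p) hp rfl hν hGp a4 a5 hM0 a3 hst
  have e6 : ∑ k, (2 * g k * srcS Q b u t x k - 2 * qf (Q t x) (H k) (H k)) =
      2 * ∑ k, g k * srcS Q b u t x k - 2 * ∑ k, qf (Q t x) (H k) (H k) := by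
    rw [Finset.sum_sub_distrib, Finset.mul_sum, Finset.mul_sum]
    congr 1
    exact Finset.sum_congr rfl fun k _ => by ring
  have hE' : 0 ≤ P * G ^ 2 + e * ∑ k, (2 * g k * srcS Q b u t x k - 2 * qf (Q t x) (H k) (H k))
      - 4 * ∑ k, g k * qf (Q t x) y (H k) + 0 := by
    have := hE
    unfold Ebern at this
    dsimp only at this
    rw [hG2', A0_const, deriv_const, sub_zero] at this
    exact this
  rw [e6, q2] at hE'
  rw [q1] at hη
  have h7 := mul_lt_mul_of_pos_right hη hGsq
  have h8 := mul_le_mul_of_nonneg_left fin he0.le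
  set S := ∑ k, g k * srcS Q b u t x k
  set F := ∑ k, qf (Q t x) (H k) (H k)
  have e9 : (-(2 / p * ω) * e - (2 / p + 1) / (2 / p) / e * (4 * e ^ 2 / (G ^ 2) ^ 2 * M)) * G ^ 2 =
      e * (-(2 / p * ω) * G ^ 2 - 4 * (1 + p / 2) * (M / G ^ 2)) := by
    have hp0 : p ≠ 0 := by linarith
    field_simp
  rw [e9] at h7
  have e10 : 2 * e / G ^ 2 * M = 2 * e * (M / G ^ 2) := by ring
  have e11 : -(2 * e / G ^ 2) * M = - (2 * e * (M / G ^ 2)) := by ring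
  rw [e11] at hE'
  linarith

theorem exists_eps {a p z : ℝ} (hz : 0 < z) (hp : 0 < p) :
    ∃ ε > 0, (a + 2 * ε) ^ p < a ^ p + z := by
  have hc : ContinuousAt (fun ε : ℝ => (a + 2 * ε) ^ p) 0 :=
    ContinuousAt.rpow_const (by fun_prop) (Or.inr hp.le)
  have h := hc.eventually (gt_mem_nhds (show (a + 2 * 0) ^ p < a ^ p + z by simpa using hz))
  obtain ⟨δ, hδ, h2⟩ := Metric.eventually_nhds_iff.1 h
  refine ⟨δ / 2, by positivity, h2 ?_⟩
  rw [Real.dist_eq, sub_zero, abs_of_pos (by positivity)]; linarith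

set_option maxHeartbeats 1000000 in
theorem step2 {d : ℕ} {s p ω lam N t1 : ℝ} {Q : ℝ → Euc d → Fin d → Fin d → ℝ} {b : ℝ → Euc d → Fin d → ℝ}
    {ν₀ : ℝ} (hA : Amb s Q b ν₀) {u v : ℝ → Euc d → ℝ} {f φ : Euc d → ℝ}
    (hu : IsClassicalSolution d Q b (fun _ _ => 0) s f u) (hub : BoundedOnStrips d s u)
    (hf : ContDiff ℝ 1 f)
    (hv : IsClassicalSolution d Q b (fun _ _ => 0) s (fun x => ‖fderiv ℝ f x‖ ^ p) v)
    (hv0 : ∀ t, s < t → ∀ x, 0 ≤ v t x)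
    (hφ : ContDiff ℝ 2 φ) (hφ0 : ∀ x, 0 < φ x)
    (hφi : ∀ M : ℝ, ∃ R : ℝ, ∀ x : Euc d, R ≤ ‖x‖ → M ≤ φ x) (hlam : 0 < lam)
    (hL : ∀ t, s < t → t ≤ t1 → ∀ x, A0 Q b t φ x < lam * φ x)
    (hN : ∀ t, s < t → t ≤ t1 → ∀ x, ‖fderiv ℝ (u t) x‖ ^ 2 ≤ N)
    (hν : ∀ t, s < t → ∀ x, 0 < minEig d (Q t x)) (hp : 1 < p)
    {r c : ℝ → Euc d → ℝ}
    (hc : ∀ t, s < t → ∀ x i j, ‖fderiv ℝ (fun y => Q t y i j) x‖ ≤ c t x)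
    (hJac : ∀ t, s < t → ∀ x (ξ : Euc d),
      (∑ i, ∑ j, fderiv ℝ (fun y => b t y i) x (EuclideanSpace.single j 1) * ξ i * ξ j) ≤
        r t x * ‖ξ‖ ^ 2)
    (hst : ∀ t, s < t → ∀ x, r t x + (d:ℝ) ^ 2 * c t x ^ 2 / (4 * min (p - 1) 1 * minEig d (Q t x)) ≤ ω / p)
    (ht1 : s < t1) (x1 : Euc d) :
    ‖fderiv ℝ (u t1) x1‖ ^ p ≤ Real.exp (ω * (t1 - s)) * v t1 x1 := by
  have hp0 : 0 < p := by linarith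
  have hgs : ∀ t x, ∑ k, pd (u t) k x * pd (u t) k x = ‖fderiv ℝ (u t) x‖ ^ 2 := fun t x =>
    (norm_clm_sq _).symm
  have hN0 : 0 ≤ N := (sq_nonneg _).trans (hN t1 ht1 le_rfl x1)
  have main : ∀ ε : ℝ, 0 < ε →
      ‖fderiv ℝ (u t1) x1‖ ^ p ≤ Real.exp (ω * (t1 - s)) * zf s lam ε φ v t1 x1 := by
    intro ε hε
    set Z := zf s lam ε φ v with hZd
    have hZge : ∀ t, s < t → ∀ x, v t x + ε * φ x ≤ Z t x := fun t ht x => zf_ge hφ0 hε hlam ht x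
    have hZ0 : ∀ t, s < t → ∀ x, 0 < Z t x := fun t ht x => by
      have := hZge t ht x
      have := hv0 t ht x
      have := mul_pos hε (hφ0 x)
      linarith
    have hZ : C12 s Z := zf_C12 (C12.ofSol hv) hφ
    set M := N ^ (p / 2) * Real.exp (|ω| * (t1 - s)) / ε with hM
    obtain ⟨R0, hR0⟩ := hφi M
    set R := max R0 ‖x1‖ with hR
    obtain ⟨δ, hδ, hδ'⟩ := unif_init (R := R) (s := s)
      (P := fun t x => ‖fderiv ℝ (u t) x‖ ^ p ≤ Real.exp (ω * (t - s)) * (v t x + ε * φ x)) (by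
        intro x0
        obtain ⟨ε', hε', h1⟩ := exists_eps (a := ‖fderiv ℝ f x0‖) (mul_pos hε (hφ0 x0)) hp0
        obtain ⟨δ1, hδ1, h2⟩ := init_grad hA hu hub hf x0 hε'
        obtain ⟨δ2, hδ2, h3⟩ := near_init (s := s) (m := (‖fderiv ℝ f x0‖ + 2 * ε') ^ p)
          (F := fun q => Real.exp (ω * (q.1 - s)) * (v q.1 q.2 + ε * φ q.2))
          (ContinuousOn.mul (by fun_prop) (hv.cont.add
            ((continuous_const.mul (hφ.continuous.comp continuous_snd)).continuousOn))) x0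
          (by simpa [hv.init] using h1)
        refine ⟨min δ1 δ2, lt_min hδ1 hδ2, fun t ht ht' x hx => ?_⟩
        have m1 := min_le_left δ1 δ2
        have m2 := min_le_right δ1 δ2
        refine le_trans ?_ (h3 t ht (by linarith) x (by linarith)).le
        exact Real.rpow_le_rpow (norm_nonneg _) (h2 t ht (by linarith) x (by linarith)) hp0.le)
    set t0 := min (s + δ) t1 with ht0
    have hst0 : s < t0 := lt_min (by linarith) ht1
    have hη := (C12.ofTime (d := d) s (g := fun t => Real.exp (-(2 / p * ω) * (t - s))) (by fun_prop)).mul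
      (hZ.rpow hZ0 (-(2 / p)))
    have key := bernstein_max hA.toCoef hu hη (C12.const s (-1))
      (T := t1) (R := R) hst0 ?_ ?_ ?_
      t1 ⟨min_le_right _ _, le_rfl⟩ x1 (le_max_right _ _)
    · rw [hgs] at key
      exact (eta_iff hp0 (norm_nonneg _) (hZ0 t1 ht1 x1)).1 key
    · intro x hx
      rw [hgs]
      refine (eta_iff hp0 (norm_nonneg _) (hZ0 t0 hst0 x)).2 ?_
      refine (hδ' t0 hst0 (min_le_left _ _) x hx).trans ?_
      exact mul_le_mul_of_nonneg_left (hZge t0 hst0 x) (Real.exp_pos _).le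
    · intro t ht x hx
      have hst' : s < t := hst0.trans_le ht.1
      rw [hgs]
      refine (eta_iff hp0 (norm_nonneg _) (hZ0 t hst' x)).2 ?_
      have h1 := hR0 x (by rw [hx]; exact le_max_left _ _)
      rw [hM, div_le_iff₀ hε] at h1
      have h2 : ‖fderiv ℝ (u t) x‖ ^ p ≤ N ^ (p / 2) := by
        have : ‖fderiv ℝ (u t) x‖ ^ p = (‖fderiv ℝ (u t) x‖ ^ 2) ^ (p / 2) := by
          rw [← Real.rpow_natCast, ← Real.rpow_mul (norm_nonneg _)]
          congr 1; push_cast; ring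
        rw [this]
        exact Real.rpow_le_rpow (sq_nonneg _) (hN t hst' ht.2 x) (by positivity)
      have h3 : 1 ≤ Real.exp (ω * (t - s)) * Real.exp (|ω| * (t1 - s)) := by
        rw [← Real.exp_add]
        refine Real.one_le_exp ?_
        have a1 := neg_abs_le ω
        have a2 := abs_nonneg ω
        nlinarith [mul_le_mul_of_nonneg_left ht.2 a2, mul_le_mul_of_nonneg_right a1 (sub_nonneg.2 hst'.le)]
      have hN1 : 0 ≤ N ^ (p / 2) := Real.rpow_nonneg hN0 _
      calc _ ≤ N ^ (p / 2) * 1 := by linarith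
        _ ≤ N ^ (p / 2) * (Real.exp (ω * (t - s)) * Real.exp (|ω| * (t1 - s))) :=
          mul_le_mul_of_nonneg_left h3 hN1
        _ = Real.exp (ω * (t - s)) * (N ^ (p / 2) * Real.exp (|ω| * (t1 - s))) := by ring
        _ ≤ Real.exp (ω * (t - s)) * Z t x := by
          refine mul_le_mul_of_nonneg_left ?_ (Real.exp_pos _).le
          have := hZge t hst' x
          have := hv0 t hst' x
          linarith
    · intro t ht x hx hpos hgrad hE
      have hst' : s < t := hst0.trans ht.1
      exact step2_contra (r := r t x) (c := c t x) hA.toCoef hZ hZ0 hst' x (hν t hst' x)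
        (zf_op hv hA.toCoef hφ hε hst' (hL t hst' ht.2 x)) hp (hc t hst' x) (hJac t hst' x)
        (hst t hst' x) hpos hgrad hE
  set e := Real.exp (lam * (t1 - s)) * φ x1 with he
  have he0 : 0 < e := mul_pos (Real.exp_pos _) (hφ0 x1)
  set w := Real.exp (ω * (t1 - s)) with hw
  have hw0 : 0 < w := Real.exp_pos _
  refine le_of_forall_pos_le_add fun κ hκ => ?_
  have := main (κ / (w * e)) (by positivity)
  unfold zf at this
  rw [mul_assoc _ _ (φ x1), ← he] at this
  have e3 : w * (v t1 x1 + κ / (w * e) * e) = w * v t1 x1 + κ := by field_simp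
  rw [e3] at this
  exact this

/-- with `c ≡ 0` and `r₀ + (C²d³ν₀^{γ−1}/(4(p₀−1)))ν^γ` bounded above, for every
`p ≥ p₀` there is `ω_p` realizing the gradient estimate; for `p ∈ [p₀,2]` one may take
`ω_p = p·sup_{I×ℝ^d}(r₀ + (C²d³ν₀^{γ−1}/(4(p−1)))ν^γ)`. -/
theorem gradient_estimate_without_zero_order_term
    (d : ℕ) (hd : 1 ≤ d) (I : Set ℝ)
    (hI : ∀ ⦃t t' : ℝ⦄, t ∈ I → t ≤ t' → t' ∈ I)
    (Q : ℝ → Euc d → Fin d → Fin d → ℝ) (b : ℝ → Euc d → Fin d → ℝ)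
    (α : ℝ) (hα : α ∈ Ioo (0:ℝ) 1)
    (hQhold : ∀ i j, LocHolderParab d α I (fun t x => Q t x i j))
    (hbhold : ∀ j, LocHolderParab d α I (fun t x => b t x j))
    (hsymm : ∀ t ∈ I, ∀ x : Euc d, ∀ i j, Q t x i j = Q t x j i)
    (ν₀ : ℝ) (hν₀ : 0 < ν₀) (hell : ∀ t ∈ I, ∀ x : Euc d, ν₀ ≤ minEig d (Q t x))
    -- Lyapunov condition (with c ≡ 0)
    (hLyap : ∃ φ : Euc d → ℝ, ContDiff ℝ 2 φ ∧ (∀ x, 0 < φ x) ∧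
      (∀ M : ℝ, ∃ R : ℝ, ∀ x : Euc d, R ≤ ‖x‖ → M ≤ φ x) ∧
      (∀ a b' : ℝ, Icc a b' ⊆ I → ∃ lam > 0, ∀ t ∈ Icc a b', ∀ x : Euc d,
        Aop d Q b (fun _ _ => 0) t φ x ≤ lam * φ x))
    -- first-order Bernstein hypotheses (no zero-order term)
    (hQdiff : ∀ t ∈ I, ∀ (x : Euc d) (i j : Fin d),
      DifferentiableAt ℝ (fun y => Q t y i j) x)
    (hbdiff : ∀ t ∈ I, ∀ (x : Euc d) (j : Fin d),
      DifferentiableAt ℝ (fun y => b t y j) x)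
    (hgradHold : ∃ α' ∈ Ioo (0:ℝ) 1,
      (∀ i j k, LocHolderParab d α' I
        (fun t x => fderiv ℝ (fun y => Q t y i j) x (EuclideanSpace.single k 1))) ∧
      (∀ j k, LocHolderParab d α' I
        (fun t x => fderiv ℝ (fun y => b t y j) x (EuclideanSpace.single k 1))))
    (C₁ C₂ : ℝ → ℝ) (hC₁ : LocBddOn I C₁) (hC₂ : LocBddOn I C₂)
    (hgrowthQ : ∀ t ∈ I, ∀ x : Euc d,
      Real.sqrt (∑ i, (∑ j, Q t x i j * x j) ^ 2) + (∑ i, Q t x i i) ≤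
        C₁ t * (1 + ‖x‖ ^ 2) * minEig d (Q t x))
    (hgrowthb : ∀ t ∈ I, ∀ x : Euc d,
      (∑ i, b t x i * x i) ≤ C₂ t * (1 + ‖x‖ ^ 2) * minEig d (Q t x))
    (r₀ : ℝ → Euc d → ℝ)
    (hJac : ∀ t ∈ I, ∀ (x : Euc d) (ξ : Euc d),
      (∑ i, ∑ j, fderiv ℝ (fun y => b t y i) x (EuclideanSpace.single j 1) * ξ i * ξ j) ≤
        r₀ t x * ‖ξ‖ ^ 2)
    (C γ : ℝ) (hC : 0 < C) (hγ : γ ∈ Ioo (0:ℝ) 1)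
    (hQgrad : ∀ t ∈ I, ∀ (x : Euc d) (i j : Fin d),
      ‖fderiv ℝ (fun y => Q t y i j) x‖ ≤ C * minEig d (Q t x) ^ γ)
    -- the extra boundedness assumption at the exponent p₀
    (p₀ : ℝ) (hp₀ : 1 < p₀)
    (hbdd : ∃ B : ℝ, ∀ t ∈ I, ∀ x : Euc d,
      r₀ t x + (C ^ 2 * (d : ℝ) ^ 3 * ν₀ ^ (γ - 1) / (4 * (p₀ - 1)))
          * minEig d (Q t x) ^ γ ≤ B) :
    ∀ p : ℝ, p₀ ≤ p →
      (∃ ω : ℝ, GradEstWith d I Q b p ω) ∧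
      (p ≤ 2 → GradEstWith d I Q b p (p * SGradSup d I Q r₀ ν₀ C γ p)) := by
  have hcpos : ∀ t ∈ I, ∀ x : Euc d, 0 < minEig d (Q t x) := fun t ht x => hν₀.trans_le (hell t ht x)
  have hpow : ∀ t ∈ I, ∀ x : Euc d, minEig d (Q t x) ^ (γ - 1) ≤ ν₀ ^ (γ - 1) := fun t ht x =>
    Real.rpow_le_rpow_of_nonpos hν₀ (hell t ht x) (by linarith [hγ.2])
  have hpow2 : ∀ t ∈ I, ∀ x : Euc d,
      minEig d (Q t x) ^ γ = minEig d (Q t x) ^ (γ - 1) * minEig d (Q t x) := fun t ht x => by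
    rw [Real.rpow_sub_one (hcpos t ht x).ne', div_mul_cancel₀ _ (hcpos t ht x).ne']
  have hd1 : (1:ℝ) ≤ d := by exact_mod_cast hd
  have hν₀p : 0 < ν₀ ^ (γ - 1) := Real.rpow_pos_of_pos hν₀ _
  obtain ⟨B, hB⟩ := hbdd
  set κ := C ^ 2 * (d : ℝ) ^ 3 * ν₀ ^ (γ - 1) / (4 * (p₀ - 1)) with hκ
  have hp01 : 0 < p₀ - 1 := by linarith
  have hκ0 : 0 < κ := by positivity
  have gen : ∀ p, 1 < p → ∀ ω, (∀ t ∈ I, ∀ x : Euc d, r₀ t x + (d:ℝ) ^ 2 * (C * minEig d (Q t x) ^ γ) ^ 2 /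
      (4 * min (p - 1) 1 * minEig d (Q t x)) ≤ ω / p) → GradEstWith d I Q b p ω := by
    intro p hp ω hst s hs f hf _ ⟨Mf, hMf⟩ u v hu hub hv hvb t1 ht1 x1
    have hA := mkAmb hI hα hQhold hbhold hsymm hν₀ hell hQdiff hbdiff hgradHold hs
    have hsI : ∀ t, s < t → t ∈ I := fun t ht => hI hs ht.le
    have hIcc : ∀ t, Icc s t ⊆ I := fun t τ hτ => hI hs hτ.1
    obtain ⟨M1, hM1⟩ := hC₁ s t1 (hIcc t1)
    obtain ⟨M2, hM2⟩ := hC₂ s t1 (hIcc t1)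
    have hM1' := (abs_nonneg _).trans (hM1 s ⟨le_rfl, ht1.le⟩)
    have hM2' := (abs_nonneg _).trans (hM2 s ⟨le_rfl, ht1.le⟩)
    obtain ⟨φ, hφ, hφ0, hφi, hφL⟩ := hLyap
    have hLy : ∀ T, ∃ lam > 0, ∀ t, s < t → t ≤ T → ∀ x, A0 Q b t φ x < lam * φ x := by
      intro T
      obtain ⟨lam, hlam, h⟩ := hφL s T (hIcc T)
      refine ⟨lam + 1, by linarith, fun t ht hT x => ?_⟩
      have := h t ⟨ht.le, hT⟩ x
      have h2 := hφ0 x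
      have e : A0 Q b t φ x = Aop d Q b (fun _ _ => 0) t φ x := rfl
      rw [e]
      linarith
    have hv0 : ∀ t, s < t → ∀ x, 0 ≤ v t x := by
      intro t ht x
      obtain ⟨lam, hlam, hL⟩ := hLy t
      exact v_nonneg hv hvb (fun x => Real.rpow_nonneg (norm_nonneg _) _) hA.toCoef ht hφ hφ0 hφi hlam hL
        t ht le_rfl x
    obtain ⟨lam, hlam, hL⟩ := hLy t1
    obtain ⟨N, hN⟩ := step1 (K1 := M1) (K2 := M2) (K3 := C * ν₀ ^ (γ - 1)) (K4 := |B| / ν₀)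
      hA hu hub hf hMf ht1 hM1' hM2' (by positivity)
      (fun t ht x => hell t (hsI t ht) x)
      (fun t ht hT x => (hgrowthQ t (hsI t ht) x).trans (by
        have h0 := (hcpos t (hsI t ht) x).le
        have h1 := (le_abs_self _).trans (hM1 t ⟨ht.le, hT⟩)
        gcongr))
      (fun t ht hT x => (hgrowthb t (hsI t ht) x).trans (by
        have h0 := (hcpos t (hsI t ht) x).le
        have h1 := (le_abs_self _).trans (hM2 t ⟨ht.le, hT⟩)
        gcongr))
      (fun t ht hT x i j => (hQgrad t (hsI t ht) x i j).trans (by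
        rw [hpow2 t (hsI t ht) x, mul_assoc]
        have h0 := (hcpos t (hsI t ht) x).le
        have h1 := hpow t (hsI t ht) x
        gcongr))
      (fun t ht hT x ξ => (hJac t (hsI t ht) x ξ).trans (by
        have h0 := hcpos t (hsI t ht) x
        have h1 := hB t (hsI t ht) x
        have h2 : 0 ≤ κ * minEig d (Q t x) ^ γ := mul_nonneg hκ0.le (Real.rpow_nonneg h0.le _)
        have h3 : |B| ≤ |B| / ν₀ * minEig d (Q t x) := by
          rw [div_mul_eq_mul_div, le_div_iff₀ hν₀]
          exact mul_le_mul_of_nonneg_left (hell t (hsI t ht) x) (abs_nonneg _)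
        have h4 := le_abs_self B
        exact mul_le_mul_of_nonneg_right (by linarith) (sq_nonneg _)))
    exact step2 (r := r₀) (c := fun t x => C * minEig d (Q t x) ^ γ) hA hu hub hf hv hv0 hφ hφ0 hφi hlam hL hN
      (fun t ht x => hcpos t (hsI t ht) x) hp (fun t ht x i j => hQgrad t (hsI t ht) x i j)
      (fun t ht x ξ => hJac t (hsI t ht) x ξ) (fun t ht x => hst t (hsI t ht) x) ht1 x1
  intro p hp
  have hp1 : 1 < p := by linarith
  have hsq : ∀ t ∈ I, ∀ x : Euc d, (C * minEig d (Q t x) ^ γ) ^ 2 =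
      C ^ 2 * minEig d (Q t x) ^ γ * minEig d (Q t x) ^ (γ - 1) * minEig d (Q t x) := fun t ht x => by
    rw [mul_pow, sq (minEig d (Q t x) ^ γ)]
    conv_lhs => rw [hpow2 t ht x]
    conv_rhs => rw [hpow2 t ht x]
    ring
  have small : p ≤ 2 → GradEstWith d I Q b p (p * SGradSup d I Q r₀ ν₀ C γ p) := by
    intro hp2
    refine gen p hp1 _ fun t ht x => ?_
    rw [mul_div_cancel_left₀ _ (by linarith : p ≠ 0), min_eq_left (by linarith)]
    have hbd : BddAbove {y : ℝ | ∃ t ∈ I, ∃ x : Euc d,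
        y = r₀ t x + (C ^ 2 * (d : ℝ) ^ 3 * ν₀ ^ (γ - 1) / (4 * (p - 1))) * minEig d (Q t x) ^ γ} := by
      refine ⟨B, ?_⟩
      rintro y ⟨t, ht, x, rfl⟩
      refine le_trans ?_ (hB t ht x)
      have h0 := Real.rpow_nonneg (hcpos t ht x).le γ
      rw [hκ]
      gcongr
    refine le_trans ?_ (le_csSup hbd ⟨t, ht, x, rfl⟩)
    have h0 := hcpos t ht x
    have h1 := hpow t ht x
    have h2 := Real.rpow_nonneg h0.le γ
    have hpp : 0 < p - 1 := by linarith
    have e : (d:ℝ) ^ 2 * (C * minEig d (Q t x) ^ γ) ^ 2 / (4 * (p - 1) * minEig d (Q t x)) =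
        C ^ 2 * (d:ℝ) ^ 2 * minEig d (Q t x) ^ (γ - 1) / (4 * (p - 1)) * minEig d (Q t x) ^ γ := by
      rw [hsq t ht x]
      field_simp
    rw [e]
    have h3 : (d:ℝ) ^ 2 ≤ (d:ℝ) ^ 3 := pow_le_pow_right₀ hd1 (by norm_num)
    have h4 := Real.rpow_nonneg h0.le (γ - 1)
    gcongr
  refine ⟨?_, small⟩
  rcases le_total p 2 with hp2 | hp2
  · exact ⟨_, small hp2⟩
  · set D := (d:ℝ) ^ 2 * C ^ 2 / 4 with hD
    have hD0 : 0 < D := by positivity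
    have hlim : Tendsto (fun y : ℝ => D * y ^ (-(1 - γ))) atTop (𝓝 (D * 0)) :=
      (tendsto_rpow_neg_atTop (by linarith [hγ.2])).const_mul D
    rw [mul_zero] at hlim
    obtain ⟨ν1, hν1⟩ := eventually_atTop.1 (hlim.eventually (gt_mem_nhds hκ0))
    set ν2 := max ν1 1 with hν2
    have hν2p : 0 < ν2 := lt_of_lt_of_le one_pos (le_max_right _ _)
    set W := D * ν2 ^ γ * ν₀ ^ (γ - 1) with hW
    have hW0 : 0 ≤ W := by positivity
    refine ⟨p * (B + W), gen p hp1 _ fun t ht x => ?_⟩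
    rw [mul_div_cancel_left₀ _ (by linarith : p ≠ 0), min_eq_right (by linarith), hsq t ht x]
    have h0 := hcpos t ht x
    have hb := hB t ht x
    have hp' := hpow t ht x
    set ν := minEig d (Q t x) with hνd
    have e : (d:ℝ) ^ 2 * (C ^ 2 * ν ^ γ * ν ^ (γ - 1) * ν) / (4 * 1 * ν) = D * ν ^ γ * ν ^ (γ - 1) := by
      rw [hD]; field_simp
    rw [e]
    have hg0 : 0 ≤ ν ^ γ := Real.rpow_nonneg h0.le _
    have hg1 : 0 ≤ ν ^ (γ - 1) := Real.rpow_nonneg h0.le _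
    have : D * ν ^ γ * ν ^ (γ - 1) ≤ W + κ * ν ^ γ := by
      rcases le_total ν ν2 with h | h
      · have : D * ν ^ γ * ν ^ (γ - 1) ≤ D * ν2 ^ γ * ν₀ ^ (γ - 1) := by
          have hγ0 := hγ.1.le
          gcongr
        have := mul_nonneg hκ0.le hg0
        linarith
      · have h1 := (hν1 ν ((le_max_left _ _).trans h)).le
        have e2 : -(1 - γ) = γ - 1 := by ring
        rw [e2] at h1
        have := mul_le_mul_of_nonneg_right h1 hg0
        linarith
    linarith
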